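/- Let A and B be disjoint alphabets, let k ≥ 1 and n ≥ 2 be integers, let A_1, …, A_k be nonempty reduced words using only letters of A, let B_1, …, B_k be nonempty reduced words using only letters of B, and set W = A_1 B_1 A_2 B_2 ⋯ A_k B_k. Let G be the one-relator group with torsion ⟨A ∪ B ∣ W^n⟩. Suppose that A_1, …, A_k freely generate a subgroup of the free group on A, and suppose that for each i the perimeter inequality holds: the sum, over the distinct letters a ∈ A occurring in A_i, of the total number of occurrences of a^{+1} or a^{−1} in W, is at most the sum of the lengths |A_1| + |A_2| + ⋯ + |A_k|. Then G is coherent. -/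

import Mathlib

/-- A word over the alphabet `α` (a list of letters with exponents `±1`) is *reduced*
if it contains no adjacent pair of the form `(s, e) (s, ¬e)`. -/
def WordReduced {α : Type*} (w : List (α × Bool)) : Prop :=
  List.Chain' (fun p q => ¬(p.1 = q.1 ∧ p.2 = !q.2)) w

/-- A group is *finitely presented* if it is isomorphic to the quotient of a free group
on a finite set of generators by the normal closure of a finite set of relators. -/
def FinitelyPresentedGroup (G : Type*) [Group G] : Prop :=
  ∃ (α : Type) (_ : Fintype α) (rels : Finset (FreeGroup α)),
    Nonempty (PresentedGroup (rels : Set (FreeGroup α)) ≃* G)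

/-- A group is *coherent* if every finitely generated subgroup is finitely presented. -/
def CoherentGroup (G : Type*) [Group G] : Prop :=
  ∀ H : Subgroup G, H.FG → FinitelyPresentedGroup H

/-- Re-express a word over the alphabet `α` as a word over a larger alphabet `β`
via a map `f : α → β` of alphabets. -/
def embedWord {α β : Type*} (f : α → β) (w : List (α × Bool)) : List (β × Bool) :=
  w.map fun p => (f p.1, p.2)

/-- The word `W = A₁ B₁ A₂ B₂ ⋯ A_k B_k` over the disjoint-union alphabet `α ⊕ β`,
where the `Aᵢ` are words over `α` and the `Bᵢ` are words over `β`. -/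
def abWord {α β : Type*} (k : ℕ) (Ai : Fin k → List (α × Bool))
    (Bi : Fin k → List (β × Bool)) : List ((α ⊕ β) × Bool) :=
  ((List.finRange k).map fun i =>
    embedWord Sum.inl (Ai i) ++ embedWord Sum.inr (Bi i)).flatten

open Monoid in
theorem fp_of_retract {G H : Type*} [Group G] [Group H] [hG : Group.IsFinitelyPresented G]
    (r : G →* H) (s : H →* G) (hrs : ∀ h, r (s h) = h) : Group.IsFinitelyPresented H := by
  obtain ⟨m, φ, hφ, hker⟩ := hG.out
  have hsurj : Function.Surjective r := fun h => ⟨s h, hrs h⟩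
  refine Group.IsFinitelyPresented.of_surjective r hsurj
    ⟨Set.range (fun i : Fin m => (φ (FreeGroup.of i))⁻¹ * s (r (φ (FreeGroup.of i)))),
      Set.finite_range _, ?_⟩
  set N := Subgroup.normalClosure
    (Set.range (fun i : Fin m => (φ (FreeGroup.of i))⁻¹ * s (r (φ (FreeGroup.of i))))) with hN
  apply le_antisymm
  · apply Subgroup.normalClosure_le_normal
    rintro _ ⟨i, rfl⟩
    simp [MonoidHom.mem_ker, hrs]
  · have key : (QuotientGroup.mk' N).comp φ = ((QuotientGroup.mk' N).comp (s.comp r)).comp φ := by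
      apply FreeGroup.ext_hom
      intro i
      simp only [MonoidHom.comp_apply, QuotientGroup.mk'_apply]
      rw [QuotientGroup.eq]
      exact Subgroup.subset_normalClosure ⟨i, rfl⟩
    intro g hg
    obtain ⟨x, rfl⟩ := hφ g
    have := DFunLike.congr_fun key x
    simp only [MonoidHom.comp_apply] at this
    rw [MonoidHom.mem_ker.mp hg, map_one, map_one] at this
    simpa using this

theorem finite_of_freeGroup_fg (X : Type*) [Group.FG (FreeGroup X)] : Finite X := by
  let f : FreeGroup X →* Multiplicative (X →₀ ℤ) :=
    FreeGroup.lift (fun x => Multiplicative.ofAdd (Finsupp.single x 1))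
  have hf : Function.Surjective f := by
    intro y
    suffices h : ∀ z : X →₀ ℤ, Multiplicative.ofAdd z ∈ f.range from h y.toAdd
    intro z
    induction z using Finsupp.induction_linear with
    | zero => exact f.range.one_mem
    | add a b ha hb => exact f.range.mul_mem ha hb
    | single x n =>
      refine ⟨(FreeGroup.of x) ^ n, ?_⟩
      rw [map_zpow, FreeGroup.lift_apply_of, ← ofAdd_zsmul]
      simp
  have h1 : Group.FG (Multiplicative (X →₀ ℤ)) := Group.fg_of_surjective hf
  have h2 : AddGroup.FG (X →₀ ℤ) := AddGroup.fg_iff_mul_fg.2 h1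
  have h3 : Module.Finite ℤ (X →₀ ℤ) := Module.Finite.iff_addGroup_fg.2 h2
  exact Module.Finite.finite_basis (Finsupp.basisSingleOne (R := ℤ) (ι := X))

theorem fp_of_isFreeGroup_fg {G : Type*} [Group G] [IsFreeGroup G] [Group.FG G] :
    Group.IsFinitelyPresented G := by
  have e := IsFreeGroup.toFreeGroup G
  have : Group.FG (FreeGroup (IsFreeGroup.Generators G)) := Group.fg_of_surjective (f := e.toMonoidHom) e.surjective
  have hfin : Finite (IsFreeGroup.Generators G) := finite_of_freeGroup_fg _
  exact Group.IsFinitelyPresented.equiv e.symm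

open Monoid in
theorem fp_of_cyclic_ext {V : Type*} [Group V] (N : Subgroup V) [N.Normal]
    [hNfp : Group.IsFinitelyPresented N] [hNfg : Group.FG N] (t : V) (d : ℕ) (hd : ∀ j : ℤ, t ^ j ∈ N ↔ (d : ℤ) ∣ j)
    (hgen : ∀ v : V, ∃ j : ℤ, v * t ^ j ∈ N) : Group.IsFinitelyPresented V := by
  let f : Coprod N (Multiplicative ℤ) →* V := Coprod.lift N.subtype (zpowersHom V t)
  let iN : N →* Coprod N (Multiplicative ℤ) := Coprod.inl
  let T : Coprod N (Multiplicative ℤ) := Coprod.inr (Multiplicative.ofAdd 1)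
  have hfT : f T = t := by simp [f, T]
  have hfN : ∀ x, f (iN x) = x := by simp [f, iN]
  obtain ⟨S, hS, hSfin⟩ := Group.fg_iff.mp hNfg
  let c1 : N → N := fun s => ⟨t * s * t⁻¹, Subgroup.Normal.conj_mem inferInstance _ s.2 t⟩
  let c2 : N → N := fun s => ⟨t⁻¹ * s * t, by
    simpa using Subgroup.Normal.conj_mem (inferInstance : N.Normal) _ s.2 t⁻¹⟩
  let v : N := ⟨t ^ d, by have := (hd d).2 dvd_rfl; simpa using this⟩
  let R : Set (Coprod N (Multiplicative ℤ)) :=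
    {T ^ d * (iN v)⁻¹} ∪ ((fun s => T * iN s * T⁻¹ * (iN (c1 s))⁻¹) '' S ∪
      (fun s => T⁻¹ * iN s * T * (iN (c2 s))⁻¹) '' S)
  have hRfin : R.Finite := (Set.finite_singleton _).union ((hSfin.image _).union (hSfin.image _))
  have hfsurj : Function.Surjective f := by
    intro x
    obtain ⟨j, hj⟩ := hgen x
    refine ⟨iN ⟨_, hj⟩ * T ^ (-j), ?_⟩
    rw [map_mul, map_zpow, hfT, hfN]; simp
  refine Group.IsFinitelyPresented.of_surjective f hfsurj ⟨R, hRfin, ?_⟩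
  set M := Subgroup.normalClosure R with hM
  let q := QuotientGroup.mk' M
  have hrel : ∀ x y, x * y⁻¹ ∈ R → q x = q y := by
    intro x y h
    have : x * y⁻¹ ∈ M := Subgroup.subset_normalClosure h
    have h2 : q (x * y⁻¹) = 1 := (QuotientGroup.eq_one_iff _).2 this
    rwa [map_mul, map_inv, mul_inv_eq_one] at h2
  apply le_antisymm
  · apply Subgroup.normalClosure_le_normal
    rintro _ (h | ⟨s, -, rfl⟩ | ⟨s, -, rfl⟩)
    · rw [Set.mem_singleton_iff] at h
      subst h
      simp [MonoidHom.mem_ker, hfT, hfN, v]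
    · simp [MonoidHom.mem_ker, hfT, hfN, c1]
    · simp [MonoidHom.mem_ker, hfT, hfN, c2, mul_assoc]
  · let L := (q.comp iN).range
    have e1 : ∀ s ∈ S, q T * q (iN s) * (q T)⁻¹ ∈ L := by
      intro s hs
      refine ⟨c1 s, ?_⟩
      rw [← map_inv, ← map_mul, ← map_mul]
      exact (hrel _ _ (Or.inr (Or.inl ⟨s, hs, rfl⟩))).symm
    have e2 : ∀ s ∈ S, (q T)⁻¹ * q (iN s) * (q T) ∈ L := by
      intro s hs
      refine ⟨c2 s, ?_⟩
      rw [← map_inv, ← map_mul, ← map_mul]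
      exact (hrel _ _ (Or.inr (Or.inr ⟨s, hs, rfl⟩))).symm
    have ext : ∀ u, (∀ s ∈ S, u * q (iN s) * u⁻¹ ∈ L) → ∀ x ∈ L, u * x * u⁻¹ ∈ L := by
      intro u hu
      have : (⊤ : Subgroup N) ≤ L.comap ((MulAut.conj u).toMonoidHom.comp (q.comp iN)) := by
        rw [← hS, Subgroup.closure_le]
        intro s hs
        simpa using hu s hs
      rintro _ ⟨x, rfl⟩
      simpa using this (Subgroup.mem_top x)
    have hL1 := ext (q T) e1
    have hL2 := ext (q T)⁻¹ (by rw [inv_inv]; exact e2)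
    have hL3 : ∀ j : ℤ, ∀ x ∈ L, (q T) ^ j * x * ((q T) ^ j)⁻¹ ∈ L := by
      intro j
      induction j using Int.induction_on with
      | zero => simp
      | succ j ih =>
        intro x hx
        have := hL1 _ (ih x hx)
        rw [zpow_add, zpow_one, ← (Commute.zpow_self (q T) (j:ℤ)).eq.symm]
        simpa [mul_assoc] using this
      | pred j ih =>
        intro x hx
        have := hL2 _ (ih x hx)
        rw [show -(j:ℤ) - 1 = -1 + -j by ring, zpow_add, zpow_neg_one]
        simpa [mul_assoc] using this
    have hform : ∀ x, ∃ a : N, ∃ j : ℤ, q x = q (iN a) * q T ^ j := by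
      intro x
      induction x using Coprod.induction_on with
      | inl a => exact ⟨a, 0, by simp [iN]⟩
      | inr z => 
        refine ⟨1, z.toAdd, ?_⟩
        rw [map_one, map_one, one_mul, ← map_zpow, ← map_zpow, ← ofAdd_zsmul]
        simp
      | mul x y hx hy =>
        obtain ⟨a, i, ha⟩ := hx
        obtain ⟨b, j, hb⟩ := hy
        obtain ⟨b', hb'⟩ := hL3 i _ ⟨b, rfl⟩
        refine ⟨a * b', i + j, ?_⟩
        rw [map_mul, ha, hb, map_mul, map_mul]
        have hb'' : q (iN b') = q T ^ i * q (iN b) * (q T ^ i)⁻¹ := hb'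
        rw [hb'', zpow_add]; group
    intro x hx
    obtain ⟨a, j, ha⟩ := hform x
    let fq : (Coprod N (Multiplicative ℤ) ⧸ M) →* V := QuotientGroup.lift M f (by
      apply Subgroup.normalClosure_le_normal
      rintro _ (h | ⟨s, -, rfl⟩ | ⟨s, -, rfl⟩)
      · rw [Set.mem_singleton_iff] at h
        subst h
        simp [MonoidHom.mem_ker, hfT, hfN, v]
      · simp [MonoidHom.mem_ker, hfT, hfN, c1]
      · simp [MonoidHom.mem_ker, hfT, hfN, c2, mul_assoc])
    have hfq : ∀ y, fq (q y) = f y := fun y => rfl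
    have h1 : (a : V) * t ^ j = 1 := by
      have := congrArg fq ha
      rw [map_mul, map_zpow, hfq, hfq, hfq, hfN, hfT, MonoidHom.mem_ker.mp hx] at this
      exact this.symm
    have h2 : t ^ j ∈ N := by
      rw [← inv_eq_of_mul_eq_one_right h1]
      exact N.inv_mem a.2
    obtain ⟨e, rfl⟩ := (hd j).1 h2
    have h3 : q T ^ ((d : ℤ) * e) = q (iN (v ^ e)) := by
      rw [zpow_mul, map_zpow, map_zpow, zpow_natCast, ← map_pow]
      rw [hrel _ _ (Or.inl rfl)]
    rw [h3, ← map_mul, ← map_mul] at ha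
    have h4 : a * v ^ e = 1 := by
      apply Subtype.ext
      simp only [Subgroup.coe_mul, Subgroup.coe_zpow, Subgroup.coe_one, v]
      rw [← zpow_natCast, ← zpow_mul]; exact h1
    rw [h4, map_one, map_one] at ha
    exact (QuotientGroup.eq_one_iff _).1 ha



/-- The coset of `g` (as an element of `G ⧸ V`, via inversion). -/
def rcos {G : Type*} [Group G] (V : Subgroup G) (g : G) : G ⧸ V := QuotientGroup.mk g⁻¹

theorem rcos_eq {G : Type*} [Group G] (V : Subgroup G) (g h : G) :
    rcos V g = rcos V h ↔ g * h⁻¹ ∈ V := by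
  unfold rcos
  rw [QuotientGroup.eq, inv_inv]

theorem rcos_mul {G : Type*} [Group G] {V : Subgroup G} {g h : G} (hg : g ∈ V) :
    rcos V (g * h) = rcos V h := by
  rw [rcos_eq]; simpa using hg

theorem rcos_mul_right {G : Type*} [Group G] {V : Subgroup G} {g h : G} (k : G)
    (hgh : rcos V g = rcos V h) :
    rcos V (g * k) = rcos V (h * k) := by
  rw [rcos_eq] at *; simpa [mul_assoc] using hgh

section Howson
variable {S : Type*}

/-- Words with all prefixes in `U` representing elements of `V`. -/
def GoodWord (V : Subgroup (FreeGroup S)) (U : Set (FreeGroup S ⧸ V)) (A : Set S)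
    (L : List (S × Bool)) : Prop :=
  FreeGroup.mk L ∈ V ∧ (∀ p ∈ L, p.1 ∈ A) ∧ ∀ L1 L2, L = L1 ++ L2 → rcos V (FreeGroup.mk L1) ∈ U

theorem GoodWord.append {V : Subgroup (FreeGroup S)} {U : Set (FreeGroup S ⧸ V)} {A : Set S}
    {L M : List (S × Bool)} (hL : GoodWord V U A L) (hM : GoodWord V U A M) :
    GoodWord V U A (L ++ M) := by
  refine ⟨?_, ?_, ?_⟩
  · rw [← FreeGroup.mul_mk]; exact V.mul_mem hL.1 hM.1
  · intro p hp
    rcases List.mem_append.1 hp with h | h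
    · exact hL.2.1 p h
    · exact hM.2.1 p h
  · intro L1 L2 h
    rcases List.append_eq_append_iff.1 h with ⟨a, rfl, h2⟩ | ⟨a, h1, h2⟩
    · rw [← FreeGroup.mul_mk, rcos_mul hL.1]
      exact hM.2.2 _ _ h2
    · exact hL.2.2 _ _ h1

theorem GoodWord.invRev {V : Subgroup (FreeGroup S)} {U : Set (FreeGroup S ⧸ V)} {A : Set S}
    {L : List (S × Bool)} (hL : GoodWord V U A L) :
    GoodWord V U A (FreeGroup.invRev L) := by
  refine ⟨?_, ?_, ?_⟩
  · rw [← FreeGroup.inv_mk]; exact V.inv_mem hL.1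
  · intro p hp
    simp only [FreeGroup.invRev, List.mem_reverse, List.mem_map] at hp
    obtain ⟨q, hq, rfl⟩ := hp
    exact hL.2.1 q hq
  · intro L1 L2 h
    have h2 : L = FreeGroup.invRev L2 ++ FreeGroup.invRev L1 := by
      rw [← FreeGroup.invRev_append, ← h, FreeGroup.invRev_invRev]
    have h3 := hL.2.2 _ _ h2
    have h4 : FreeGroup.mk L1 = (FreeGroup.mk L)⁻¹ * FreeGroup.mk (FreeGroup.invRev L2) := by
      rw [h2, ← FreeGroup.mul_mk, ← FreeGroup.inv_mk, ← FreeGroup.inv_mk]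
      group
    rw [h4, rcos_mul (V.inv_mem hL.1)]
    exact h3

theorem GoodWord.step {V : Subgroup (FreeGroup S)} {U : Set (FreeGroup S ⧸ V)} {A : Set S}
    {L M : List (S × Bool)} (hL : GoodWord V U A L) (h : FreeGroup.Red.Step L M) :
    GoodWord V U A M := by
  have hmk : FreeGroup.mk L = FreeGroup.mk M := FreeGroup.Red.exact.2 ⟨M, h.to_red, .refl⟩
  refine ⟨hmk ▸ hL.1, ?_, ?_⟩
  · intro p hp
    exact hL.2.1 p (h.sublist.subset hp)
  · intro M1 M2 hM
    cases h with
    | @not L1 L2 x b =>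
      rcases List.append_eq_append_iff.1 hM with ⟨a, rfl, h2⟩ | ⟨a, h1, h2⟩
      · have e : FreeGroup.mk (L1 ++ a) = FreeGroup.mk (L1 ++ (x, b) :: (x, !b) :: a) := by
          exact (FreeGroup.Red.exact.2 ⟨_, FreeGroup.Red.Step.not.to_red, .refl⟩).symm
        rw [e]
        exact hL.2.2 _ M2 (by simp [h2])
      · exact hL.2.2 M1 (a ++ (x, b) :: (x, !b) :: L2) (by simp [h1])

theorem GoodWord.red {V : Subgroup (FreeGroup S)} {U : Set (FreeGroup S ⧸ V)} {A : Set S}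
    {L M : List (S × Bool)} (hL : GoodWord V U A L) (h : FreeGroup.Red L M) :
    GoodWord V U A M := by
  induction h with
  | refl => exact hL
  | tail _ hs ih => exact ih.step hs

theorem good_of_fg [DecidableEq S] {V : Subgroup (FreeGroup S)} (hV : V.FG) :
    ∃ U : Set (FreeGroup S ⧸ V), ∃ A : Set S, U.Finite ∧ A.Finite ∧
      ∀ v ∈ V, GoodWord V U A v.toWord := by
  obtain ⟨R, hR, hfin⟩ := (Subgroup.fg_iff _).1 hV
  let U : Set (FreeGroup S ⧸ V) := insert (rcos V 1) (⋃ r ∈ R, {c | ∃ L1 ∈ r.toWord.inits, c = rcos V (FreeGroup.mk L1)})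
  let A : Set S := ⋃ r ∈ R, {a | ∃ p ∈ r.toWord, a = p.1}
  refine ⟨U, A, ?_, ?_, ?_⟩
  · refine Set.Finite.insert _ (hfin.biUnion ?_)
    intro r _
    refine ((List.finite_toSet (r.toWord.inits)).image (fun L => rcos V (FreeGroup.mk L))).subset ?_
    rintro c ⟨L1, h, rfl⟩
    exact ⟨L1, h, rfl⟩
  · refine hfin.biUnion ?_
    intro r _
    refine ((List.finite_toSet r.toWord).image (fun p => p.1)).subset ?_
    rintro c ⟨L1, h, rfl⟩
    exact ⟨L1, h, rfl⟩
  · have key : ∀ v ∈ V, ∃ L, FreeGroup.mk L = v ∧ GoodWord V U A L := by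
      intro v hv
      rw [← hR] at hv
      induction hv using Subgroup.closure_induction with
      | mem r hr =>
        refine ⟨r.toWord, FreeGroup.mk_toWord, ?_, ?_, ?_⟩
        · rw [FreeGroup.mk_toWord, ← hR]; exact Subgroup.subset_closure hr
        · intro p hp
          exact Set.mem_biUnion hr ⟨p, hp, rfl⟩
        · intro L1 L2 h
          right
          refine Set.mem_biUnion hr ⟨L1, ?_, rfl⟩
          rw [List.mem_inits, h]; exact List.prefix_append _ _
      | one =>
        refine ⟨[], rfl, V.one_mem, by simp, ?_⟩
        intro L1 L2 h
        have : L1 = [] := by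
          have := List.append_eq_nil_iff.1 h.symm
          exact this.1
        subst this
        left; rfl
      | mul x y _ _ hx hy =>
        obtain ⟨L, rfl, hL⟩ := hx
        obtain ⟨M, rfl, hM⟩ := hy
        exact ⟨L ++ M, FreeGroup.mul_mk.symm, hL.append hM⟩
      | inv x _ hx =>
        obtain ⟨L, rfl, hL⟩ := hx
        exact ⟨FreeGroup.invRev L, FreeGroup.inv_mk.symm, hL.invRev⟩
    intro v hv
    obtain ⟨L, rfl, hL⟩ := key v hv
    rw [FreeGroup.toWord_mk]
    exact hL.red (FreeGroup.reduce.red)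

theorem fg_of_good [DecidableEq S] {V : Subgroup (FreeGroup S)}
    (U : Set (FreeGroup S ⧸ V)) (A : Set S) (hU : U.Finite) (hA : A.Finite)
    (h : ∀ v ∈ V, GoodWord V U A v.toWord) : V.FG := by
  classical
  let t : FreeGroup S ⧸ V → FreeGroup S := fun c => if c = rcos V 1 then 1 else (Quotient.out c)⁻¹
  have ht : ∀ g, g * (t (rcos V g))⁻¹ ∈ V := by
    intro g
    by_cases hg : rcos V g = rcos V 1
    · simp only [t, hg, if_true]
      exact (rcos_eq V g 1).1 hg
    · simp only [t, hg, if_false, inv_inv]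
      have := QuotientGroup.out_eq' (rcos V g)
      have h2 := this.symm
      rw [rcos, QuotientGroup.eq] at h2
      simpa [rcos] using h2
  let gen : (FreeGroup S ⧸ V) × (S × Bool) → FreeGroup S := fun p =>
    t p.1 * FreeGroup.mk [p.2] * (t (rcos V (t p.1 * FreeGroup.mk [p.2])))⁻¹
  have hgen : ∀ p, gen p ∈ V := fun p => ht _
  let R : Set (FreeGroup S) := gen '' (U ×ˢ (A ×ˢ Set.univ))
  have hRfin : R.Finite := (hU.prod (hA.prod Set.finite_univ)).image _
  refine (Subgroup.fg_iff _).2 ⟨R, ?_, hRfin⟩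
  apply le_antisymm
  · rw [Subgroup.closure_le]
    rintro _ ⟨p, -, rfl⟩
    exact hgen p
  · intro v hv
    have hg := h v hv
    have key : ∀ L1 L2, v.toWord = L1 ++ L2 →
        FreeGroup.mk L1 * (t (rcos V (FreeGroup.mk L1)))⁻¹ ∈ Subgroup.closure R := by
      intro L1
      induction L1 using List.reverseRecOn with
      | nil =>
        intro L2 _
        have : t (rcos V (FreeGroup.mk [])) = 1 := by simp [t, FreeGroup.one_eq_mk]
        rw [this, ← FreeGroup.one_eq_mk]; simp
      | append_singleton L1 x ih =>
        intro L2 hL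
        have h1 := ih (x :: L2) (by simp [hL])
        have h2 : gen (rcos V (FreeGroup.mk L1), x) ∈ Subgroup.closure R := by
          apply Subgroup.subset_closure
          refine ⟨_, ⟨?_, ?_, trivial⟩, rfl⟩
          · exact hg.2.2 L1 (x :: L2) (by simp [hL])
          · exact hg.2.1 x (by simp [hL])
        have h3 := Subgroup.mul_mem _ h1 h2
        have h4 : rcos V (t (rcos V (FreeGroup.mk L1)) * FreeGroup.mk [x]) =
            rcos V (FreeGroup.mk (L1 ++ [x])) := by
          rw [← FreeGroup.mul_mk]
          apply rcos_mul_right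
          symm
          rw [rcos_eq]; exact ht _
        simp only [gen] at h3
        rw [h4] at h3
        rw [← FreeGroup.mul_mk]
        rw [← FreeGroup.mul_mk] at h3
        convert h3 using 1
        group
    have := key v.toWord [] (by simp)
    rw [FreeGroup.mk_toWord] at this
    have h2 : t (rcos V v) = 1 := by
      have : rcos V v = rcos V 1 := by rw [rcos_eq]; simpa using hv
      simp [t, this]
    simpa [h2] using this

end Howson

/-- The Howson property. -/
def HowsonGroup (G : Type*) [Group G] : Prop :=
  ∀ V P : Subgroup G, V.FG → P.FG → (V ⊓ P).FG

theorem howson_freeGroup (S : Type*) : HowsonGroup (FreeGroup S) := by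
  classical
  intro V P hV hP
  obtain ⟨U1, A1, hU1, hA1, h1⟩ := good_of_fg hV
  obtain ⟨U2, A2, hU2, hA2, h2⟩ := good_of_fg hP
  let F : (FreeGroup S ⧸ (V ⊓ P)) → (FreeGroup S ⧸ V) × (FreeGroup S ⧸ P) := fun c =>
    (rcos V (Quotient.out c)⁻¹, rcos P (Quotient.out c)⁻¹)
  have hF : ∀ g, F (rcos (V ⊓ P) g) = (rcos V g, rcos P g) := by
    intro g
    have := QuotientGroup.out_eq' (rcos (V ⊓ P) g)
    have h2 := this.symm
    rw [rcos, QuotientGroup.eq] at h2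
    have h3 : g * (Quotient.out (rcos (V ⊓ P) g)) ∈ V ⊓ P := by simpa [rcos] using h2
    apply Prod.ext
    · symm; rw [rcos_eq]; simpa using h3.1
    · symm; rw [rcos_eq]; simpa using h3.2
  have hFinj : Function.Injective F := by
    intro a b hab
    obtain ⟨g, rfl⟩ : ∃ g, rcos (V ⊓ P) g = a := by
      obtain ⟨g, rfl⟩ := QuotientGroup.mk_surjective a
      exact ⟨g⁻¹, by simp [rcos]⟩
    obtain ⟨g', rfl⟩ : ∃ g, rcos (V ⊓ P) g = b := by
      obtain ⟨g, rfl⟩ := QuotientGroup.mk_surjective b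
      exact ⟨g⁻¹, by simp [rcos]⟩
    rw [hF, hF, Prod.mk.injEq, rcos_eq, rcos_eq] at hab
    rw [rcos_eq]
    exact hab
  refine fg_of_good (F ⁻¹' (U1 ×ˢ U2)) A1 ((hU1.prod hU2).preimage hFinj.injOn) hA1 ?_
  intro v hv
  have g1 := h1 v hv.1
  have g2 := h2 v hv.2
  refine ⟨by rw [FreeGroup.mk_toWord]; exact hv, g1.2.1, ?_⟩
  intro L1 L2 h
  rw [Set.mem_preimage, hF]
  exact ⟨g1.2.2 _ _ h, g2.2.2 _ _ h⟩

theorem subgroup_fg_map {G H : Type*} [Group G] [Group H] (f : G →* H) {V : Subgroup G}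
    (h : V.FG) : (V.map f).FG := by
  rw [Subgroup.fg_iff_submonoid_fg] at *
  exact h.map f

theorem subgroup_fg_of_map {G H : Type*} [Group G] [Group H] (f : G →* H)
    (hf : Function.Injective f) {V : Subgroup G} (h : (V.map f).FG) : V.FG := by
  rw [Subgroup.fg_iff_submonoid_fg] at *
  exact Submonoid.FG.map_injective f hf h

theorem HowsonGroup.of_injective {G H : Type*} [Group G] [Group H] (f : H →* G)
    (hf : Function.Injective f) (h : HowsonGroup G) : HowsonGroup H := by
  intro V P hV hP
  apply subgroup_fg_of_map f hf
  rw [Subgroup.map_inf _ _ _ hf]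
  exact h _ _ (subgroup_fg_map f hV) (subgroup_fg_map f hP)

theorem HowsonGroup.inf_of_le_range {G H : Type*} [Group G] [Group H] (f : G →* H)
    (h : HowsonGroup G) (hf : Function.Injective f) {V P : Subgroup H} (hVr : V ≤ f.range)
    (hPr : P ≤ f.range) (hV : V.FG) (hP : P.FG) : (V ⊓ P).FG := by
  have e1 : (V.comap f).map f = V := Subgroup.map_comap_eq_self hVr
  have e2 : (P.comap f).map f = P := Subgroup.map_comap_eq_self hPr
  rw [← e1, ← e2, ← Subgroup.map_inf _ _ _ hf]
  apply subgroup_fg_map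
  apply h
  · apply subgroup_fg_of_map f hf; rwa [e1]
  · apply subgroup_fg_of_map f hf; rwa [e2]

theorem group_fg_of_finiteIndex {E : Type*} [Group E] (K : Subgroup E) [K.FiniteIndex]
    (hK : K.FG) : Group.FG E := by
  obtain ⟨S, hS, hfin⟩ := (Subgroup.fg_iff _).1 hK
  have : Finite (Quotient (QuotientGroup.leftRel K)) := inferInstanceAs (Finite (E ⧸ K))
  refine Group.fg_iff.2 ⟨S ∪ Set.range (Quotient.out : E ⧸ K → E), ?_,
    hfin.union (Set.finite_range _)⟩
  rw [eq_top_iff]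
  intro e _
  have h1 : (Quotient.out (e : E ⧸ K))⁻¹ * e ∈ K := by
    rw [← QuotientGroup.eq]; exact QuotientGroup.out_eq' _
  have h2 : K ≤ Subgroup.closure (S ∪ Set.range (Quotient.out : E ⧸ K → E)) := by
    rw [← hS]; exact Subgroup.closure_mono Set.subset_union_left
  have h3 : Quotient.out (e : E ⧸ K) ∈
      Subgroup.closure (S ∪ Set.range (Quotient.out : E ⧸ K → E)) :=
    Subgroup.subset_closure (Or.inr ⟨_, rfl⟩)
  simpa using Subgroup.mul_mem _ h3 (h2 h1)

theorem fg_inf_of_finiteIndex {G : Type*} [Group G] (N V : Subgroup G) [N.FiniteIndex]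
    (hV : V.FG) : (V ⊓ N).FG := by
  have := (Group.fg_iff_subgroup_fg V).2 hV
  have h1 : Group.FG (N.subgroupOf V) := inferInstance
  have h2 := (Group.fg_iff_subgroup_fg _).1 h1
  have h3 := subgroup_fg_map V.subtype h2
  rwa [Subgroup.subgroupOf_map_subtype, inf_comm] at h3

theorem fg_of_fg_inf_finiteIndex {G : Type*} [Group G] (N V : Subgroup G) [N.FiniteIndex]
    (hV : (V ⊓ N).FG) : V.FG := by
  rw [inf_comm, ← Subgroup.subgroupOf_map_subtype] at hV
  have h1 := subgroup_fg_of_map V.subtype V.subtype_injective hV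
  exact (Group.fg_iff_subgroup_fg V).1 (group_fg_of_finiteIndex _ h1)

theorem HowsonGroup.of_finiteIndex {G : Type*} [Group G] (N : Subgroup G) [N.FiniteIndex]
    (h : HowsonGroup N) : HowsonGroup G := by
  intro V P hV hP
  apply fg_of_fg_inf_finiteIndex N
  have e : V ⊓ P ⊓ N = (V ⊓ N) ⊓ (P ⊓ N) := by
    ext x; simp only [Subgroup.mem_inf]; tauto
  rw [e]
  refine h.inf_of_le_range N.subtype N.subtype_injective ?_ ?_
    (fg_inf_of_finiteIndex N V hV) (fg_inf_of_finiteIndex N P hP)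
  · rw [Subgroup.range_subtype]; exact inf_le_right
  · rw [Subgroup.range_subtype]; exact inf_le_right


open Monoid in
theorem pushout_map_eq_one {ι : Type*} {G G' : ι → Type*} [∀ i, Group (G i)] [∀ i, Group (G' i)]
    {H H' : Type*} [Group H] [Group H'] {φ : ∀ i, H →* G i} {φ' : ∀ i, H' →* G' i}
    (hφ : ∀ i, Function.Injective (φ i)) (hφ' : ∀ i, Function.Injective (φ' i))
    (f : ∀ i, G' i →* G i) (h : H' →* H) (hf : ∀ i, Function.Injective (f i))
    (hinj : Function.Injective h)
    (hr : ∀ i x, f i x ∈ (φ i).range → x ∈ (φ' i).range)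
    (Φ : PushoutI φ' →* PushoutI φ) (hΦ : ∀ i x, Φ (PushoutI.of i x) = PushoutI.of i (f i x))
    (hΦb : ∀ x, Φ (PushoutI.base φ' x) = PushoutI.base φ (h x)) : Function.Injective Φ := by
  classical
  rw [injective_iff_map_eq_one]
  intro z hz
  obtain ⟨d⟩ := PushoutI.NormalWord.transversal_nonempty φ' hφ'
  obtain ⟨w, rfl⟩ := (PushoutI.NormalWord.equiv (d := d)).symm.surjective z
  change Φ w.prod = 1 at hz
  change w.prod = 1
  let w2 : CoprodI.Word G :=
    { toList := w.toList.map (fun p => ⟨p.1, f p.1 p.2⟩)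
      ne_one := by
        intro l hl
        obtain ⟨p, hp, rfl⟩ := List.mem_map.1 hl
        have := w.ne_one p hp
        intro hc
        exact this (hf _ (by simpa using hc))
      chain_ne := by
        rw [List.isChain_map]
        exact w.chain_ne }
  have hred : PushoutI.Reduced φ w2 := by
    intro g hg
    obtain ⟨p, hp, rfl⟩ := List.mem_map.1 hg
    intro hc
    have h1 := hr _ _ hc
    have h2 := w.normalized p.1 p.2 hp
    have h3 := w.ne_one p hp
    apply h3
    have := (d.compl p.1).1 (a₁ := (⟨⟨p.2, h1⟩, ⟨1, d.one_mem _⟩⟩ : (φ' p.1).range × d.set p.1))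
      (a₂ := (⟨⟨1, (φ' p.1).range.one_mem⟩, ⟨p.2, h2⟩⟩ : (φ' p.1).range × d.set p.1)) (by simp)
    have h4 := congrArg (fun y => (y.1 : G' p.1)) this
    exact h4
  have hprod : ∀ l : List (Σ i, G' i), Φ ((l.map fun p => PushoutI.of p.1 p.2).prod) =
      ((l.map (fun p => (⟨p.1, f p.1 p.2⟩ : Σ i, G i))).map fun p => PushoutI.of p.1 p.2).prod := by
    intro l
    rw [map_list_prod, List.map_map, List.map_map]
    congr 1
    apply List.map_congr_left
    intro p _
    simp [hΦ]
  have hw2 : Φ (PushoutI.ofCoprodI w.toWord.prod) = PushoutI.ofCoprodI w2.prod := by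
    unfold CoprodI.Word.prod
    have e1 : (⇑PushoutI.ofCoprodI ∘ fun l : Σ i, G' i => CoprodI.of l.2) = fun l => PushoutI.of (φ := φ') l.1 l.2 := by
      funext l; simp
    have e2 : (⇑PushoutI.ofCoprodI ∘ fun l : Σ i, G i => CoprodI.of l.2) = fun l => PushoutI.of (φ := φ) l.1 l.2 := by
      funext l; simp
    rw [map_list_prod PushoutI.ofCoprodI, map_list_prod PushoutI.ofCoprodI, List.map_map,
      List.map_map, e1, e2, hprod]
  have hz2 : PushoutI.base φ (h w.head) * PushoutI.ofCoprodI w2.prod = 1 := by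
    rw [← hz, PushoutI.NormalWord.prod, map_mul, hΦb, hw2]
  have hemp : w2 = .empty := by
    apply hred.eq_empty_of_mem_range hφ
    rw [← inv_eq_of_mul_eq_one_right hz2, ← map_inv]
    exact ⟨_, rfl⟩
  have hwl : w.toList = [] := by
    have := congrArg CoprodI.Word.toList hemp
    simpa [w2, CoprodI.Word.empty] using this
  have hwe : w.toWord = .empty := by
    ext1; exact hwl
  rw [hemp] at hz2
  have hh : w.head = 1 := by
    apply hinj
    apply PushoutI.base_injective hφ
    simpa using hz2
  simp [PushoutI.NormalWord.prod, hwe, hh]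

open Monoid in
theorem pushout_fp {G : Bool → Type*} [∀ i, Group (G i)]
    {H : Type*} [Group H] {φ : ∀ i, H →* G i}
    (hφ : ∀ i, Function.Injective (φ i))
    (V : Bool → Subgroup (PushoutI φ)) (hV : ∀ b, V b ≤ (PushoutI.of b).range)
    (hE : V true ⊓ (PushoutI.base φ).range = V false ⊓ (PushoutI.base φ).range)
    (hfp : ∀ b, Group.IsFinitelyPresented (V b)) (hfg : (V true ⊓ (PushoutI.base φ).range).FG) :
    Group.IsFinitelyPresented ↥(V true ⊔ V false) := by
  have hE' : ∀ b, V b ⊓ (PushoutI.base φ).range = V true ⊓ (PushoutI.base φ).range := by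
    rintro (_ | _)
    · exact hE.symm
    · rfl
  obtain ⟨E, hEdef⟩ : ∃ E, E = V true ⊓ (PushoutI.base φ).range := ⟨_, rfl⟩
  rw [← hEdef] at hfg hE'
  have hEV : ∀ b, E ≤ V b := fun b => by rw [← hE' b]; exact inf_le_left
  have hEB : E ≤ (PushoutI.base φ).range := by rw [hEdef]; exact inf_le_right
  let φ' : ∀ b, E →* V b := fun b => Subgroup.inclusion (hEV b)
  let f : ∀ b, V b →* G b := fun b =>
    (MonoidHom.ofInjective (PushoutI.of_injective hφ b)).symm.toMonoidHom.comp
      (Subgroup.inclusion (hV b))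
  have hof : ∀ b x, PushoutI.of (φ := φ) b (f b x) = x := by
    intro b x
    exact MonoidHom.apply_ofInjective_symm (PushoutI.of_injective hφ b) (Subgroup.inclusion (hV b) x)
  let h : E →* H :=
    (MonoidHom.ofInjective (PushoutI.base_injective hφ)).symm.toMonoidHom.comp
      (Subgroup.inclusion hEB)
  have hbase : ∀ x, PushoutI.base φ (h x) = x := by
    intro x
    exact MonoidHom.apply_ofInjective_symm (PushoutI.base_injective hφ) (Subgroup.inclusion hEB x)
  let Φ : PushoutI φ' →* PushoutI φ := PushoutI.lift (fun b => (V b).subtype) E.subtype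
    (fun b => by ext x; rfl)
  have hΦ : Function.Injective Φ := by
    refine pushout_map_eq_one hφ (fun b => Subgroup.inclusion_injective _) f h ?_ ?_ ?_ Φ ?_ ?_
    · intro b x y hxy
      apply Subtype.ext
      rw [← hof b x, ← hof b y, hxy]
    · intro x y hxy
      apply Subtype.ext
      rw [← hbase x, ← hbase y, hxy]
    · rintro b x ⟨y, hy⟩
      have hx : (x : PushoutI φ) ∈ E := by
        rw [← hE' b]
        refine ⟨x.2, y, ?_⟩
        rw [← PushoutI.of_apply_eq_base φ b, hy, hof]
      exact ⟨⟨x, hx⟩, rfl⟩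
    · intro b x
      rw [hof]; simp [Φ]
    · intro x
      rw [hbase]; exact PushoutI.lift_base _ _ _ _
  have := hfp true
  have := hfp false
  let c : Coprod (V true) (V false) →* ↥(V true ⊔ V false) :=
    Coprod.lift (Subgroup.inclusion le_sup_left) (Subgroup.inclusion le_sup_right)
  have hc : Function.Surjective c := by
    have : (((V true ⊔ V false).subtype).comp c).range = V true ⊔ V false := by
      have : ((V true ⊔ V false).subtype).comp c = Coprod.lift (V true).subtype (V false).subtype := by
        ext x <;> rfl
      rw [this, Coprod.range_lift, Subgroup.range_subtype, Subgroup.range_subtype]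
    intro y
    have hy : (y : PushoutI φ) ∈ (((V true ⊔ V false).subtype).comp c).range := by
      rw [this]; exact y.2
    obtain ⟨x, hx⟩ := hy
    exact ⟨x, Subtype.ext hx⟩
  obtain ⟨S, hS, hSfin⟩ := (Subgroup.fg_iff _).1 hfg
  have hSE : ∀ s ∈ S, s ∈ E := fun s hs => hS ▸ Subgroup.subset_closure hs
  let rel : E → Coprod (V true) (V false) := fun e =>
    Coprod.inl (φ' true e) * (Coprod.inr (φ' false e))⁻¹
  let S' : Set E := E.subtype ⁻¹' S
  have hS'fin : S'.Finite := hSfin.preimage E.subtype_injective.injOn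
  have hS'cl : Subgroup.closure S' = ⊤ := by
    have e1 : (Subgroup.closure S').map E.subtype = E := by
      rw [MonoidHom.map_closure]
      conv_rhs => rw [← hS]
      congr 1
      rw [Set.image_preimage_eq_iff]
      intro s hs
      exact ⟨⟨s, hSE s hs⟩, rfl⟩
    apply Subgroup.map_injective E.subtype_injective
    rw [e1, ← MonoidHom.range_eq_map, Subgroup.range_subtype]
  refine Group.IsFinitelyPresented.of_surjective c hc ⟨rel '' S', hS'fin.image _, ?_⟩
  set N := Subgroup.normalClosure (rel '' S') with hN
  apply le_antisymm
  · apply Subgroup.normalClosure_le_normal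
    rintro _ ⟨s, hs, rfl⟩
    simp only [rel, SetLike.mem_coe, MonoidHom.mem_ker, map_mul, map_inv, mul_inv_eq_one]
    apply Subtype.ext
    simp [c, φ']
  · let q := QuotientGroup.mk' N
    have hq : ∀ e : E, q (Coprod.inl (φ' true e)) = q (Coprod.inr (φ' false e)) := by
      have : (q.comp Coprod.inl).comp (φ' true) = (q.comp Coprod.inr).comp (φ' false) := by
        apply MonoidHom.eq_of_eqOn_dense hS'cl
        intro s hs
        have h1 : rel s ∈ N := Subgroup.subset_normalClosure ⟨s, hs, rfl⟩
        have h2 : q (rel s) = 1 := (QuotientGroup.eq_one_iff _).2 h1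
        simp only [rel, map_mul, map_inv, mul_inv_eq_one] at h2
        exact h2
      exact fun e => DFunLike.congr_fun this e
    let fam : ∀ b, V b →* (Coprod (V true) (V false) ⧸ N) := fun b =>
      match b with
      | true => q.comp Coprod.inl
      | false => q.comp Coprod.inr
    let L : PushoutI φ' →* (Coprod (V true) (V false) ⧸ N) :=
      PushoutI.lift fam ((q.comp Coprod.inl).comp (φ' true)) (by
        rintro (_ | _)
        · ext e; exact (hq e).symm
        · rfl)
    let π : Coprod (V true) (V false) →* PushoutI φ' :=
      Coprod.lift (PushoutI.of (φ := φ') true) (PushoutI.of (φ := φ') false)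
    have hLπ : L.comp π = q := by
      apply Coprod.hom_ext
      · ext x
        simp [L, π, fam]
      · ext x
        simp [L, π, fam]
    have hΦπ : Φ.comp π = (V true ⊔ V false).subtype.comp c := by
      apply Coprod.hom_ext
      · ext x
        simp [Φ, π, c]
      · ext x
        simp [Φ, π, c]
    intro x hx
    have h1 : Φ (π x) = 1 := by
      have := DFunLike.congr_fun hΦπ x
      simp only [MonoidHom.comp_apply] at this
      rw [this, MonoidHom.mem_ker.1 hx]; simp
    have h2 : π x = 1 := hΦ (by rw [h1, map_one])
    have h3 := DFunLike.congr_fun hLπ x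
    simp only [MonoidHom.comp_apply, h2, map_one] at h3
    exact (QuotientGroup.eq_one_iff _).1 h3.symm

universe u
/-- Family of two groups. -/
def TwoFam (X Q : Type u) : Bool → Type u
  | true => X
  | false => Q

instance (X Q : Type u) [Group X] [Group Q] : ∀ b, Group (TwoFam X Q b)
  | true => inferInstanceAs (Group X)
  | false => inferInstanceAs (Group Q)

/-- The two maps from the base. -/
def TwoFam.map {X Q P : Type u} [Group X] [Group Q] [Group P] (a : P →* X) (b : P →* Q) :
    ∀ i, P →* TwoFam X Q i
  | true => a
  | false => b

open Monoid in
theorem exists_amalgam {X Q P : Type u} [Group X] [Group Q] [Group P] (a : P →* X) (b : P →* Q)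
    (ha : Function.Injective a) (hb : Function.Injective b) :
    ∃ (Γ : Type u) (_ : Group Γ) (i : X →* Γ) (j : Q →* Γ),
      Function.Injective i ∧ Function.Injective j ∧ (∀ x, i (a x) = j (b x)) ∧
      (∀ (K : Type u) [Group K] (f : X →* K) (g : Q →* K), (∀ x, f (a x) = g (b x)) →
        ∃ h : Γ →* K, (∀ x, h (i x) = f x) ∧ (∀ x, h (j x) = g x)) ∧
      (∀ VA VQ : Subgroup Γ, VA ≤ i.range → VQ ≤ j.range →
        VA ⊓ (i.comp a).range = VQ ⊓ (i.comp a).range →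
        Group.IsFinitelyPresented VA → Group.IsFinitelyPresented VQ →
        (VA ⊓ (i.comp a).range).FG → Group.IsFinitelyPresented ↥(VA ⊔ VQ)) := by
  have hφ : ∀ i, Function.Injective (TwoFam.map a b i) := by
    rintro (_ | _)
    · exact hb
    · exact ha
  refine ⟨PushoutI (TwoFam.map a b), inferInstance, PushoutI.of (φ := TwoFam.map a b) true,
    PushoutI.of (φ := TwoFam.map a b) false,
    PushoutI.of_injective hφ true, PushoutI.of_injective hφ false, ?_, ?_, ?_⟩
  · intro x
    exact (PushoutI.of_apply_eq_base (TwoFam.map a b) true x).trans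
      (PushoutI.of_apply_eq_base (TwoFam.map a b) false x).symm
  · intro K _ f g hfg
    let fam : ∀ i, TwoFam X Q i →* K := fun i => match i with
      | true => f
      | false => g
    refine ⟨PushoutI.lift fam (f.comp a) ?_, ?_, ?_⟩
    · rintro (_ | _)
      · ext x; exact (hfg x).symm
      · rfl
    · intro x
      exact PushoutI.lift_of (φ := TwoFam.map a b) fam (f.comp a) _ (i := true) x
    · intro x
      exact PushoutI.lift_of (φ := TwoFam.map a b) fam (f.comp a) _ (i := false) x
  · intro VA VQ hA hQ hE fA fQ hfg
    have e : (MonoidHom.comp (PushoutI.of (φ := TwoFam.map a b) true) a) =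
        PushoutI.base (TwoFam.map a b) := PushoutI.of_comp_eq_base (φ := TwoFam.map a b) true
    have e2 : (MonoidHom.comp (PushoutI.of (φ := TwoFam.map a b) true) a).range =
        (PushoutI.base (TwoFam.map a b)).range := by rw [← e]
    let V : Bool → Subgroup (PushoutI (TwoFam.map a b)) := fun b => cond b VA VQ
    refine pushout_fp hφ V ?_ ?_ ?_ ?_
    · rintro (_ | _)
      · exact hQ
      · exact hA
    · rw [← e2]; exact hE
    · rintro (_ | _)
      · exact fQ
      · exact fA
    · rw [← e2]; exact hfg



/-- Homomorphisms to the field with `p` elements. -/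
abbrev HomK (p : ℕ) (V : Type*) [Group V] : Type _ := Additive V →+ ZMod p

/-- Evaluation. -/
def HomK.ev {p : ℕ} {V : Type*} [Group V] (f : HomK p V) (v : V) : ZMod p := f (Additive.ofMul v)

theorem HomK.ev_mul {p : ℕ} {V : Type*} [Group V] (f : HomK p V) (v w : V) :
    f.ev (v * w) = f.ev v + f.ev w := by
  unfold HomK.ev; rw [ofMul_mul, map_add]

theorem HomK.ev_inv {p : ℕ} {V : Type*} [Group V] (f : HomK p V) (v : V) :
    f.ev (v⁻¹) = - f.ev v := by
  unfold HomK.ev; rw [ofMul_inv, map_neg]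

theorem HomK.ev_one {p : ℕ} {V : Type*} [Group V] (f : HomK p V) :
    f.ev 1 = 0 := by
  unfold HomK.ev; rw [ofMul_one, map_zero]

theorem HomK.ext' {p : ℕ} {V : Type*} [Group V] {f g : HomK p V} (h : ∀ v, f.ev v = g.ev v) :
    f = g := by
  apply AddMonoidHom.ext
  intro x
  exact h x.toMul

/-- Kernel as a subgroup. -/
def HomK.kerS {p : ℕ} {V : Type*} [Group V] (f : HomK p V) : Subgroup V where
  carrier := {v | f.ev v = 0}
  mul_mem' := by
    intro a b ha hb
    simp only [Set.mem_ofPred_eq] at *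
    rw [HomK.ev_mul, ha, hb, add_zero]
  one_mem' := f.ev_one
  inv_mem' := by
    intro a ha
    simp only [Set.mem_ofPred_eq] at *
    rw [HomK.ev_inv, ha, neg_zero]

theorem HomK.mem_kerS {p : ℕ} {V : Type*} [Group V] (f : HomK p V) (v : V) :
    v ∈ f.kerS ↔ f.ev v = 0 := Iff.rfl

/-- Restriction along a homomorphism. -/
def HomK.res {p : ℕ} {V W : Type*} [Group V] [Group W] (i : V →* W) :
    HomK p W →ₗ[ZMod p] HomK p V where
  toFun f := f.comp i.toAdditive
  map_add' _ _ := rfl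
  map_smul' _ _ := rfl

theorem HomK.res_ev {p : ℕ} {V W : Type*} [Group V] [Group W] (i : V →* W) (f : HomK p W) (v : V) :
    (HomK.res i f).ev v = f.ev (i v) := rfl

theorem HomK.finite {p : ℕ} [Fact p.Prime] {V : Type*} [Group V] [hV : Group.FG V] :
    Module.Finite (ZMod p) (HomK p V) := by
  obtain ⟨S, hS, hfin⟩ := Group.fg_iff.1 hV
  have := hfin.to_subtype
  let T : HomK p V →ₗ[ZMod p] (S → ZMod p) :=
    { toFun := fun f s => f.ev s
      map_add' := fun _ _ => rfl
      map_smul' := fun _ _ => rfl }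
  have hT : Function.Injective T := by
    rw [← LinearMap.ker_eq_bot, LinearMap.ker_eq_bot']
    intro f hf
    have h1 : (⊤ : Subgroup V) ≤ f.kerS := by
      rw [← hS, Subgroup.closure_le]
      intro s hs
      exact congrFun hf ⟨s, hs⟩
    apply HomK.ext'
    intro v
    exact h1 (Subgroup.mem_top v)
  exact Module.Finite.of_injective T hT

theorem HomK.finite' {p : ℕ} [Fact p.Prime] {G : Type*} [Group G] {V : Subgroup G} (hV : V.FG) :
    Module.Finite (ZMod p) (HomK p V) := by
  have := (Group.fg_iff_subgroup_fg V).2 hV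
  exact HomK.finite

section process
variable {Γ : Type*} [Group Γ] (P VA VQ : Subgroup Γ)

/-- The sequence of subgroups. -/
def qseq : ℕ → Subgroup Γ
  | 0 => VQ
  | i + 1 => VQ ⊔ ((VA ⊔ (qseq i ⊓ P)) ⊓ P)

/-- The other sequence. -/
def aseq (i : ℕ) : Subgroup Γ := VA ⊔ (qseq P VA VQ i ⊓ P)

theorem qseq_succ (i : ℕ) : qseq P VA VQ (i+1) = VQ ⊔ (aseq P VA VQ i ⊓ P) := rfl

theorem qseq_le_succ (i : ℕ) : qseq P VA VQ i ≤ qseq P VA VQ (i+1) := by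
  induction i with
  | zero => exact le_sup_left
  | succ i ih =>
    rw [qseq_succ, qseq_succ]
    unfold aseq
    gcongr

theorem qseq_mono : Monotone (qseq P VA VQ) := monotone_nat_of_le_succ (qseq_le_succ P VA VQ)

theorem aseq_mono : Monotone (aseq P VA VQ) := by
  intro i j h
  unfold aseq
  have := qseq_mono P VA VQ h
  gcongr

theorem seq_le (i : ℕ) : qseq P VA VQ i ≤ VA ⊔ VQ ∧ aseq P VA VQ i ≤ VA ⊔ VQ := by
  induction i with
  | zero =>
    refine ⟨le_sup_right, ?_⟩
    exact sup_le le_sup_left (inf_le_left.trans le_sup_right)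
  | succ i ih =>
    have h1 : qseq P VA VQ (i+1) ≤ VA ⊔ VQ := by
      rw [qseq_succ]
      exact sup_le le_sup_right (inf_le_left.trans ih.2)
    exact ⟨h1, sup_le le_sup_left (inf_le_left.trans h1)⟩

variable {P VA VQ}

theorem seq_kernel {p : ℕ} (i : ℕ) (f : HomK p (aseq P VA VQ i)) (g : HomK p (qseq P VA VQ i))
    (hf : ∀ x : aseq P VA VQ i, (x : Γ) ∈ VA → f.ev x = 0)
    (hg : ∀ x : qseq P VA VQ i, (x : Γ) ∈ VQ → g.ev x = 0)
    (hfg : ∀ (x : aseq P VA VQ i) (y : qseq P VA VQ i), (x : Γ) = y → (x : Γ) ∈ P → f.ev x = g.ev y) :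
    f = 0 ∧ g = 0 := by
  have hEa : qseq P VA VQ i ⊓ P ≤ aseq P VA VQ i := le_sup_right
  let Kf := f.kerS.map (aseq P VA VQ i).subtype
  let Kg := g.kerS.map (qseq P VA VQ i).subtype
  have key : ∀ m ≤ i, qseq P VA VQ m ≤ Kg ∧ aseq P VA VQ m ≤ Kf := by
    have step : ∀ m ≤ i, qseq P VA VQ m ≤ Kg → aseq P VA VQ m ≤ Kf := by
      intro m hm hq
      refine sup_le ?_ ?_
      · intro x hx
        have hx' : x ∈ aseq P VA VQ i := (le_sup_left : VA ≤ aseq P VA VQ i) hx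
        exact ⟨⟨x, hx'⟩, hf _ hx, rfl⟩
      · rintro x ⟨hx, hxP⟩
        obtain ⟨y, hy, rfl⟩ := hq hx
        have hx' := hEa ⟨y.2, hxP⟩
        refine ⟨⟨_, hx'⟩, ?_, rfl⟩
        rw [SetLike.mem_coe, HomK.mem_kerS, hfg _ y rfl hxP]
        exact hy
    intro m
    induction m with
    | zero =>
      intro hm
      have h0 : qseq P VA VQ 0 ≤ Kg := by
        intro x hx
        have hx' : x ∈ qseq P VA VQ i := qseq_mono P VA VQ hm hx
        exact ⟨⟨x, hx'⟩, hg _ hx, rfl⟩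
      exact ⟨h0, step 0 hm h0⟩
    | succ m ih =>
      intro hm
      have ih' := ih (by omega)
      have h0 : qseq P VA VQ (m+1) ≤ Kg := by
        rw [qseq_succ]
        refine sup_le ?_ ?_
        · intro x hx
          have hx' : x ∈ qseq P VA VQ i := qseq_mono P VA VQ (Nat.zero_le i) hx
          exact ⟨⟨x, hx'⟩, hg _ hx, rfl⟩
        · rintro x ⟨hx, hxP⟩
          have hxq : x ∈ qseq P VA VQ i := qseq_mono P VA VQ hm (by
            rw [qseq_succ]; exact (le_sup_right : _ ≤ VQ ⊔ (aseq P VA VQ m ⊓ P)) ⟨hx, hxP⟩)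
          obtain ⟨y, hy, rfl⟩ := ih'.2 hx
          refine ⟨⟨_, hxq⟩, ?_, rfl⟩
          rw [SetLike.mem_coe, HomK.mem_kerS, ← hfg y _ rfl hxP]
          exact hy
      exact ⟨h0, step _ hm h0⟩
  constructor
  · apply HomK.ext'
    intro v
    obtain ⟨y, hy, hyv⟩ := (key i le_rfl).2 v.2
    have : y = v := Subtype.ext hyv
    rw [← this]; exact hy
  · apply HomK.ext'
    intro v
    obtain ⟨y, hy, hyv⟩ := (key i le_rfl).1 v.2
    have : y = v := Subtype.ext hyv
    rw [← this]; exact hy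

theorem seq_dim {p : ℕ} [Fact p.Prime] (i : ℕ) (hVA : VA.FG) (hVQ : VQ.FG)
    (ha : (aseq P VA VQ i).FG) (hq : (qseq P VA VQ i).FG) (he : (qseq P VA VQ i ⊓ P).FG)
    (hclaim : Module.finrank (ZMod p) (HomK p ↥(qseq P VA VQ i ⊓ P)) ≤
      Module.finrank (ZMod p) (HomK p (qseq P VA VQ i))) :
    Module.finrank (ZMod p) (HomK p (aseq P VA VQ i)) ≤
      Module.finrank (ZMod p) (HomK p VA) + Module.finrank (ZMod p) (HomK p VQ) := by
  have := HomK.finite' (p := p) hVA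
  have := HomK.finite' (p := p) hVQ
  have := HomK.finite' (p := p) ha
  have := HomK.finite' (p := p) hq
  have := HomK.finite' (p := p) he
  have hEa : qseq P VA VQ i ⊓ P ≤ aseq P VA VQ i := le_sup_right
  have hEq : qseq P VA VQ i ⊓ P ≤ qseq P VA VQ i := inf_le_left
  have hA : VA ≤ aseq P VA VQ i := le_sup_left
  have hQ : VQ ≤ qseq P VA VQ i := qseq_mono P VA VQ (Nat.zero_le i)
  let D : (HomK p (aseq P VA VQ i) × HomK p (qseq P VA VQ i)) →ₗ[ZMod p]
      HomK p ↥(qseq P VA VQ i ⊓ P) :=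
    (HomK.res (Subgroup.inclusion hEa)).comp (LinearMap.fst _ _ _) -
      (HomK.res (Subgroup.inclusion hEq)).comp (LinearMap.snd _ _ _)
  let ρ : (HomK p (aseq P VA VQ i) × HomK p (qseq P VA VQ i)) →ₗ[ZMod p]
      (HomK p VA × HomK p VQ) :=
    LinearMap.prodMap (HomK.res (Subgroup.inclusion hA)) (HomK.res (Subgroup.inclusion hQ))
  have hinj : Function.Injective (ρ.comp (LinearMap.ker D).subtype) := by
    rw [injective_iff_map_eq_zero]
    rintro ⟨⟨f, g⟩, hD⟩ h
    have h1 : HomK.res (Subgroup.inclusion hA) f = 0 := congrArg Prod.fst h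
    have h2 : HomK.res (Subgroup.inclusion hQ) g = 0 := congrArg Prod.snd h
    have h3 : HomK.res (Subgroup.inclusion hEa) f = HomK.res (Subgroup.inclusion hEq) g :=
      sub_eq_zero.1 (LinearMap.mem_ker.1 hD)
    have := seq_kernel i f g ?_ ?_ ?_
    · apply Subtype.ext
      exact Prod.ext this.1 this.2
    · intro x hx
      exact congrArg (fun u => HomK.ev u ⟨x, hx⟩) h1
    · intro x hx
      exact congrArg (fun u => HomK.ev u ⟨x, hx⟩) h2
    · intro x y hxy hx
      have e := congrArg (fun u => HomK.ev u ⟨x, ⟨hxy ▸ y.2, hx⟩⟩) h3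
      have hy : y = ⟨x, hxy ▸ y.2⟩ := Subtype.ext hxy.symm
      rw [hy]
      exact e
  have e1 := LinearMap.finrank_le_finrank_of_injective hinj
  have e2 := LinearMap.finrank_range_add_finrank_ker D
  have e3 := Submodule.finrank_le (LinearMap.range D)
  rw [Module.finrank_prod] at e1 e2
  omega

theorem free_dim_le {p : ℕ} [Fact p.Prime] (F : Subgroup Γ) [IsFreeGroup F] (a : ℕ → Subgroup Γ)
    (ha : Monotone a) (hF : F = ⨆ i, a i) (R : ℕ)
    (hfg : ∀ i, (a i).FG)
    (hR : ∀ i, Module.finrank (ZMod p) (HomK p (a i)) ≤ R) : Group.FG F := by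
  classical
  let b := IsFreeGroup.basis F
  suffices h : Finite (IsFreeGroup.Generators F) by
    exact Group.fg_of_surjective (f := b.repr.symm.toMonoidHom) b.repr.symm.surjective
  by_contra hinf
  rw [not_finite_iff_infinite] at hinf
  obtain ⟨s, hs⟩ := Infinite.exists_subset_card_eq (IsFreeGroup.Generators F) (R + 1)
  have hmem : ∀ x : IsFreeGroup.Generators F, ∃ i, (b x : Γ) ∈ a i := by
    intro x
    have h1 : (b x : Γ) ∈ ⨆ i, a i := hF ▸ (b x).2
    exact (Subgroup.mem_iSup_of_directed ha.directed_le).1 h1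
  choose idx hidx using hmem
  let m := s.sup idx
  have hm : ∀ x ∈ s, (b x : Γ) ∈ a m := fun x hx => ha (Finset.le_sup hx) (hidx x)
  have haF : a m ≤ F := hF ▸ le_iSup a m
  let ex : (s → ZMod p) → IsFreeGroup.Generators F → ZMod p := fun c x =>
    if h : x ∈ s then c ⟨x, h⟩ else 0
  let hom : (s → ZMod p) → HomK p F := fun c =>
    MonoidHom.toAdditiveLeft (b.lift (fun x => Multiplicative.ofAdd (ex c x)))
  have hom_b : ∀ c x, (hom c).ev (b x) = ex c x := by
    intro c x
    change Multiplicative.toAdd ((b.lift (fun x => Multiplicative.ofAdd (ex c x))) (b x)) = _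
    simp
  have hom_ext : ∀ f g : HomK p F, (∀ x, f.ev (b x) = g.ev (b x)) → f = g := by
    intro f g h
    have : MonoidHom.toAdditiveLeft.symm f = MonoidHom.toAdditiveLeft.symm g := by
      apply b.ext_hom
      intro x
      exact h x
    exact MonoidHom.toAdditiveLeft.symm.injective this
  let T : (s → ZMod p) →ₗ[ZMod p] HomK p F :=
    { toFun := hom
      map_add' := by
        intro c d
        apply hom_ext
        intro x
        change _ = (hom c).ev (b x) + (hom d).ev (b x)
        rw [hom_b, hom_b, hom_b]
        simp only [ex]
        split_ifs <;> simp
      map_smul' := by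
        intro r c
        apply hom_ext
        intro x
        change _ = r * (hom c).ev (b x)
        rw [hom_b, hom_b]
        simp only [ex]
        split_ifs <;> simp }
  let T2 := (HomK.res (p := p) (Subgroup.inclusion haF)).comp T
  have hT2 : Function.Injective T2 := by
    intro c d hcd
    funext x
    have := congrArg (fun u => HomK.ev u ⟨_, hm x x.2⟩) hcd
    change (hom c).ev (b x) = (hom d).ev (b x) at this
    rw [hom_b, hom_b] at this
    simpa [ex] using this
  have := HomK.finite' (p := p) (hfg m)
  have e1 := LinearMap.finrank_le_finrank_of_injective hT2
  rw [Module.finrank_fintype_fun_eq_card, Fintype.card_coe, hs] at e1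
  have := hR m
  omega

theorem exists_stable (a : ℕ → Subgroup Γ) (ha : Monotone a) (h : (⨆ i, a i).FG) :
    ∃ i, a i = ⨆ i, a i := by
  obtain ⟨S, hS⟩ := h
  have hmem : ∀ x ∈ S, ∃ i, x ∈ a i := by
    intro x hx
    have h1 : x ∈ ⨆ i, a i := hS ▸ Subgroup.subset_closure hx
    exact (Subgroup.mem_iSup_of_directed ha.directed_le).1 h1
  choose! idx hidx using hmem
  refine ⟨S.sup idx, le_antisymm (le_iSup a _) ?_⟩
  conv_lhs => rw [← hS]
  rw [Subgroup.closure_le]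
  intro x hx
  exact ha (Finset.le_sup hx) (hidx x hx)

theorem process {p : ℕ} [Fact p.Prime] (X Q P : Subgroup Γ) (hPX : P ≤ X) (hPQ : P ≤ Q)
    [IsFreeGroup X] (howX : ∀ V ≤ X, V.FG → (V ⊓ P).FG) (howQ : ∀ V ≤ Q, V.FG → (V ⊓ P).FG)
    (claim : ∀ V ≤ Q, V.FG → Module.finrank (ZMod p) (HomK p ↥(V ⊓ P)) ≤
      Module.finrank (ZMod p) (HomK p V))
    (VA VQ : Subgroup Γ) (hA : VA ≤ X) (hQ : VQ ≤ Q) (fA : VA.FG) (fQ : VQ.FG) :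
    ∃ VA' VQ' : Subgroup Γ, VA' ≤ X ∧ VQ' ≤ Q ∧ VA'.FG ∧ VQ'.FG ∧ VA' ⊓ P = VQ' ⊓ P ∧
      VA' ⊔ VQ' = VA ⊔ VQ := by
  have hall : ∀ i, (qseq P VA VQ i ≤ Q ∧ (qseq P VA VQ i).FG) ∧
      (aseq P VA VQ i ≤ X ∧ (aseq P VA VQ i).FG) := by
    have step : ∀ i, (qseq P VA VQ i ≤ Q ∧ (qseq P VA VQ i).FG) →
        (aseq P VA VQ i ≤ X ∧ (aseq P VA VQ i).FG) := by
      rintro i ⟨h1, h2⟩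
      exact ⟨sup_le hA (inf_le_right.trans hPX), Subgroup.FG.sup fA (howQ _ h1 h2)⟩
    intro i
    induction i with
    | zero => exact ⟨⟨hQ, fQ⟩, step 0 ⟨hQ, fQ⟩⟩
    | succ i ih =>
      have : (qseq P VA VQ (i+1) ≤ Q ∧ (qseq P VA VQ (i+1)).FG) := by
        rw [qseq_succ]
        exact ⟨sup_le hQ (inf_le_right.trans hPQ), Subgroup.FG.sup fQ (howX _ ih.2.1 ih.2.2)⟩
      exact ⟨this, step _ this⟩
  have hsX : (⨆ i, aseq P VA VQ i) ≤ X := iSup_le fun i => (hall i).2.1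
  have hfree : IsFreeGroup ↥(⨆ i, aseq P VA VQ i) :=
    IsFreeGroup.ofMulEquiv (Subgroup.subgroupOfEquivOfLe hsX)
  have hfg := free_dim_le (p := p) (⨆ i, aseq P VA VQ i) (aseq P VA VQ) (aseq_mono P VA VQ) rfl _
    (fun i => (hall i).2.2)
    (fun i => seq_dim i fA fQ (hall i).2.2 (hall i).1.2 (howQ _ (hall i).1.1 (hall i).1.2)
      (claim _ (hall i).1.1 (hall i).1.2))
  obtain ⟨i, hi⟩ := exists_stable _ (aseq_mono P VA VQ) ((Group.fg_iff_subgroup_fg _).1 hfg)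
  have hi1 : aseq P VA VQ (i+1) ≤ aseq P VA VQ i := by
    conv_rhs => rw [hi]
    exact le_iSup (aseq P VA VQ) (i+1)
  refine ⟨aseq P VA VQ i, qseq P VA VQ (i+1), (hall i).2.1, (hall _).1.1, (hall i).2.2,
    (hall _).1.2, ?_, ?_⟩
  · apply le_antisymm
    · refine le_inf ?_ inf_le_right
      rw [qseq_succ]; exact le_sup_right
    · refine le_inf ?_ inf_le_right
      exact (le_sup_right : _ ≤ aseq P VA VQ (i+1)).trans hi1
  · apply le_antisymm
    · exact sup_le (seq_le P VA VQ i).2 (seq_le P VA VQ (i+1)).1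
    · exact sup_le_sup le_sup_left le_sup_left
end process



section oneRel
variable {T : Type*} (t0 : T) (n : ℕ) (u : FreeGroup {s : T // s ≠ t0})

/-- Relator root. -/
def orW : FreeGroup T := FreeGroup.of t0 * FreeGroup.map Subtype.val u

/-- The one-relator group. -/
abbrev orQ : Type _ := PresentedGroup ({orW t0 u ^ n} : Set (FreeGroup T))

open Classical in
/-- Maps out of the one-relator group. -/
noncomputable def orGen {D : Type*} [Group D] (g : {s : T // s ≠ t0} → D) (y : D) : T → D :=
  fun s => if h : s = t0 then y * (FreeGroup.lift g u)⁻¹ else g ⟨s, h⟩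

theorem orGen_W {D : Type*} [Group D] (g : {s : T // s ≠ t0} → D) (y : D) :
    FreeGroup.lift (orGen t0 u g y) (orW t0 u) = y := by
  have h1 : (FreeGroup.lift (orGen t0 u g y)).comp (FreeGroup.map Subtype.val) =
      FreeGroup.lift g := by
    apply FreeGroup.ext_hom
    intro s
    simp [orGen, s.2]
  have h2 := DFunLike.congr_fun h1 u
  simp only [MonoidHom.comp_apply] at h2
  rw [orW, map_mul, h2, FreeGroup.lift_apply_of]
  simp [orGen]

/-- Maps out of the one-relator group. -/
noncomputable def orHom {D : Type*} [Group D] (g : {s : T // s ≠ t0} → D) (y : D)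
    (hy : y ^ n = 1) : orQ t0 n u →* D :=
  PresentedGroup.toGroup (f := orGen t0 u g y) (by
    intro r hr
    rw [Set.mem_singleton_iff] at hr
    rw [hr, map_pow, orGen_W, hy])

theorem orHom_of {D : Type*} [Group D] (g : {s : T // s ≠ t0} → D) (y : D)
    (hy : y ^ n = 1) (s : T) : orHom t0 n u g y hy (PresentedGroup.of s) = orGen t0 u g y s := by
  simp [orHom]

/-- shift automorphism -/
def shiftAut (S : Type*) (n : ℕ) : Multiplicative (ZMod n) →* MulAut (FreeGroup (S × ZMod n)) where
  toFun a := FreeGroup.freeGroupCongr (Equiv.prodCongr (Equiv.refl S) (Equiv.addLeft a.toAdd))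
  map_one' := by
    apply MulEquiv.toMonoidHom_injective
    apply FreeGroup.ext_hom
    intro x
    simp
  map_mul' a b := by
    apply MulEquiv.toMonoidHom_injective
    apply FreeGroup.ext_hom
    rintro ⟨s, z⟩
    simp [add_assoc]

theorem or_virtually_free :
    ∃ χ : orQ t0 n u →* Multiplicative (ZMod n),
      ∃ f : χ.ker →* FreeGroup ({s : T // s ≠ t0} × ZMod n), Function.Injective f := by
  let S := {s : T // s ≠ t0}
  let 𝒬 := FreeGroup (S × ZMod n) ⋊[shiftAut S n] Multiplicative (ZMod n)
  let y : 𝒬 := SemidirectProduct.inr (Multiplicative.ofAdd 1)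
  have hy : y ^ n = 1 := by
    simp only [y]
    rw [← map_pow, ← ofAdd_nsmul]
    simp
  let θ : orQ t0 n u →* 𝒬 :=
    orHom t0 n u (fun s => SemidirectProduct.inl (FreeGroup.of (s, 0))) y hy
  let w : orQ t0 n u := PresentedGroup.mk _ (orW t0 u)
  have hw : w ^ n = 1 := by
    simp only [w]
    rw [← map_pow]
    exact PresentedGroup.one_of_mem rfl
  let ω : Multiplicative (ZMod n) →* orQ t0 n u :=
    AddMonoidHom.toMultiplicativeLeft (ZMod.lift n ⟨zmultiplesHom _ (Additive.ofMul w), by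
      simp only [zmultiplesHom_apply, natCast_zsmul]
      rw [← ofMul_pow, hw, ofMul_one]⟩)
  have hω : ω (Multiplicative.ofAdd 1) = w := by
    have := ZMod.lift_coe n ⟨zmultiplesHom _ (Additive.ofMul w), by
      simp only [zmultiplesHom_apply, natCast_zsmul]
      rw [← ofMul_pow, hw, ofMul_one]⟩ 1
    simp only [Int.cast_one] at this
    change Additive.toMul (ZMod.lift n _ 1) = w
    rw [this]
    simp
  let η : 𝒬 →* orQ t0 n u := SemidirectProduct.lift
    (FreeGroup.lift (fun p : S × ZMod n =>
      ω (Multiplicative.ofAdd p.2) * PresentedGroup.of p.1.1 * (ω (Multiplicative.ofAdd p.2))⁻¹))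
    ω (by
      intro a
      apply FreeGroup.ext_hom
      intro p
      simp [shiftAut, mul_assoc])
  have hηθ : η.comp θ = MonoidHom.id _ := by
    apply PresentedGroup.ext
    intro s
    simp only [MonoidHom.comp_apply, θ, orHom_of, MonoidHom.id_apply]
    have hg : ∀ s : S, η (SemidirectProduct.inl (FreeGroup.of (s, 0))) = PresentedGroup.of s.1 := by
      intro s
      refine (SemidirectProduct.lift_inl _ _ _ _).trans ?_
      rw [FreeGroup.lift_apply_of]
      simp
    by_cases hs : s = t0
    · subst hs
      simp only [orGen, dif_pos, map_mul, map_inv]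
      have h1 : η.comp (FreeGroup.lift (fun s : S => (SemidirectProduct.inl (FreeGroup.of (s, 0)) : 𝒬)))
          = (PresentedGroup.mk _).comp (FreeGroup.map Subtype.val) := by
        apply FreeGroup.ext_hom
        intro s
        simp only [MonoidHom.comp_apply, FreeGroup.lift_apply_of, hg]
        simp [PresentedGroup.of]
      have h2 := DFunLike.congr_fun h1 u
      simp only [MonoidHom.comp_apply] at h2
      rw [h2]
      have h3 : η y = w := (SemidirectProduct.lift_inr _ _ _ _).trans hω
      rw [h3]
      have h4 : w = PresentedGroup.mk _ (FreeGroup.of s) *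
          PresentedGroup.mk _ (FreeGroup.map Subtype.val u) := map_mul (PresentedGroup.mk _) _ _
      rw [h4, mul_inv_cancel_right]
      rfl
    · simp only [orGen, dif_neg hs]
      exact hg ⟨s, hs⟩
  have hθ : Function.Injective θ := by
    intro a b hab
    have := congrArg η hab
    rw [← MonoidHom.comp_apply, ← MonoidHom.comp_apply, hηθ] at this
    exact this
  refine ⟨SemidirectProduct.rightHom.comp θ,
    { toFun := fun x => (θ x.1).left
      map_one' := by simp
      map_mul' := ?_ }, ?_⟩
  · rintro ⟨a, ha⟩ ⟨b, hb⟩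
    have ha' : (θ a).right = 1 := ha
    have h1 : (θ (a * b)).left = (θ a).left * shiftAut S n (θ a).right (θ b).left := by
      rw [map_mul]
      rfl
    rw [ha', map_one] at h1
    exact h1
  · rintro ⟨a, ha⟩ ⟨b, hb⟩ hab
    have ha' : (θ a).right = 1 := ha
    have hb' : (θ b).right = 1 := hb
    apply Subtype.ext
    apply hθ
    apply SemidirectProduct.ext
    · exact hab
    · rw [ha', hb']

theorem or_howson [NeZero n] : HowsonGroup (orQ t0 n u) := by
  obtain ⟨χ, f, hf⟩ := or_virtually_free t0 n u
  have : χ.ker.FiniteIndex := inferInstance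
  exact HowsonGroup.of_finiteIndex χ.ker (HowsonGroup.of_injective f hf (howson_freeGroup _))

theorem or_fp [NeZero n] (V : Subgroup (orQ t0 n u)) (hV : V.FG) :
    Group.IsFinitelyPresented V := by
  obtain ⟨χ, f, hf⟩ := or_virtually_free t0 n u
  let χ' : V →* Multiplicative (ZMod n) := χ.comp V.subtype
  have hVfg : Group.FG V := (Group.fg_iff_subgroup_fg V).2 hV
  have hfi : χ'.ker.FiniteIndex := inferInstance
  have hNfg : Group.FG χ'.ker := inferInstance
  let f' : χ'.ker →* FreeGroup ({s : T // s ≠ t0} × ZMod n) := f.comp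
    { toFun := fun x => ⟨x.1.1, x.2⟩
      map_one' := rfl
      map_mul' := fun _ _ => rfl }
  have hf' : Function.Injective f' := by
    intro a b hab
    have h0 : (⟨a.1.1, a.2⟩ : χ.ker) = ⟨b.1.1, b.2⟩ := hf hab
    apply Subtype.ext
    apply Subtype.ext
    have h1 : ((⟨a.1.1, a.2⟩ : χ.ker) : orQ t0 n u) = ((⟨b.1.1, b.2⟩ : χ.ker) : orQ t0 n u) := by
      rw [h0]
    exact h1
  have hNfp : Group.IsFinitelyPresented χ'.ker := by
    have e := MonoidHom.ofInjective hf'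
    have : Group.FG f'.range := Group.fg_of_surjective (f := e.toMonoidHom) e.surjective
    have : Group.IsFinitelyPresented f'.range := fp_of_isFreeGroup_fg
    exact Group.IsFinitelyPresented.equiv e.symm
  obtain ⟨⟨g, t, rfl⟩, ht⟩ := IsCyclic.exists_generator (α := χ'.range)
  refine fp_of_cyclic_ext χ'.ker t (orderOf (χ' t)) ?_ ?_
  · intro j
    rw [MonoidHom.mem_ker, map_zpow, orderOf_dvd_iff_zpow_eq_one]
  · intro v
    obtain ⟨j, hj⟩ := ht ⟨χ' v, v, rfl⟩
    refine ⟨-j, ?_⟩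
    have hj' : χ' t ^ j = χ' v := congrArg Subtype.val hj
    rw [MonoidHom.mem_ker, map_mul, map_zpow, zpow_neg, hj', mul_inv_cancel]
end oneRel



section pp
open Monoid

theorem pp_abstract {A B Γ Ω : Type*} [Group A] [Group B] [Group Γ] [MulAction Γ Ω] [Nonempty Ω]
    (iA : A →* Γ) (iB : B →* Γ) (hA : Ω → A) (hB : Ω → B)
    (hAs : ∀ a w, hA (iA a • w) = a * hA w) (hBs : ∀ b w, hB (iB b • w) = b * hB w)
    (hAB : ∀ w, hA w ≠ 1 → hB w = 1)
    {I : Type} (φ : FreeGroup I →* B) (hφ : Function.Injective φ) (u : B) (hu : u ∉ φ.range)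
    (y : A) (hy : y ≠ 1) (w0 : Ω) (hw0 : hA w0 = 1) (hw0' : hB w0 = 1) {ι : Type} [DecidableEq ι]
    (f : ι → Γ) (x0 : ι) (e : {i // i ≠ x0} → I) (he : Function.Injective e)
    (hf0 : f x0 = iA y * iB u⁻¹) (hf : ∀ i, f i.1 = iB (φ (FreeGroup.of (e i)))) :
    Function.Injective (FreeGroup.lift f) := by
  let H := TwoFam (FreeGroup {i // i ≠ x0}) (Multiplicative ℤ)
  have hBA : ∀ w, hB w ≠ 1 → hA w = 1 := fun w h => by
    by_contra h2
    exact h (hAB w h2)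
  have hu1 : u ≠ 1 := by
    rintro rfl
    exact hu (one_mem _)
  let x : Γ := iA y * iB u⁻¹
  let F : ∀ b, H b →* Γ := fun b => match b with
    | true => (iB.comp φ).comp (FreeGroup.map e)
    | false => zpowersHom Γ x
  let Xp : Set Ω := {w | hA w ≠ 1}
  let Xm : Set Ω := {w | hB w = u}
  let X0 : Set Ω := {w | hA w = 1 ∧ (hB w ∈ φ.range ∨ ∃ c ∈ φ.range, c ≠ 1 ∧ hB w = c * u)}
  let X : Bool → Set Ω := fun b => match b with
    | true => X0
    | false => Xp ∪ Xm
  have hxp : ∀ w, w ∈ X0 ∪ Xp → x • w ∈ Xp := by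
    intro w hw
    have h1 : hB w ∈ φ.range ∨ ∃ c ∈ φ.range, c ≠ 1 ∧ hB w = c * u := by
      rcases hw with hw | hw
      · exact hw.2
      · left
        rw [hAB w hw]
        exact one_mem _
    have h2 : hB (iB u⁻¹ • w) ≠ 1 := by
      rw [hBs]
      intro h
      have h' : hB w = u := (inv_mul_eq_one.mp h).symm
      rcases h1 with h1 | ⟨c, hc, hc1, h1⟩
      · exact hu (h' ▸ h1)
      · rw [h'] at h1
        exact hc1 (by simpa using h1.symm)
    change hA ((iA y * iB u⁻¹) • w) ≠ 1
    rw [mul_smul, hAs, hBA _ h2, mul_one]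
    exact hy
  have hxm : ∀ w, w ∈ X0 ∪ Xm → x⁻¹ • w ∈ Xm := by
    intro w hw
    have h1 : hA w = 1 := by
      rcases hw with hw | hw
      · exact hw.1
      · apply hBA
        rw [show hB w = u from hw]
        exact hu1
    have h2 : x⁻¹ = iB u * iA y⁻¹ := by simp [x]
    change hB (x⁻¹ • w) = u
    rw [h2, mul_smul, hBs, hAB, mul_one]
    rw [hAs, h1, mul_one]
    simpa using hy
  have hpn : ∀ (m : ℕ) w, w ∈ X0 → x ^ (m + 1) • w ∈ Xp := by
    intro m w hw
    induction m with
    | zero => simpa using hxp w (Or.inl hw)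
    | succ m ih =>
      rw [pow_succ', mul_smul]
      exact hxp _ (Or.inr ih)
  have hmn : ∀ (m : ℕ) w, w ∈ X0 → x⁻¹ ^ (m + 1) • w ∈ Xm := by
    intro m w hw
    induction m with
    | zero => simpa using hxm w (Or.inl hw)
    | succ m ih =>
      rw [pow_succ', mul_smul]
      exact hxm _ (Or.inr ih)
  have hc : ∀ c ∈ φ.range, c ≠ 1 → ∀ w ∈ Xp ∪ Xm, iB c • w ∈ X0 := by
    intro c hc hc1 w hw
    rcases hw with hw | hw
    · have h1 : hB (iB c • w) = c := by rw [hBs, hAB w hw, mul_one]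
      exact ⟨hBA _ (by rw [h1]; exact hc1), Or.inl (by rw [h1]; exact hc)⟩
    · have h1 : hB (iB c • w) = c * u := by rw [hBs, show hB w = u from hw]
      refine ⟨hBA _ ?_, Or.inr ⟨c, hc, hc1, h1⟩⟩
      rw [h1]
      intro h
      apply hu
      rw [← inv_eq_of_mul_eq_one_right h]
      exact inv_mem hc
  have hinj : Function.Injective (CoprodI.lift F) := by
    apply CoprodI.lift_injective_of_ping_pong F (Or.inr ⟨false, ?_⟩) X
    · rintro (_ | _)
      · exact ⟨x • w0, Or.inl (hxp w0 (Or.inl ⟨hw0, Or.inl (by rw [hw0']; exact one_mem _)⟩))⟩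
      · exact ⟨w0, hw0, Or.inl (by rw [hw0']; exact one_mem _)⟩
    · have hd : Disjoint X0 (Xp ∪ Xm) := by
        rw [Set.disjoint_left]
        rintro w ⟨h1, h2⟩ (h3 | h3)
        · exact h3 h1
        · rw [show hB w = u from h3] at h2
          rcases h2 with h2 | ⟨c, _, hc1, h2⟩
          · exact hu h2
          · exact hc1 (by simpa using h2.symm)
      rintro (_ | _) (_ | _) hij
      · exact absurd rfl hij
      · exact hd.symm
      · exact hd
      · exact absurd rfl hij
    · rintro (_ | _) (_ | _) hij
      · exact absurd rfl hij
      · intro m hm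
        rintro _ ⟨w, hw, rfl⟩
        have hm0 : Multiplicative.toAdd (show Multiplicative ℤ from m) ≠ 0 := fun h => hm h
        change x ^ (Multiplicative.toAdd (show Multiplicative ℤ from m)) • w ∈ Xp ∪ Xm
        generalize Multiplicative.toAdd (show Multiplicative ℤ from m) = z at hm0
        obtain ⟨k, rfl | rfl⟩ := z.eq_nat_or_neg
        · obtain ⟨j, rfl⟩ := Nat.exists_eq_succ_of_ne_zero (n := k) (by simpa using hm0)
          left
          rw [zpow_natCast]
          exact hpn j w hw
        · obtain ⟨j, rfl⟩ := Nat.exists_eq_succ_of_ne_zero (n := k) (by simpa using hm0)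
          right
          rw [zpow_neg, zpow_natCast, ← inv_pow]
          exact hmn j w hw
      · intro c hc1
        rintro _ ⟨w, hw, rfl⟩
        refine hc (φ (FreeGroup.map e (show FreeGroup {i // i ≠ x0} from c))) ⟨_, rfl⟩ ?_ w hw
        intro h
        apply hc1
        have h2 := hφ (h.trans (map_one φ).symm)
        exact FreeGroup.map_injective he (h2.trans (map_one (FreeGroup.map e)).symm)
      · exact absurd rfl hij
    · have : Infinite (H false) := inferInstanceAs (Infinite (Multiplicative ℤ))
      exact (Cardinal.natCast_lt_aleph0 (n := 3)).le.trans (Cardinal.aleph0_le_mk _)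
  -- compare
  let R : FreeGroup ι →* CoprodI H := FreeGroup.lift fun i =>
    if h : i = x0 then CoprodI.of (i := false) (show H false from Multiplicative.ofAdd (1 : ℤ))
    else CoprodI.of (i := true) (show H true from FreeGroup.of ⟨i, h⟩)
  let Lf : ∀ b, H b →* FreeGroup ι := fun b => match b with
    | true => FreeGroup.map Subtype.val
    | false => zpowersHom _ (FreeGroup.of x0)
  let L : CoprodI H →* FreeGroup ι := CoprodI.lift Lf
  have hLR : L.comp R = MonoidHom.id _ := by
    apply FreeGroup.ext_hom
    intro i
    simp only [R, L, MonoidHom.comp_apply, FreeGroup.lift_apply_of, MonoidHom.id_apply]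
    split_ifs with h
    · subst h
      exact (CoprodI.lift_of (fi := Lf) (i := false) _).trans (zpow_one (FreeGroup.of i))
    · exact (CoprodI.lift_of (fi := Lf) (i := true) _).trans FreeGroup.map.of
  have hR : Function.Injective R := by
    intro a b hab
    have := congrArg L hab
    rwa [← MonoidHom.comp_apply, ← MonoidHom.comp_apply, hLR] at this
  have hfR : FreeGroup.lift f = (CoprodI.lift F).comp R := by
    apply FreeGroup.ext_hom
    intro i
    simp only [R, MonoidHom.comp_apply, FreeGroup.lift_apply_of]
    split_ifs with h
    · subst h
      rw [hf0]
      exact (zpow_one x).symm.trans (CoprodI.lift_of (fi := F) (i := false) _).symm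
    · rw [hf ⟨i, h⟩]
      refine Eq.trans ?_ (CoprodI.lift_of (fi := F) (i := true) _).symm
      change _ = iB (φ (FreeGroup.map e (FreeGroup.of _)))
      rw [FreeGroup.map.of]
  rw [hfR]
  exact hinj.comp hR
end pp

section orfree
open Monoid
variable {T : Type*} (t0 : T) (n : ℕ) (u : FreeGroup {s : T // s ≠ t0})

open Classical in
theorem or_free_inj (hn : 2 ≤ n) {ι : Type} (f : ι → T) (hf : Function.Injective f) (x0 : ι)
    (h0 : f x0 = t0) (hu : FreeGroup.map Subtype.val u ∉ (FreeGroup.map f).range) :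
    Function.Injective (FreeGroup.lift (fun i => (PresentedGroup.of (f i) : orQ t0 n u))) := by
  let A := ULift (Multiplicative (ZMod n))
  let B := FreeGroup {s : T // s ≠ t0}
  let M := TwoFam A B
  let iA : A →* CoprodI M := CoprodI.of (M := M) (i := true)
  let iB : B →* CoprodI M := CoprodI.of (M := M) (i := false)
  let y : A := ULift.up (Multiplicative.ofAdd 1)
  have hyn : iA y ^ n = 1 := by
    rw [← map_pow]
    have : y ^ n = 1 := by
      apply ULift.ext
      change (Multiplicative.ofAdd (1 : ZMod n)) ^ n = 1
      rw [← ofAdd_nsmul]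
      simp
    rw [this, map_one]
  have hy1 : y ≠ 1 := by
    intro h
    have h1 : (1 : ZMod n) = 0 := congrArg (fun z : A => Multiplicative.toAdd z.down) h
    have : Fact (1 < n) := ⟨hn⟩
    exact one_ne_zero h1
  let θ : orQ t0 n u →* CoprodI M := orHom t0 n u (fun s => iB (FreeGroup.of s)) (iA y) hyn
  have hne : ∀ i : {i // i ≠ x0}, f i.1 ≠ t0 := fun i h => i.2 (hf (h.trans h0.symm))
  let φ : FreeGroup {i // i ≠ x0} →* B := FreeGroup.map fun i => ⟨f i.1, hne i⟩
  have hφ : Function.Injective φ := by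
    apply FreeGroup.map_injective
    intro i j hij
    exact Subtype.ext (hf (congrArg Subtype.val hij))
  have hlift : FreeGroup.lift (fun s => iB (FreeGroup.of s)) = iB := by
    apply FreeGroup.ext_hom
    intro s
    rw [FreeGroup.lift_apply_of]
  have key : Function.Injective (FreeGroup.lift (fun i => θ (PresentedGroup.of (f i)))) := by
    refine pp_abstract (Ω := CoprodI.Word M) iA iB (fun w => (CoprodI.Word.equivPair true w).head)
      (fun w => (CoprodI.Word.equivPair false w).head) ?_ ?_ ?_ φ hφ u ?_ y hy1
      CoprodI.Word.empty ?_ ?_ _ x0 id Function.injective_id ?_ ?_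
    · intro a w
      exact congrArg CoprodI.Word.Pair.head (CoprodI.Word.equivPair_smul_same (i := true) a w)
    · intro a w
      exact congrArg CoprodI.Word.Pair.head (CoprodI.Word.equivPair_smul_same (i := false) a w)
    · intro w hw
      by_cases h : w.fstIdx = some true
      · have h2 : w.fstIdx ≠ some false := by rw [h]; simp
        exact congrArg CoprodI.Word.Pair.head (CoprodI.Word.equivPair_eq_of_fstIdx_ne h2)
      · exact absurd (congrArg CoprodI.Word.Pair.head (CoprodI.Word.equivPair_eq_of_fstIdx_ne h)) hw
    · rintro ⟨c, rfl⟩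
      apply hu
      refine ⟨FreeGroup.map Subtype.val c, ?_⟩
      have hc : (FreeGroup.map f).comp (FreeGroup.map Subtype.val) =
          (FreeGroup.map Subtype.val).comp φ := by
        apply FreeGroup.ext_hom
        intro i
        simp only [MonoidHom.comp_apply, FreeGroup.map.of]
        exact (FreeGroup.map.of (f := Subtype.val) (x := (⟨f i.1, hne i⟩ : {s // s ≠ t0}))).symm
      exact DFunLike.congr_fun hc c
    · exact congrArg CoprodI.Word.Pair.head
        (CoprodI.Word.equivPair_eq_of_fstIdx_ne (i := true) (w := CoprodI.Word.empty) (by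
          simp [CoprodI.Word.fstIdx]))
    · exact congrArg CoprodI.Word.Pair.head
        (CoprodI.Word.equivPair_eq_of_fstIdx_ne (i := false) (w := CoprodI.Word.empty) (by
          simp [CoprodI.Word.fstIdx]))
    · refine (orHom_of t0 n u _ _ hyn _).trans ?_
      rw [h0]
      simp only [orGen, dif_pos]
      rw [hlift, map_inv]
    · intro i
      refine (orHom_of t0 n u _ _ hyn _).trans ?_
      simp only [orGen, dif_neg (hne i), id]
      rfl
  have hcomp : FreeGroup.lift (fun i => θ (PresentedGroup.of (f i))) =
      θ.comp (FreeGroup.lift (fun i => (PresentedGroup.of (f i) : orQ t0 n u))) := by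
    apply FreeGroup.ext_hom
    intro s
    simp
  rw [hcomp] at key
  exact Function.Injective.of_comp key
end orfree



section cochain
variable {T Q Ω K : Type*} [Group Q] [MulAction Q Ω] [CommRing K] (γ : T → Q)

/-- Action of the free group on the twisted product. -/
def lam (c : T × Ω → K) : FreeGroup T →* Equiv.Perm (Ω × K) :=
  FreeGroup.lift fun s =>
    { toFun := fun x => (γ s • x.1, x.2 + c (s, x.1))
      invFun := fun x => ((γ s)⁻¹ • x.1, x.2 - c (s, (γ s)⁻¹ • x.1))
      left_inv := fun x => by simp
      right_inv := fun x => by simp }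

/-- The value of a cochain along a path. -/
def vF (c : T × Ω → K) (g : FreeGroup T) (ω : Ω) : K := (lam γ c g (ω, 0)).2

theorem lam_apply (c : T × Ω → K) (g : FreeGroup T) (ω : Ω) (t : K) :
    lam γ c g (ω, t) = (FreeGroup.lift γ g • ω, t + vF γ c g ω) := by
  unfold vF
  induction g using FreeGroup.induction_on generalizing ω t with
  | C1 => simp
  | of s => simp [lam]
  | inv_of s h =>
    simp only [map_inv, FreeGroup.lift_apply_of, lam]
    ext
    · simp [Equiv.Perm.inv_def]
    · simp [Equiv.Perm.inv_def, sub_eq_add_neg]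
  | mul x y hx hy =>
    rw [map_mul, Equiv.Perm.mul_apply, Equiv.Perm.mul_apply, hy, hy ω 0, hx, hx (_ • ω) (0 + _),
      map_mul, mul_smul]
    ext
    · rfl
    · simp [add_assoc]

theorem vF_mul (c : T × Ω → K) (g h : FreeGroup T) (ω : Ω) :
    vF γ c (g * h) ω = vF γ c h ω + vF γ c g (FreeGroup.lift γ h • ω) := by
  conv_lhs => rw [vF, map_mul, Equiv.Perm.mul_apply, lam_apply, lam_apply]
  simp

theorem vF_one (c : T × Ω → K) (ω : Ω) : vF γ c 1 ω = 0 := by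
  simp [vF]

theorem vF_of (c : T × Ω → K) (s : T) (ω : Ω) : vF γ c (FreeGroup.of s) ω = c (s, ω) := by
  simp [vF, lam]

theorem vF_inv (c : T × Ω → K) (g : FreeGroup T) (ω : Ω) :
    vF γ c g⁻¹ ω = - vF γ c g ((FreeGroup.lift γ g)⁻¹ • ω) := by
  have h := vF_mul γ c g g⁻¹ ω
  rw [mul_inv_cancel, vF_one, map_inv] at h
  exact eq_neg_of_add_eq_zero_left h.symm

theorem vF_add (c d : T × Ω → K) (g : FreeGroup T) (ω : Ω) :
    vF γ (c + d) g ω = vF γ c g ω + vF γ d g ω := by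
  induction g using FreeGroup.induction_on generalizing ω with
  | C1 => simp [vF_one]
  | of s => simp [vF_of]
  | inv_of s h => simp [vF_inv, vF_of]; ring
  | mul x y hx hy => simp only [vF_mul, hx, hy]; ring

theorem vF_smul (r : K) (c : T × Ω → K) (g : FreeGroup T) (ω : Ω) :
    vF γ (r • c) g ω = r * vF γ c g ω := by
  induction g using FreeGroup.induction_on generalizing ω with
  | C1 => simp [vF_one]
  | of s => simp [vF_of]
  | inv_of s h => simp [vF_inv, vF_of]
  | mul x y hx hy => simp only [vF_mul, hx, hy]; ring

/-- `vF` as a linear map in the cochain. -/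
def vL (g : FreeGroup T) (ω : Ω) : (T × Ω → K) →ₗ[K] K where
  toFun c := vF γ c g ω
  map_add' c d := vF_add γ c d g ω
  map_smul' r c := vF_smul γ r c g ω

/-- coboundary -/
def cob (φ : Ω → K) : T × Ω → K := fun e => φ (γ e.1 • e.2) - φ e.2

theorem vF_cob (φ : Ω → K) (g : FreeGroup T) (ω : Ω) :
    vF γ (cob γ φ) g ω = φ (FreeGroup.lift γ g • ω) - φ ω := by
  induction g using FreeGroup.induction_on generalizing ω with
  | C1 => simp [vF_one]
  | of s => simp [vF_of, cob]
  | inv_of s h => simp [vF_inv, vF_of, cob]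
  | mul x y hx hy => simp only [vF_mul, hx, hy, map_mul, mul_smul]; ring

/-- The edge traversed by a letter starting at a vertex. -/
def edgeOf (l : T × Bool) (v : Ω) : T × Ω :=
  if l.2 then (l.1, v) else (l.1, (γ l.1)⁻¹ • v)

/-- The inverse letter. -/
def linv (l : T × Bool) : T × Bool := (l.1, !l.2)

/-- List action on vertices. -/
def pAct (w : List (T × Bool)) (ω : Ω) : Ω := FreeGroup.lift γ (FreeGroup.mk w) • ω

theorem pAct_nil (ω : Ω) : pAct γ [] ω = ω := by
  rw [pAct, ← FreeGroup.one_eq_mk, map_one, one_smul]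

theorem mk_append (a b : List (T × Bool)) :
    FreeGroup.mk (a ++ b) = FreeGroup.mk a * FreeGroup.mk b := FreeGroup.mul_mk.symm

theorem pAct_append (a b : List (T × Bool)) (ω : Ω) : pAct γ (a ++ b) ω = pAct γ a (pAct γ b ω) := by
  rw [pAct, mk_append, map_mul, mul_smul]
  rfl

theorem pAct_cons (l : T × Bool) (b : List (T × Bool)) (ω : Ω) :
    pAct γ (l :: b) ω = pAct γ [l] (pAct γ b ω) := pAct_append γ [l] b ω

theorem pAct_true (s : T) (ω : Ω) : pAct γ [(s, true)] ω = γ s • ω := by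
  simp [pAct, FreeGroup.lift_mk]

theorem pAct_false (s : T) (ω : Ω) : pAct γ [(s, false)] ω = (γ s)⁻¹ • ω := by
  simp [pAct, FreeGroup.lift_mk]

theorem edgeOf_linv (l : T × Bool) (v : Ω) :
    edgeOf γ (linv l) (pAct γ [l] v) = edgeOf γ l v := by
  obtain ⟨s, b⟩ := l
  cases b <;> simp [edgeOf, linv, pAct_true, pAct_false]

/-- Path edges. -/
def pe : List (T × Bool) → Ω → List (T × Ω)
  | [], _ => []
  | l :: w, ω => edgeOf γ l (pAct γ w ω) :: pe w ω

theorem mem_pe (w : List (T × Bool)) (ω : Ω) (e : T × Ω) :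
    e ∈ pe γ w ω ↔ ∃ a l w', w = a ++ l :: w' ∧ e = edgeOf γ l (pAct γ w' ω) := by
  induction w with
  | nil => simp [pe]
  | cons m w ih =>
    rw [pe, List.mem_cons, ih]
    constructor
    · rintro (rfl | ⟨a, l, w', rfl, rfl⟩)
      · exact ⟨[], m, w, rfl, rfl⟩
      · exact ⟨m :: a, l, w', rfl, rfl⟩
    · rintro ⟨a, l, w', h, rfl⟩
      cases a with
      | nil =>
        simp only [List.nil_append, List.cons.injEq] at h
        obtain ⟨rfl, rfl⟩ := h
        exact Or.inl rfl
      | cons b a =>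
        simp only [List.cons_append, List.cons.injEq] at h
        exact Or.inr ⟨a, l, w', h.2, rfl⟩

theorem vF_congr (c d : T × Ω → K) (w : List (T × Bool)) (ω : Ω)
    (h : ∀ e ∈ pe γ w ω, c e = d e) : vF γ c (FreeGroup.mk w) ω = vF γ d (FreeGroup.mk w) ω := by
  induction w with
  | nil => rw [← FreeGroup.one_eq_mk, vF_one, vF_one]
  | cons l w ih =>
    have hl : ∀ c : T × Ω → K, vF γ c (FreeGroup.mk (l :: w)) ω =
        vF γ c (FreeGroup.mk w) ω + (if l.2 then 1 else -1) * c (edgeOf γ l (pAct γ w ω)) := by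
      intro c
      have : FreeGroup.mk (l :: w) = FreeGroup.mk [l] * FreeGroup.mk w := mk_append [l] w
      rw [this, vF_mul]
      congr 1
      obtain ⟨s, b⟩ := l
      cases b
      · have h1 : FreeGroup.mk [(s, false)] = (FreeGroup.of s)⁻¹ := by
          simp [FreeGroup.of, FreeGroup.inv_mk, FreeGroup.invRev]
        rw [h1, vF_inv, vF_of]
        simp [edgeOf, pAct]
      · have h1 : FreeGroup.mk [(s, true)] = FreeGroup.of s := rfl
        rw [h1, vF_of]
        simp [edgeOf, pAct]
    rw [hl, hl, ih (fun e he => h e (List.mem_cons_of_mem _ he)), h _ List.mem_cons_self]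

theorem vF_eq_zero (c : T × Ω → K) (w : List (T × Bool)) (ω : Ω)
    (h : ∀ e ∈ pe γ w ω, c e = 0) : vF γ c (FreeGroup.mk w) ω = 0 := by
  rw [vF_congr γ c 0 w ω h]
  exact (vL γ (FreeGroup.mk w) ω).map_zero
end cochain



section Eside
variable {T Q ι : Type*} [Group Q] {p : ℕ} [Fact p.Prime] (γ : T → Q) (j : ι → T)

theorem quot_smul_one_eq_iff (V : Subgroup Q) (q : Q) :
    q • ((1 : Q) : Q ⧸ V) = ((1 : Q) : Q ⧸ V) ↔ q ∈ V := by
  change ((q * 1 : Q) : Q ⧸ V) = _ ↔ _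
  rw [mul_one, eq_comm, QuotientGroup.eq]
  simp

theorem quot_smul_one_eq_iff' (V : Subgroup Q) (q r : Q) :
    q • ((1 : Q) : Q ⧸ V) = r • ((1 : Q) : Q ⧸ V) ↔ r⁻¹ * q ∈ V := by
  rw [← quot_smul_one_eq_iff, mul_smul, inv_smul_eq_iff]

open Classical in
/-- vertices of an edge set together with the base point. -/
noncomputable def vset {Ω : Type*} [MulAction Q Ω] (ω0 : Ω) (Δ : Finset (T × Ω)) : Finset Ω :=
  insert ω0 (Δ.image Prod.snd ∪ Δ.image fun e => γ e.1 • e.2)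

theorem edge_ends {Ω : Type*} [MulAction Q Ω] (l : T × Bool) (v : Ω) :
    ((edgeOf γ l v).2 = v ∧ γ (edgeOf γ l v).1 • (edgeOf γ l v).2 = pAct γ [l] v) ∨
    ((edgeOf γ l v).2 = pAct γ [l] v ∧ γ (edgeOf γ l v).1 • (edgeOf γ l v).2 = v) := by
  obtain ⟨s, b⟩ := l
  cases b <;> simp [edgeOf, pAct_true, pAct_false]

open Classical in
theorem E_bound (V : Subgroup Q) (hE : (V ⊓ (FreeGroup.lift (γ ∘ j)).range).FG) :
    ∃ Δ : Finset (T × (Q ⧸ V)), (∀ e ∈ Δ, e.1 ∈ Set.range j) ∧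
      Module.finrank (ZMod p) (HomK p ↥(V ⊓ (FreeGroup.lift (γ ∘ j)).range)) +
        (vset γ ((1 : Q) : Q ⧸ V) Δ).card ≤ Δ.card + 1 := by
  set P := (FreeGroup.lift (γ ∘ j)).range with hP
  set ω0 : Q ⧸ V := ((1 : Q) : Q ⧸ V) with hω0
  have hfin : Module.Finite (ZMod p) (HomK p ↥(V ⊓ P)) := HomK.finite' hE
  obtain ⟨S, hS⟩ := hE
  have hSmem : ∀ s ∈ S, s ∈ V ⊓ P := fun s hs => by
    rw [← hS]
    exact Subgroup.subset_closure hs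
  have hmapj : ∀ g : FreeGroup ι, FreeGroup.lift γ (FreeGroup.map j g) =
      FreeGroup.lift (γ ∘ j) g := by
    intro g
    have : (FreeGroup.lift γ).comp (FreeGroup.map j) = FreeGroup.lift (γ ∘ j) := by
      apply FreeGroup.ext_hom
      simp
    exact DFunLike.congr_fun this g
  have hw : ∀ s ∈ S, ∃ g : FreeGroup ι, FreeGroup.lift (γ ∘ j) g = s := fun s hs =>
    (hSmem s hs).2
  choose! gw hgw using hw
  let wd : Q → List (T × Bool) := fun s => (gw s).toWord.map fun x => (j x.1, x.2)
  have hwd : ∀ s, FreeGroup.mk (wd s) = FreeGroup.map j (gw s) := by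
    intro s
    conv_rhs => rw [← FreeGroup.mk_toWord (x := gw s)]
    rw [FreeGroup.map.mk]
  let Δ : Finset (T × (Q ⧸ V)) := S.biUnion fun s => (pe γ (wd s) ω0).toFinset
  have hΔ : ∀ e, e ∈ Δ ↔ ∃ s ∈ S, e ∈ pe γ (wd s) ω0 := by
    intro e
    simp [Δ]
  refine ⟨Δ, ?_, ?_⟩
  · intro e he
    obtain ⟨s, hs, he⟩ := (hΔ e).1 he
    obtain ⟨a, l, w', h, rfl⟩ := (mem_pe _ _ _ _).1 he
    have : l ∈ wd s := by rw [h]; simp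
    obtain ⟨x, _, rfl⟩ := List.mem_map.1 this
    refine ⟨x.1, ?_⟩
    unfold edgeOf
    split_ifs <;> rfl
  -- section
  let τ : Q ⧸ V → Q := fun η => if η = ω0 then 1 else if h : ∃ q ∈ P, q • ω0 = η then h.choose else 1
  have hτ0 : τ ω0 = 1 := by simp [τ]
  have hτ : ∀ q ∈ P, τ (q • ω0) ∈ P ∧ τ (q • ω0) • ω0 = q • ω0 := by
    intro q hq
    by_cases h : q • ω0 = ω0
    · simp [h, hτ0, one_mem]
    · have h' : ∃ r ∈ P, r • ω0 = q • ω0 := ⟨q, hq, rfl⟩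
      have : τ (q • ω0) = h'.choose := by simp only [τ, if_neg h, dif_pos h']
      rw [this]
      exact h'.choose_spec
  let fext : HomK p ↥(V ⊓ P) → Q → ZMod p := fun f q => if h : q ∈ V ⊓ P then f.ev ⟨q, h⟩ else 0
  have fext_mul : ∀ f, ∀ q ∈ V ⊓ P, ∀ r ∈ V ⊓ P, fext f (q * r) = fext f q + fext f r := by
    intro f q hq r hr
    simp only [fext, dif_pos hq, dif_pos hr, dif_pos (mul_mem hq hr)]
    exact f.ev_mul ⟨q, hq⟩ ⟨r, hr⟩
  have fext_inv : ∀ f, ∀ q ∈ V ⊓ P, fext f q⁻¹ = - fext f q := by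
    intro f q hq
    simp only [fext, dif_pos hq, dif_pos (inv_mem hq)]
    exact f.ev_inv ⟨q, hq⟩
  let cf : HomK p ↥(V ⊓ P) → T × (Q ⧸ V) → ZMod p := fun f e =>
    fext f ((τ (γ e.1 • e.2))⁻¹ * γ e.1 * τ e.2)
  have hmem : ∀ g ∈ P, ∀ h ∈ P, (τ (g • h • ω0))⁻¹ * g * τ (h • ω0) ∈ V ⊓ P := by
    intro g hg h hh
    have h1 := hτ h hh
    have h2 := hτ (g * h) (mul_mem hg hh)
    rw [mul_smul] at h2
    refine Subgroup.mem_inf.2 ⟨?_, mul_mem (mul_mem (inv_mem h2.1) hg) h1.1⟩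
    rw [mul_assoc]
    apply (quot_smul_one_eq_iff' V _ _).1
    rw [mul_smul]
    change g • τ (h • ω0) • ω0 = _ • ω0
    rw [h1.2, h2.2]
  have hval : ∀ f, ∀ g : FreeGroup ι, ∀ h ∈ P, vF γ (cf f) (FreeGroup.map j g) (h • ω0) =
      fext f ((τ (FreeGroup.lift (γ ∘ j) g • h • ω0))⁻¹ * FreeGroup.lift (γ ∘ j) g * τ (h • ω0)) := by
    intro f g
    induction g using FreeGroup.induction_on with
    | C1 =>
      intro h hh
      rw [map_one, vF_one, map_one, one_smul, mul_one, inv_mul_cancel]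
      have := fext_mul f 1 (one_mem _) 1 (one_mem _)
      rw [mul_one] at this
      exact (by simpa using this : fext f 1 = 0).symm
    | of s =>
      intro h hh
      rw [FreeGroup.map.of, vF_of, FreeGroup.lift_apply_of]
      rfl
    | inv_of s hs =>
      intro h hh
      rw [map_inv, vF_inv, FreeGroup.map.of, vF_of, FreeGroup.lift_apply_of, map_inv,
        FreeGroup.lift_apply_of]
      have hsP : γ (j s) ∈ P := ⟨FreeGroup.of s, by simp⟩
      have h1 := hmem (γ (j s)) hsP ((γ (j s))⁻¹ * h) (mul_mem (inv_mem hsP) hh)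
      rw [mul_smul, smul_inv_smul] at h1
      simp only [cf]
      rw [← fext_inv f _ (by rw [smul_inv_smul]; exact h1), smul_inv_smul]
      congr 1
      simp [mul_assoc]
    | mul x y hx hy =>
      intro h hh
      have hyP : FreeGroup.lift (γ ∘ j) y ∈ P := ⟨y, rfl⟩
      rw [map_mul, vF_mul, hy h hh, hmapj, ← mul_smul, hx _ (mul_mem hyP hh), map_mul, add_comm,
        ← fext_mul f _ (hmem _ ⟨x, rfl⟩ _ (mul_mem hyP hh)) _ ?_]
      · congr 1
        simp only [mul_smul]
        group
      · rw [mul_smul]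
        exact hmem _ hyP _ hh
  let U := vset γ ω0 Δ
  let ext0 : (↥(U.erase ω0) → ZMod p) → (Q ⧸ V) → ZMod p := fun φ ω =>
    if h : ω ∈ U.erase ω0 then φ ⟨ω, h⟩ else 0
  let L : (HomK p ↥(V ⊓ P) × (↥(U.erase ω0) → ZMod p)) →ₗ[ZMod p] (Δ → ZMod p) :=
    { toFun := fun x e => cf x.1 e.1 + cob γ (ext0 x.2) e.1
      map_add' := by
        intro x y
        funext e
        have h1 : ∀ q, fext (x.1 + y.1) q = fext x.1 q + fext y.1 q := by
          intro q
          simp only [fext]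
          split_ifs
          · rfl
          · simp
        have h2 : ∀ ω, ext0 (x.2 + y.2) ω = ext0 x.2 ω + ext0 y.2 ω := by
          intro q
          simp only [ext0]
          split_ifs
          · rfl
          · simp
        simp only [Prod.fst_add, Prod.snd_add, Pi.add_apply, cf, cob, h1, h2]
        ring
      map_smul' := by
        intro r x
        funext e
        have h1 : ∀ q, fext (r • x.1) q = r * fext x.1 q := by
          intro q
          simp only [fext]
          split_ifs
          · rfl
          · simp
        have h2 : ∀ ω, ext0 (r • x.2) ω = r * ext0 x.2 ω := by
          intro q
          simp only [ext0]
          split_ifs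
          · rfl
          · simp
        simp only [Prod.smul_fst, Prod.smul_snd, Pi.smul_apply, cf, cob, h1, h2, RingHom.id_apply,
          smul_eq_mul]
        ring }
  have hL : Function.Injective L := by
    rw [injective_iff_map_eq_zero]
    rintro ⟨f, φ⟩ h0
    have hz : ∀ e ∈ Δ, (cf f + cob γ (ext0 φ)) e = 0 := fun e he => congrFun h0 ⟨e, he⟩
    have hf : f = 0 := by
      have hker : ∀ s (hs : s ∈ S), f.ev ⟨s, hSmem s hs⟩ = 0 := by
        intro s hs
        have h1 := vF_eq_zero γ (cf f + cob γ (ext0 φ)) (wd s) ω0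
          (fun e he => hz e ((hΔ e).2 ⟨s, hs, he⟩))
        have h2 : s • ω0 = ω0 := (quot_smul_one_eq_iff V s).2 (hSmem s hs).1
        rw [vF_add, vF_cob, hwd, hmapj, hgw s hs, h2, sub_self, add_zero] at h1
        have h3 := hval f (gw s) 1 (one_mem _)
        rw [one_smul, hgw s hs, h2, hτ0, h1] at h3
        simp only [inv_one, one_mul, mul_one, fext, dif_pos (hSmem s hs)] at h3
        exact h3.symm
      have h1 : V ⊓ P ≤ f.kerS.map (V ⊓ P).subtype := by
        have h2 : Subgroup.closure (S : Set Q) ≤ f.kerS.map (V ⊓ P).subtype := by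
          rw [Subgroup.closure_le]
          intro s hs
          exact ⟨⟨s, hSmem s hs⟩, hker s hs, rfl⟩
        intro v hv
        rw [← hS] at hv
        exact h2 hv
      apply HomK.ext'
      rintro ⟨v, hv⟩
      obtain ⟨v', hv', rfl⟩ := h1 hv
      exact hv'
    have hcf : cf f = 0 := by
      funext e
      simp only [cf, fext, hf]
      split_ifs <;> rfl
    rw [hcf, zero_add] at hz
    have h00 : ext0 φ ω0 = 0 := by simp [ext0]
    have hpath : ∀ s ∈ S, ∀ a w', wd s = a ++ w' → ext0 φ (pAct γ w' ω0) = 0 := by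
      intro s hs a w' hsa
      have h1 := vF_eq_zero γ (cob γ (ext0 φ)) w' ω0 (fun e he => hz e ((hΔ e).2 ⟨s, hs, by
        rw [mem_pe] at he ⊢
        obtain ⟨b, l, w'', rfl, rfl⟩ := he
        exact ⟨a ++ b, l, w'', by rw [hsa, List.append_assoc], rfl⟩⟩))
      rw [vF_cob, h00, sub_zero] at h1
      exact h1
    have hedge : ∀ e ∈ Δ, ext0 φ e.2 = 0 ∧ ext0 φ (γ e.1 • e.2) = 0 := by
      intro e he
      obtain ⟨s, hs, he⟩ := (hΔ e).1 he
      obtain ⟨a, l, w', h, rfl⟩ := (mem_pe _ _ _ _).1 he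
      have h1 := hpath s hs (a ++ [l]) w' (by rw [h]; simp)
      have h2 := hpath s hs a (l :: w') h
      rw [pAct_cons] at h2
      rcases edge_ends γ l (pAct γ w' ω0) with ⟨h3, h4⟩ | ⟨h3, h4⟩
      · rw [h4, h3]; exact ⟨h1, h2⟩
      · rw [h4, h3]; exact ⟨h2, h1⟩
    have hφ : φ = 0 := by
      funext ⟨ω, hω⟩
      have h1 : ext0 φ ω = φ ⟨ω, hω⟩ := dif_pos hω
      rw [← h1]
      have h2 := Finset.mem_of_mem_erase hω
      simp only [U, vset, Finset.mem_insert, Finset.mem_union, Finset.mem_image] at h2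
      rcases h2 with rfl | ⟨e, he, rfl⟩ | ⟨e, he, rfl⟩
      · exact h00
      · exact (hedge e he).1
      · exact (hedge e he).2
    rw [hf, hφ]
    rfl
  have hdim := LinearMap.finrank_le_finrank_of_injective hL
  rw [Module.finrank_prod, Module.finrank_fintype_fun_eq_card, Module.finrank_fintype_fun_eq_card,
    Fintype.card_coe, Fintype.card_coe, Finset.card_erase_of_mem (by simp [U, vset])] at hdim
  have : 0 < U.card := Finset.card_pos.2 ⟨ω0, by simp [U, vset]⟩
  change _ + U.card ≤ _
  omega
end Eside



theorem finrank_range_le_aux {K Z H C : Type*} [Field K] [AddCommGroup Z] [Module K Z]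
    [AddCommGroup H] [Module K H] [AddCommGroup C] [Module K C] [Module.Finite K H]
    [Module.Finite K C] (Φ : Z →ₗ[K] H) (ρ : Z →ₗ[K] C) :
    Module.finrank K (LinearMap.range ρ) ≤
      Module.finrank K H + Module.finrank K ((LinearMap.ker Φ).map ρ) := by
  let M := LinearMap.range (Φ.prod ρ)
  let π : M →ₗ[K] C := (LinearMap.snd K H C).comp M.subtype
  let σ : M →ₗ[K] H := (LinearMap.fst K H C).comp M.subtype
  have h1 : LinearMap.range ρ ≤ LinearMap.range π := by
    rintro _ ⟨z, rfl⟩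
    exact ⟨⟨(Φ z, ρ z), ⟨z, rfl⟩⟩, rfl⟩
  have h2 := Submodule.finrank_mono h1
  have h3 := LinearMap.finrank_range_le π
  have h4 := LinearMap.finrank_range_add_finrank_ker σ
  have h5 := Submodule.finrank_le (LinearMap.range σ)
  let κ : LinearMap.ker σ →ₗ[K] ((LinearMap.ker Φ).map ρ) :=
    (π.comp (LinearMap.ker σ).subtype).codRestrict _ (by
      rintro ⟨⟨⟨h, c⟩, ⟨z, hz⟩⟩, hm⟩
      have hz1 : Φ z = h := congrArg Prod.fst hz
      have hz2 : ρ z = c := congrArg Prod.snd hz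
      have hh : h = 0 := hm
      exact ⟨z, hz1.trans hh, hz2⟩)
  have hκ : Function.Injective κ := by
    rw [injective_iff_map_eq_zero]
    rintro ⟨⟨⟨h, c⟩, hM⟩, hm⟩ h0
    have hh : h = 0 := hm
    have hc : c = 0 := congrArg Subtype.val h0
    subst hh hc
    rfl
  have h6 := LinearMap.finrank_le_finrank_of_injective hκ
  omega

section Vside
variable {T Q : Type*} [Group Q] {p : ℕ} [Fact p.Prime] (γ : T → Q)

open Classical in
theorem V_bound (hsurj : Function.Surjective (FreeGroup.lift γ)) (R : FreeGroup T)
    (hker : (FreeGroup.lift γ).ker ≤ Subgroup.normalClosure {R})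
    (hR : FreeGroup.lift γ R = 1)
    (V : Subgroup Q) (hV : V.FG) (𝓔 : Finset (T × (Q ⧸ V))) {D' : Type*} [Fintype D']
    (σ : (𝓔 → ZMod p) →ₗ[ZMod p] (D' → ZMod p))
    (hext : ∀ c, σ c = 0 → ∃ c' : T × (Q ⧸ V) → ZMod p, (∀ ω, vF γ c' R ω = 0) ∧
      ∀ e : 𝓔, c' e = c e) :
    𝓔.card + 1 ≤ Module.finrank (ZMod p) (HomK p V) +
      (vset γ ((1 : Q) : Q ⧸ V) 𝓔).card + Fintype.card D' := by
  set ω0 : Q ⧸ V := ((1 : Q) : Q ⧸ V) with hω0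
  have hfin : Module.Finite (ZMod p) (HomK p V) := HomK.finite' hV
  let Z : Submodule (ZMod p) (T × (Q ⧸ V) → ZMod p) :=
    { carrier := {c | ∀ ω, vF γ c R ω = 0}
      add_mem' := by
        intro a b ha hb ω
        rw [vF_add, ha, hb, add_zero]
      zero_mem' := fun ω => (vL γ R ω).map_zero
      smul_mem' := by
        intro r c hc ω
        rw [vF_smul, hc, mul_zero] }
  have hZ : ∀ c ∈ Z, ∀ g h : FreeGroup T, FreeGroup.lift γ g = FreeGroup.lift γ h →
      ∀ ω, vF γ c g ω = vF γ c h ω := by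
    intro c hc g h hgh ω
    have h1 : Subgroup.normalClosure {R} ≤ (lam γ c).ker := by
      apply Subgroup.normalClosure_le_normal
      intro r hr
      rw [Set.mem_singleton_iff.1 hr]
      change lam γ c R = 1
      ext ⟨ω, t⟩ <;> rw [lam_apply, hR, hc ω] <;> simp
    have h2 : g * h⁻¹ ∈ (lam γ c).ker := by
      apply h1
      apply hker
      rw [MonoidHom.mem_ker, map_mul, map_inv, hgh, mul_inv_cancel]
    have h3 : lam γ c g = lam γ c h := by
      rw [MonoidHom.mem_ker, map_mul, map_inv] at h2
      exact mul_inv_eq_one.1 h2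
    unfold vF
    rw [h3]
  let lft : Q → FreeGroup T := Function.surjInv hsurj
  have hlft : ∀ q, FreeGroup.lift γ (lft q) = q := Function.surjInv_eq hsurj
  let Φ : Z →ₗ[ZMod p] HomK p V :=
    { toFun := fun c =>
        { toFun := fun v => vF γ c.1 (lft v.toMul.1) ω0
          map_zero' := by
            rw [hZ c.1 c.2 _ 1 (by rw [hlft, map_one]; rfl), vF_one]
          map_add' := by
            intro v w
            rw [hZ c.1 c.2 _ (lft v.toMul.1 * lft w.toMul.1) (by
              rw [hlft, map_mul, hlft, hlft]; rfl), vF_mul, hlft,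
              (quot_smul_one_eq_iff V w.toMul.1).2 w.toMul.2, add_comm] }
      map_add' := by
        intro c d
        ext v
        exact vF_add γ c.1 d.1 _ _
      map_smul' := by
        intro r c
        ext v
        exact vF_smul γ r c.1 _ _ }
  let ρ : Z →ₗ[ZMod p] (𝓔 → ZMod p) :=
    { toFun := fun c e => c.1 e.1
      map_add' := fun _ _ => rfl
      map_smul' := fun _ _ => rfl }
  let U := vset γ ω0 𝓔
  let ext0 : (↥(U.erase ω0) → ZMod p) → (Q ⧸ V) → ZMod p := fun φ ω =>
    if h : ω ∈ U.erase ω0 then φ ⟨ω, h⟩ else 0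
  let δ : (↥(U.erase ω0) → ZMod p) →ₗ[ZMod p] (𝓔 → ZMod p) :=
    { toFun := fun x e => cob γ (ext0 x) e.1
      map_add' := by
        intro x y
        funext e
        have h2 : ∀ ω, ext0 (x + y) ω = ext0 x ω + ext0 y ω := by
          intro q
          simp only [ext0]
          split_ifs
          · rfl
          · simp
        simp only [Pi.add_apply, cob, h2]
        ring
      map_smul' := by
        intro r x
        funext e
        have h2 : ∀ ω, ext0 (r • x) ω = r * ext0 x ω := by
          intro q
          simp only [ext0]
          split_ifs
          · rfl
          · simp
        simp only [Pi.smul_apply, cob, h2, RingHom.id_apply, smul_eq_mul]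
        ring }
  have hkerδ : (LinearMap.ker Φ).map ρ ≤ LinearMap.range δ := by
    rintro _ ⟨⟨c, hc⟩, hc0, rfl⟩
    have hv0 : ∀ v ∈ V, vF γ c (lft v) ω0 = 0 := fun v hv =>
      congrArg (fun f : HomK p V => f.ev ⟨v, hv⟩) (show Φ ⟨c, hc⟩ = 0 from hc0)
    have hwell : ∀ g h : FreeGroup T, FreeGroup.lift γ g • ω0 = FreeGroup.lift γ h • ω0 →
        vF γ c g ω0 = vF γ c h ω0 := by
      intro g h hgh
      have h1 := (quot_smul_one_eq_iff' V _ _).1 hgh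
      have h2 := hv0 _ h1
      rw [hZ c hc _ (h⁻¹ * g) (by rw [hlft, map_mul, map_inv]), vF_mul, vF_inv, hgh,
        inv_smul_smul] at h2
      exact add_neg_eq_zero.1 h2
    let φ : Q ⧸ V → ZMod p := fun ω => vF γ c (lft ω.out) ω0
    have hout : ∀ ω : Q ⧸ V, ω.out • ω0 = ω := by
      intro ω
      change ((ω.out * 1 : Q) : Q ⧸ V) = ω
      rw [mul_one]
      exact QuotientGroup.out_eq' ω
    have hφ0 : φ ω0 = 0 := by
      have := hwell (lft ω0.out) 1 (by rw [hlft, hout, map_one, one_smul])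
      rw [vF_one] at this
      exact this
    have hφ : ∀ e, c e = cob γ φ e := by
      rintro ⟨s, η⟩
      have h1 := hwell (lft (γ s • η).out) (FreeGroup.of s * lft η.out) (by
        rw [hlft, hout, map_mul, hlft, mul_smul, hout, FreeGroup.lift_apply_of])
      rw [vF_mul, hlft, hout, vF_of] at h1
      change c (s, η) = vF γ c (lft (γ s • η).out) ω0 - vF γ c (lft η.out) ω0
      rw [h1]
      ring
    refine ⟨fun ω => φ ω.1, ?_⟩
    have hext0 : ∀ ω ∈ U, ext0 (fun ω => φ ω.1) ω = φ ω := by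
      intro ω hω
      simp only [ext0]
      split_ifs with h
      · rfl
      · have : ω = ω0 := by
          by_contra h2
          exact h (Finset.mem_erase.2 ⟨h2, hω⟩)
        rw [this, hφ0]
    funext e
    change cob γ (ext0 (fun ω => φ ω.1)) e.1 = c e.1
    rw [hφ]
    simp only [cob]
    rw [hext0, hext0]
    · simp only [U, vset, Finset.mem_insert, Finset.mem_union, Finset.mem_image]
      exact Or.inr (Or.inl ⟨e.1, e.2, rfl⟩)
    · simp only [U, vset, Finset.mem_insert, Finset.mem_union, Finset.mem_image]
      exact Or.inr (Or.inr ⟨e.1, e.2, rfl⟩)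
  have hY : LinearMap.ker σ ≤ LinearMap.range ρ := by
    intro c hc
    obtain ⟨c', h1, h2⟩ := hext c hc
    exact ⟨⟨c', h1⟩, funext h2⟩
  have d1 := LinearMap.finrank_range_add_finrank_ker σ
  have d2 := Submodule.finrank_le (LinearMap.range σ)
  have d3 := Submodule.finrank_mono hY
  have d4 := finrank_range_le_aux Φ ρ
  have d5 := Submodule.finrank_mono hkerδ
  have d6 := LinearMap.finrank_range_le δ
  rw [Module.finrank_fintype_fun_eq_card] at d1 d2 d6
  rw [Fintype.card_coe] at d1 d6
  rw [Finset.card_erase_of_mem (by simp [U, vset])] at d6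
  have : 0 < U.card := Finset.card_pos.2 ⟨ω0, by simp [U, vset]⟩
  change _ ≤ _ + U.card + _
  omega
end Vside



section orbits
variable {Q Ω : Type*} [Group Q] [MulAction Q Ω]

open Classical in
/-- orbit of a torsion element as a finset -/
noncomputable def orb (n : ℕ) (y : Q) (ω : Ω) : Finset Ω :=
  (Finset.range n).image fun j => y ^ j • ω

theorem mem_orb {n : ℕ} (hn : 0 < n) {y : Q} (hy : y ^ n = 1) {ω ω' : Ω} :
    ω' ∈ orb n y ω ↔ ∃ j : ℕ, y ^ j • ω = ω' := by
  classical
  unfold orb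
  rw [Finset.mem_image]
  constructor
  · rintro ⟨j, -, h⟩
    exact ⟨j, h⟩
  · rintro ⟨j, h⟩
    refine ⟨j % n, Finset.mem_range.2 (Nat.mod_lt _ hn), ?_⟩
    rw [← h, pow_mod_of_pow_eq_one hy]
where
  pow_mod_of_pow_eq_one {n : ℕ} {y : Q} (hy : y ^ n = 1) {j : ℕ} : y ^ (j % n) = y ^ j := by
    conv_rhs => rw [← Nat.mod_add_div j n, pow_add, pow_mul, hy, one_pow, mul_one]

theorem self_mem_orb {n : ℕ} (hn : 0 < n) {y : Q} (hy : y ^ n = 1) (ω : Ω) : ω ∈ orb n y ω :=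
  (mem_orb hn hy).2 ⟨0, by simp⟩

theorem orb_eq {n : ℕ} (hn : 0 < n) {y : Q} (hy : y ^ n = 1) {ω ω' : Ω}
    (h : ω' ∈ orb n y ω) : orb n y ω' = orb n y ω := by
  obtain ⟨j, rfl⟩ := (mem_orb hn hy).1 h
  ext η
  rw [mem_orb hn hy, mem_orb hn hy]
  constructor
  · rintro ⟨i, rfl⟩
    exact ⟨i + j, by rw [pow_add, mul_smul]⟩
  · rintro ⟨i, rfl⟩
    refine ⟨i + (n - 1) * j, ?_⟩
    rw [← mul_smul, ← pow_add]
    have : i + (n - 1) * j + j = i + n * j := by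
      obtain ⟨m, rfl⟩ : ∃ m, n = m + 1 := ⟨n - 1, by omega⟩
      simp only [Nat.add_sub_cancel]
      ring
    rw [this, pow_add, pow_mul, hy, one_pow, mul_one]

theorem orb_fixed {n : ℕ} (hn : 0 < n) {y : Q} (hy : y ^ n = 1) {ω ω' : Ω}
    (h : ω' ∈ orb n y ω) (hf : y • ω ≠ ω) : y • ω' ≠ ω' := by
  obtain ⟨j, rfl⟩ := (mem_orb hn hy).1 h
  intro h2
  apply hf
  rw [← mul_smul, ← pow_succ', pow_succ, mul_smul] at h2
  exact smul_left_cancel _ h2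

theorem sum_orb {K : Type*} [CommRing K] {n : ℕ} (hn : 0 < n) {y : Q} (hy : y ^ n = 1) (f : Ω → K)
    (ω : Ω) : ∃ q : K, ∑ j ∈ Finset.range n, f (y ^ j • ω) = q * ∑ ω' ∈ orb n y ω, f ω' := by
  classical
  let d := Function.minimalPeriod (fun x : Ω => y • x) ω
  have hit : ∀ j, (fun x : Ω => y • x)^[j] ω = y ^ j • ω := by
    intro j
    rw [smul_iterate]
  have hper : Function.IsPeriodicPt (fun x : Ω => y • x) n ω := by
    change _ = _
    rw [hit, hy, one_smul]
  have hd0 : 0 < d := hper.minimalPeriod_pos hn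
  have hdy : y ^ d • ω = ω := by
    rw [← hit]
    exact Function.isPeriodicPt_minimalPeriod _ _
  obtain ⟨q, hq⟩ : d ∣ n := hper.minimalPeriod_dvd
  have h1 : ∑ ω' ∈ orb n y ω, f ω' = ∑ j ∈ Finset.range d, f (y ^ j • ω) := by
    have h2 : orb n y ω = (Finset.range d).image fun j => y ^ j • ω := by
      ext η
      rw [mem_orb hn hy, Finset.mem_image]
      constructor
      · rintro ⟨j, rfl⟩
        refine ⟨j % d, Finset.mem_range.2 (Nat.mod_lt _ hd0), ?_⟩
        rw [← hit, ← hit]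
        exact Function.iterate_mod_minimalPeriod_eq
      · rintro ⟨j, -, h⟩
        exact ⟨j, h⟩
    rw [h2, Finset.sum_image]
    intro a ha b hb hab
    simp only [← hit] at hab
    exact Function.iterate_injOn_Iio_minimalPeriod (by simpa [d] using ha) (by simpa [d] using hb) hab
  refine ⟨q, ?_⟩
  rw [h1, hq]
  clear hq
  induction q with
  | zero => simp
  | succ q ih =>
    rw [Nat.mul_succ, Finset.sum_range_add, ih, Nat.cast_succ, add_mul, one_mul]
    congr 1
    apply Finset.sum_congr rfl
    intro j _
    congr 1
    have hdq : y ^ (d * q) • ω = ω := by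
      clear ih
      induction q with
      | zero => simp
      | succ q ih => rw [Nat.mul_succ, pow_add, mul_smul, hdy, ih]
    rw [add_comm, pow_add, mul_smul, hdq]
end orbits

section powers
variable {T Q Ω K : Type*} [Group Q] [MulAction Q Ω] [CommRing K] (γ : T → Q)

theorem vF_pow (c : T × Ω → K) (g : FreeGroup T) (ω : Ω) (n : ℕ) :
    vF γ c (g ^ n) ω = ∑ j ∈ Finset.range n, vF γ c g (FreeGroup.lift γ g ^ j • ω) := by
  induction n with
  | zero => simp [vF_one]
  | succ n ih => rw [pow_succ', vF_mul, ih, Finset.sum_range_succ, map_pow]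
end powers



section halfedges
variable {T Q Ω : Type*} [Group Q] [MulAction Q Ω] (γ : T → Q)

/-- Counting half-edges. -/
theorem halfedge_count (𝓑 : Finset (T × Ω)) (D N : Finset Ω) (hDN : Disjoint D N)
    (l0 : T × Bool) (hD : ∀ ω ∈ D, edgeOf γ l0 ω ∈ 𝓑)
    (hN : ∀ v ∈ N, ∃ l1 l2, l1 ≠ l2 ∧ edgeOf γ l1 v ∈ 𝓑 ∧ edgeOf γ l2 v ∈ 𝓑) :
    D.card + 2 * N.card ≤ 2 * 𝓑.card := by
  classical
  let H : Finset ((T × Bool) × Ω) := 𝓑.image (fun e => ((e.1, true), e.2)) ∪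
    𝓑.image (fun e => ((e.1, false), γ e.1 • e.2))
  have hH : H.card ≤ 2 * 𝓑.card := by
    have h1 := Finset.card_union_le (𝓑.image (fun e => ((e.1, true), e.2)))
      (𝓑.image (fun e => ((e.1, false), γ e.1 • e.2)))
    have h2 := Finset.card_image_le (s := 𝓑) (f := fun e => ((e.1, true), e.2))
    have h3 := Finset.card_image_le (s := 𝓑) (f := fun e => ((e.1, false), γ e.1 • e.2))
    simp only [H]
    omega
  have hmem : ∀ l v, edgeOf γ l v ∈ 𝓑 → (l, v) ∈ H := by
    rintro ⟨s, b⟩ v h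
    simp only [H, Finset.mem_union, Finset.mem_image]
    cases b
    · right
      refine ⟨_, h, ?_⟩
      simp [edgeOf]
    · left
      refine ⟨_, h, ?_⟩
      simp [edgeOf]
  have hN' : ∀ v, ∃ l1 l2, v ∈ N → (l1 ≠ l2 ∧ edgeOf γ l1 v ∈ 𝓑 ∧ edgeOf γ l2 v ∈ 𝓑) := by
    intro v
    by_cases h : v ∈ N
    · obtain ⟨l1, l2, h⟩ := hN v h
      exact ⟨l1, l2, fun _ => h⟩
    · exact ⟨l0, l0, fun h' => absurd h' h⟩
  choose f1 f2 hf using hN'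
  let HD := D.image fun ω => (l0, ω)
  let H1 := N.image fun ω => (f1 ω, ω)
  let H2 := N.image fun ω => (f2 ω, ω)
  have cD : HD.card = D.card := Finset.card_image_of_injective _ fun a b h => congrArg Prod.snd h
  have c1 : H1.card = N.card := Finset.card_image_of_injective _ fun a b h => congrArg Prod.snd h
  have c2 : H2.card = N.card := Finset.card_image_of_injective _ fun a b h => congrArg Prod.snd h
  have d12 : Disjoint H1 H2 := by
    rw [Finset.disjoint_left]
    intro x h1 h2
    obtain ⟨v, hv, rfl⟩ := Finset.mem_image.1 h1
    obtain ⟨w, hw, h⟩ := Finset.mem_image.1 h2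
    obtain rfl : w = v := congrArg Prod.snd h
    exact (hf w hw).1 (congrArg Prod.fst h).symm
  have dD : Disjoint HD (H1 ∪ H2) := by
    rw [Finset.disjoint_left]
    intro x h1 h2
    obtain ⟨v, hv, rfl⟩ := Finset.mem_image.1 h1
    rw [Finset.disjoint_left] at hDN
    apply hDN hv
    rcases Finset.mem_union.1 h2 with h2 | h2
    all_goals
      obtain ⟨w, hw, h⟩ := Finset.mem_image.1 h2
      obtain rfl : w = v := congrArg Prod.snd h
      exact hw
  have hsub : HD ∪ (H1 ∪ H2) ⊆ H := by
    intro x hx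
    rcases Finset.mem_union.1 hx with h | h
    · obtain ⟨v, hv, rfl⟩ := Finset.mem_image.1 h
      exact hmem _ _ (hD v hv)
    rcases Finset.mem_union.1 h with h | h
    · obtain ⟨v, hv, rfl⟩ := Finset.mem_image.1 h
      exact hmem _ _ (hf v hv).2.1
    · obtain ⟨v, hv, rfl⟩ := Finset.mem_image.1 h
      exact hmem _ _ (hf v hv).2.2
  have h1 := Finset.card_le_card hsub
  rw [Finset.card_union_of_disjoint dD, Finset.card_union_of_disjoint d12] at h1
  omega
end halfedges

section claim
variable {ι β Q : Type*} [Group Q] {p : ℕ} [Fact p.Prime] (γ : ι ⊕ β → Q)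

open Classical in
theorem claim_main (hsurj : Function.Surjective (FreeGroup.lift γ)) (k n : ℕ) (hk : 1 ≤ k)
    (hn : 0 < n) (hp : p ∣ n) (r : ℕ → FreeGroup (ι ⊕ β))
    (hker : (FreeGroup.lift γ).ker ≤ Subgroup.normalClosure {r 0 ^ n})
    (hR : FreeGroup.lift γ (r 0 ^ n) = 1)
    (e : Fin k → ι) (he : Function.Injective e) (Bw : Fin k → List ((ι ⊕ β) × Bool))
    (hBne : ∀ i, Bw i ≠ [])
    (hBinr : ∀ i, ∀ l ∈ Bw i, ∃ b, l.1 = Sum.inr b)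
    (hBred : ∀ i a l1 l2 w, Bw i = a ++ l1 :: l2 :: w → l1 ≠ linv l2)
    (hrk : r k = 1)
    (hr : ∀ i : Fin k, r i = FreeGroup.of (Sum.inl (e i)) * FreeGroup.mk (Bw i) * r (i + 1))
    (V : Subgroup Q) (hV : V.FG)
    (hE : (V ⊓ (FreeGroup.lift (γ ∘ Sum.inl)).range).FG) :
    Module.finrank (ZMod p) (HomK p ↥(V ⊓ (FreeGroup.lift (γ ∘ Sum.inl)).range)) ≤
      Module.finrank (ZMod p) (HomK p V) := by
  obtain ⟨Δ, hΔ, hΔc⟩ := E_bound (p := p) γ Sum.inl V hE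
  set ω0 : Q ⧸ V := ((1 : Q) : Q ⧸ V) with hω0
  set y : Q := FreeGroup.lift γ (r 0) with hydef
  have hy : y ^ n = 1 := by rw [hydef, ← map_pow, hR]
  let lr : ℕ → Q := fun i => FreeGroup.lift γ (r i)
  let nn : Fin k → Q := fun i => FreeGroup.lift γ (FreeGroup.mk (Bw i)) * lr (i + 1)
  have hnn : ∀ i : Fin k, lr i = γ (Sum.inl (e i)) * nn i := by
    intro i
    simp only [lr, nn]
    rw [hr i, map_mul, map_mul, FreeGroup.lift_apply_of, mul_assoc]
  have hlrk : lr k = 1 := by simp [lr, hrk]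
  have hlr0 : lr 0 = y := rfl
  have hpA : ∀ i (ω : Q ⧸ V), pAct γ (Bw i) (lr (i + 1) • ω) = nn i • ω := by
    intro i ω
    simp only [pAct, nn, mul_smul]
  -- decomposition of the value of a cochain along the relator
  have hell : ∀ (c : (ι ⊕ β) × (Q ⧸ V) → ZMod p) (ω : Q ⧸ V), vF γ c (r 0) ω =
      ∑ i : Fin k, (c (Sum.inl (e i), nn i • ω) +
        vF γ c (FreeGroup.mk (Bw i)) (lr (i + 1) • ω)) := by
    intro c ω
    have h1 : ∀ i : Fin k, c (Sum.inl (e i), nn i • ω) +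
        vF γ c (FreeGroup.mk (Bw i)) (lr (i + 1) • ω) =
        (fun j : ℕ => vF γ c (r j) ω - vF γ c (r (j + 1)) ω) i := by
      intro i
      simp only
      rw [hr i, mul_assoc, vF_mul, vF_mul, vF_of, map_mul]
      simp only [nn, lr]
      ring
    rw [Finset.sum_congr rfl fun i _ => h1 i, Fin.sum_univ_eq_sum_range (fun j : ℕ => vF γ c (r j) ω - vF γ c (r (j + 1)) ω) k, Finset.sum_range_sub',
      hrk, vF_one, sub_zero]
  let U := vset γ ω0 Δ
  let good : Finset (Q ⧸ V) → Prop := fun O => ∀ ω' ∈ O, ∀ i, (Sum.inl (e i), nn i • ω') ∈ Δ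
  let i0 : Fin k := ⟨0, hk⟩
  let D : Finset (Q ⧸ V) := (Δ.image fun x => (nn i0)⁻¹ • x.2).filter fun ω =>
    y • ω ≠ ω ∧ good (orb n y ω)
  have hD : ∀ ω, ω ∈ D ↔ y • ω ≠ ω ∧ good (orb n y ω) := by
    intro ω
    simp only [D, Finset.mem_filter, Finset.mem_image]
    constructor
    · exact fun h => h.2
    · intro h
      exact ⟨⟨_, h.2 ω (self_mem_orb hn hy ω) i0, inv_smul_smul _ _⟩, h⟩
  have hDorb : ∀ ω ∈ D, ∀ ω' ∈ orb n y ω, ω' ∈ D := by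
    intro ω hω ω' hω'
    rw [hD] at hω ⊢
    rw [orb_eq hn hy hω']
    exact ⟨orb_fixed hn hy hω' hω.1, hω.2⟩
  have hDΔ : ∀ ω ∈ D, ∀ i, (Sum.inl (e i), nn i • ω) ∈ Δ := fun ω hω =>
    ((hD ω).1 hω).2 ω (self_mem_orb hn hy ω)
  have hyorb : ∀ ω : Q ⧸ V, y • ω ∈ orb n y ω := fun ω => (mem_orb hn hy).2 ⟨1, by simp⟩
  have hyorb' : ∀ ω : Q ⧸ V, y⁻¹ • ω ∈ orb n y ω := fun ω => (mem_orb hn hy).2 ⟨n - 1, by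
    congr 1
    apply eq_inv_of_mul_eq_one_left
    rw [← pow_succ, Nat.sub_add_cancel hn, hy]⟩
  -- vertices in `U`
  have hU1 : ∀ ω ∈ D, ∀ i, nn i • ω ∈ U := by
    intro ω hω i
    simp only [U, vset, Finset.mem_insert, Finset.mem_union, Finset.mem_image]
    exact Or.inr (Or.inl ⟨_, hDΔ ω hω i, rfl⟩)
  have hU2 : ∀ ω ∈ D, ∀ i : Fin k, lr i • ω ∈ U := by
    intro ω hω i
    simp only [U, vset, Finset.mem_insert, Finset.mem_union, Finset.mem_image]
    exact Or.inr (Or.inr ⟨_, hDΔ ω hω i, by rw [hnn]; exact (mul_smul _ _ _).symm⟩)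
  have hU3 : ∀ ω ∈ D, ω ∈ U := by
    intro ω hω
    have := hU2 _ (hDorb ω hω _ (hyorb' ω)) i0
    change lr 0 • y⁻¹ • ω ∈ U at this
    rwa [hlr0, smul_inv_smul] at this
  have hU4 : ∀ ω ∈ D, ∀ i : Fin k, lr (i + 1) • ω ∈ U := by
    intro ω hω i
    by_cases h : (i : ℕ) + 1 < k
    · exact hU2 ω hω ⟨i + 1, h⟩
    · have : (i : ℕ) + 1 = k := by omega
      rw [this, hlrk, one_smul]
      exact hU3 ω hω
  let 𝓑 : Finset ((ι ⊕ β) × (Q ⧸ V)) := D.biUnion fun ω => Finset.univ.biUnion fun i : Fin k =>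
    (pe γ (Bw i) (lr (i + 1) • ω)).toFinset
  have h𝓑 : ∀ x, x ∈ 𝓑 ↔ ∃ ω ∈ D, ∃ i, ∃ a l w', Bw i = a ++ l :: w' ∧
      x = edgeOf γ l (pAct γ w' (lr (i + 1) • ω)) := by
    intro x
    simp only [𝓑, Finset.mem_biUnion, List.mem_toFinset, mem_pe, Finset.mem_univ, true_and]
  have h𝓑inr : ∀ x ∈ 𝓑, ∃ b, x.1 = Sum.inr b := by
    intro x hx
    obtain ⟨ω, hω, i, a, l, w', h1, rfl⟩ := (h𝓑 x).1 hx
    obtain ⟨b, hb⟩ := hBinr i l (by rw [h1]; simp)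
    refine ⟨b, ?_⟩
    rw [← hb]
    unfold edgeOf
    split_ifs <;> rfl
  have hdisj : Disjoint Δ 𝓑 := by
    rw [Finset.disjoint_left]
    intro x h1 h2
    obtain ⟨b, hb⟩ := h𝓑inr x h2
    obtain ⟨a, ha⟩ := hΔ x h1
    rw [← ha] at hb
    cases hb
  let 𝓔 := Δ ∪ 𝓑
  have h𝓔c : 𝓔.card = Δ.card + 𝓑.card := Finset.card_union_of_disjoint hdisj
  let Ut := vset γ ω0 𝓔
  -- half-edge count
  have hhalf : D.card + 2 * (Ut \ U).card ≤ 2 * 𝓑.card := by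
    let il : Fin k := ⟨k - 1, by omega⟩
    apply halfedge_count γ 𝓑 D (Ut \ U) _ ((Bw il).getLast (hBne il))
    · intro ω hω
      rw [h𝓑]
      refine ⟨ω, hω, il, (Bw il).dropLast, _, [], (List.dropLast_append_getLast (hBne il)).symm, ?_⟩
      rw [pAct_nil]
      have : (il : ℕ) + 1 = k := by simp only [il]; omega
      rw [this, hlrk, one_smul]
    · intro v hv
      obtain ⟨hv1, hv2⟩ := Finset.mem_sdiff.1 hv
      have key : ∃ ω ∈ D, ∃ i, ∃ a w', Bw i = a ++ w' ∧ v = pAct γ w' (lr (i + 1) • ω) := by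
        have h3 : (∃ x ∈ 𝓑, x.2 = v ∨ γ x.1 • x.2 = v) := by
          by_contra hcon
          push Not at hcon
          simp only [Ut, U, 𝓔, vset, Finset.mem_insert, Finset.mem_union, Finset.mem_image] at hv1 hv2
          push Not at hv2
          rcases hv1 with h | ⟨x, h | h, hx⟩ | ⟨x, h | h, hx⟩
          · exact hv2.1 h
          · exact hv2.2.1 x h hx
          · exact (hcon x h).1 hx
          · exact hv2.2.2 x h hx
          · exact (hcon x h).2 hx
        obtain ⟨x, hx, hxv⟩ := h3
        obtain ⟨ω, hω, i, a, l, w', h1, rfl⟩ := (h𝓑 x).1 hx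
        have hcase : v = pAct γ w' (lr (i + 1) • ω) ∨ v = pAct γ (l :: w') (lr (i + 1) • ω) := by
          rw [pAct_cons]
          rcases edge_ends γ l (pAct γ w' (lr (i + 1) • ω)) with ⟨h2, h3⟩ | ⟨h2, h3⟩
          · rw [h3, h2] at hxv
            exact hxv.imp Eq.symm Eq.symm
          · rw [h3, h2] at hxv
            exact hxv.symm.imp Eq.symm Eq.symm
        rcases hcase with h | h
        · exact ⟨ω, hω, i, a ++ [l], w', by simp [h1], h⟩
        · exact ⟨ω, hω, i, a, l :: w', h1, h⟩
      obtain ⟨ω, hω, i, a, w', h1, rfl⟩ := key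
      rcases List.eq_nil_or_concat a with rfl | ⟨a, l1, rfl⟩
      · exfalso
        apply hv2
        rw [List.nil_append] at h1
        rw [← h1, hpA]
        exact hU1 ω hω i
      cases w' with
      | nil =>
        exfalso
        apply hv2
        rw [pAct_nil]
        exact hU4 ω hω i
      | cons l2 w =>
        have h1' : Bw i = a ++ l1 :: l2 :: w := by simp [h1]
        refine ⟨l1, linv l2, hBred i a l1 l2 w h1', ?_, ?_⟩
        · rw [h𝓑]
          exact ⟨ω, hω, i, a, l1, l2 :: w, h1', rfl⟩
        · rw [h𝓑]
          refine ⟨ω, hω, i, a ++ [l1], l2, w, by simp [h1'], ?_⟩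
          rw [pAct_cons, edgeOf_linv]
    · rw [Finset.disjoint_left]
      intro ω h1 h2
      exact (Finset.mem_sdiff.1 h2).2 (hU3 ω h1)
  have hUsub : U ⊆ Ut := by
    intro v hv
    simp only [Ut, U, 𝓔, vset, Finset.mem_insert, Finset.mem_union, Finset.mem_image] at hv ⊢
    rcases hv with h | ⟨x, h, hx⟩ | ⟨x, h, hx⟩
    · exact Or.inl h
    · exact Or.inr (Or.inl ⟨x, Or.inl h, hx⟩)
    · exact Or.inr (Or.inr ⟨x, Or.inl h, hx⟩)
  have hUc : (Ut \ U).card + U.card = Ut.card := Finset.card_sdiff_add_card_eq_card hUsub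
  -- orbit representatives
  let pick : Finset (Q ⧸ V) → Q ⧸ V := fun O => if h : O.Nonempty then h.choose else ω0
  have hpick : ∀ O : Finset (Q ⧸ V), O.Nonempty → pick O ∈ O := by
    intro O h
    simp only [pick, dif_pos h]
    exact h.choose_spec
  have hpo : ∀ ω, pick (orb n y ω) ∈ orb n y ω := fun ω => hpick _ ⟨ω, self_mem_orb hn hy ω⟩
  let D' : Finset (Q ⧸ V) := D.filter fun ω => pick (orb n y ω) = ω
  have hD'c : 2 * D'.card ≤ D.card := by
    have h1 : Disjoint D' (D'.image fun ω => y • ω) := by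
      rw [Finset.disjoint_left]
      intro x h1 h2
      obtain ⟨z, hz, rfl⟩ := Finset.mem_image.1 h2
      have h3 := (Finset.mem_filter.1 h1).2
      have h4 := (Finset.mem_filter.1 hz).2
      rw [orb_eq hn hy (hyorb z), h4] at h3
      exact ((hD z).1 (Finset.mem_filter.1 hz).1).1 h3.symm
    have h2 : D' ∪ (D'.image fun ω => y • ω) ⊆ D := by
      intro x hx
      rcases Finset.mem_union.1 hx with h | h
      · exact (Finset.mem_filter.1 h).1
      · obtain ⟨z, hz, rfl⟩ := Finset.mem_image.1 h
        exact hDorb z (Finset.mem_filter.1 hz).1 _ (hyorb z)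
    have h3 := Finset.card_le_card h2
    rw [Finset.card_union_of_disjoint h1, Finset.card_image_of_injective _ (MulAction.injective y)] at h3
    omega
  -- the linear conditions
  let SL : Q ⧸ V → ((ι ⊕ β) × (Q ⧸ V) → ZMod p) →ₗ[ZMod p] ZMod p := fun ω =>
    ∑ ω' ∈ orb n y ω, vL γ (r 0) ω'
  have hSL : ∀ ω c, SL ω c = ∑ ω' ∈ orb n y ω, vF γ c (r 0) ω' := by
    intro ω c
    simp only [SL, LinearMap.sum_apply]
    rfl
  let ex : (𝓔 → ZMod p) →ₗ[ZMod p] ((ι ⊕ β) × (Q ⧸ V) → ZMod p) :=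
    Function.ExtendByZero.linearMap (ZMod p) (Subtype.val : 𝓔 → _)
  have hex : ∀ c (x : 𝓔), ex c x = c x := by
    intro c x
    exact Subtype.val_injective.extend_apply _ _ _
  let σ : (𝓔 → ZMod p) →ₗ[ZMod p] (D' → ZMod p) :=
    LinearMap.pi fun ω : D' => (SL ω.1).comp ex
  have hext : ∀ c, σ c = 0 → ∃ c' : (ι ⊕ β) × (Q ⧸ V) → ZMod p,
      (∀ ω, vF γ c' (r 0 ^ n) ω = 0) ∧ ∀ x : 𝓔, c' x = c x := by
    intro c hc
    have hch : ∀ O : Finset (Q ⧸ V), ∃ z : (Q ⧸ V) × Fin k, ¬ good O →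
        z.1 ∈ O ∧ (Sum.inl (e z.2), nn z.2 • z.1) ∉ Δ := by
      intro O
      by_cases h : good O
      · exact ⟨(ω0, i0), fun h' => absurd h h'⟩
      · have h' := h
        simp only [good] at h'
        push Not at h'
        obtain ⟨ω', h1, i, h2⟩ := h'
        exact ⟨(ω', i), fun _ => ⟨h1, h2⟩⟩
    choose ch hch using hch
    let g : Fin k → Q ⧸ V → ZMod p := fun i ω =>
      if ¬ good (orb n y ω) ∧ ch (orb n y ω) = (ω, i) then SL ω (ex c) else 0
    let corr : (ι ⊕ β) × (Q ⧸ V) → ZMod p := fun x =>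
      Sum.elim (fun a => ∑ i, if a = e i then g i ((nn i)⁻¹ • x.2) else 0) (fun _ => 0) x.1
    have hcorr : ∀ i ω, corr (Sum.inl (e i), nn i • ω) = g i ω := by
      intro i ω
      simp only [corr, Sum.elim_inl, he.eq_iff]
      rw [Finset.sum_ite_eq, if_pos (Finset.mem_univ _), inv_smul_smul]
    have hcorrΔ : ∀ x ∈ 𝓔, corr x = 0 := by
      intro x hx
      rcases Finset.mem_union.1 hx with h | h
      · obtain ⟨a, ha⟩ := hΔ x h
        obtain ⟨s, η⟩ := x
        simp only at ha
        subst ha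
        simp only [corr, Sum.elim_inl]
        apply Finset.sum_eq_zero
        intro i _
        split_ifs with hai
        · subst hai
          simp only [g]
          split_ifs with h2
          · exfalso
            have h3 := (hch _ h2.1).2
            rw [h2.2] at h3
            simp only [smul_inv_smul] at h3
            exact h3 h
          · rfl
        · rfl
      · obtain ⟨b, hb⟩ := h𝓑inr x h
        simp only [corr, hb, Sum.elim_inr]
    have hlc : ∀ ω, vF γ corr (r 0) ω = ∑ i, g i ω := by
      intro ω
      rw [hell]
      apply Finset.sum_congr rfl
      intro i _
      rw [hcorr, vF_eq_zero, add_zero]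
      intro x hx
      obtain ⟨a, l, w', h1, rfl⟩ := (mem_pe _ _ _ _).1 hx
      obtain ⟨b, hb⟩ := hBinr i l (by rw [h1]; simp)
      have : (edgeOf γ l (pAct γ w' (lr (i + 1) • ω))).1 = Sum.inr b := by
        rw [← hb]
        unfold edgeOf
        split_ifs <;> rfl
      simp only [corr, this, Sum.elim_inr]
    have hSorb : ∀ ω, ∀ ω' ∈ orb n y ω, SL ω' = SL ω := by
      intro ω ω' h
      simp only [SL, orb_eq hn hy h]
    have hzero : ∀ ω, y • ω ≠ ω → SL ω (ex c - corr) = 0 := by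
      intro ω hω
      rw [map_sub, hSL ω corr, Finset.sum_congr rfl fun ω' _ => hlc ω']
      by_cases hg : good (orb n y ω)
      · have h1 : SL ω (ex c) = 0 := by
          rw [← hSorb ω _ (hpo ω)]
          have hωD : ω ∈ D := (hD ω).2 ⟨hω, hg⟩
          have hm : pick (orb n y ω) ∈ D' := Finset.mem_filter.2
            ⟨hDorb ω hωD _ (hpo ω), by rw [orb_eq hn hy (hpo ω)]⟩
          exact congrFun hc ⟨_, hm⟩
        rw [h1, zero_sub, neg_eq_zero]
        apply Finset.sum_eq_zero
        intro ω' hω'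
        apply Finset.sum_eq_zero
        intro i _
        simp only [g, orb_eq hn hy hω']
        rw [if_neg]
        exact fun h => h.1 hg
      · obtain ⟨h1, h2⟩ := hch _ hg
        rw [sub_eq_zero]
        symm
        rw [Finset.sum_eq_single_of_mem _ h1, Finset.sum_eq_single (ch (orb n y ω)).2]
        · simp only [g, orb_eq hn hy h1]
          rw [if_pos ⟨hg, trivial⟩, hSorb ω _ h1]
        · intro i _ hi
          simp only [g, orb_eq hn hy h1]
          rw [if_neg]
          rintro ⟨-, h3⟩
          exact hi (congrArg Prod.snd h3).symm
        · exact fun h => absurd (Finset.mem_univ _) h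
        · intro ω' hω' hne
          apply Finset.sum_eq_zero
          intro i _
          simp only [g, orb_eq hn hy hω']
          rw [if_neg]
          rintro ⟨-, h3⟩
          exact hne (congrArg Prod.fst h3).symm
    refine ⟨ex c - corr, ?_, ?_⟩
    · intro ω
      rw [vF_pow]
      change ∑ j ∈ Finset.range n, vF γ (ex c - corr) (r 0) (y ^ j • ω) = 0
      by_cases hω : y • ω = ω
      · have h1 : ∀ j : ℕ, y ^ j • ω = ω := by
          intro j
          induction j with
          | zero => simp
          | succ j ih => rw [pow_succ, mul_smul, hω, ih]
        simp only [h1, Finset.sum_const, Finset.card_range, nsmul_eq_mul]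
        rw [(ZMod.natCast_eq_zero_iff n p).2 hp, zero_mul]
      · obtain ⟨q, hq⟩ := sum_orb hn hy (fun ω => vF γ (ex c - corr) (r 0) ω) ω
        rw [hq, ← hSL, hzero ω hω, mul_zero]
    · intro x
      rw [Pi.sub_apply, hex, hcorrΔ _ x.2, sub_zero]
  have hVb := V_bound (p := p) γ hsurj (r 0 ^ n) hker hR V hV 𝓔 σ hext
  rw [Fintype.card_coe] at hVb
  change _ ≤ _ + Ut.card + _ at hVb
  change _ + U.card ≤ _ at hΔc
  omega
end claim




theorem or_free_inj' {T : Type u} (t0 : T) (n : ℕ) (u : FreeGroup {s : T // s ≠ t0})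
    (hn : 2 ≤ n) {ι : Type u} [Finite ι] (f : ι → T) (hf : Function.Injective f) (x0 : ι)
    (h0 : f x0 = t0) (hu : FreeGroup.map Subtype.val u ∉ (FreeGroup.map f).range) :
    Function.Injective (FreeGroup.lift (fun i => (PresentedGroup.of (f i) : orQ t0 n u))) := by
  obtain ⟨N, ⟨eq⟩⟩ := Finite.exists_equiv_fin ι
  have h := or_free_inj t0 n u hn (f ∘ eq.symm) (hf.comp eq.symm.injective) (eq x0) (by simp [h0])
    (by
      rintro ⟨g, hg⟩
      apply hu
      refine ⟨FreeGroup.map eq.symm g, ?_⟩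
      rw [← hg, FreeGroup.map.comp])
  have h2 : (FreeGroup.lift (fun i => (PresentedGroup.of (f i) : orQ t0 n u))) =
      (FreeGroup.lift (fun i => (PresentedGroup.of ((f ∘ eq.symm) i) : orQ t0 n u))).comp
        (FreeGroup.freeGroupCongr eq).toMonoidHom := by
    apply FreeGroup.ext_hom
    intro i
    simp
  rw [h2]
  exact h.comp (FreeGroup.freeGroupCongr eq).injective

open Monoid in
theorem free_extend_inj {κ α J : Type u} (φ : FreeGroup κ →* FreeGroup α)
    (hφ : Function.Injective φ) :
    Function.Injective (FreeGroup.lift (Sum.elim (fun i => FreeGroup.map Sum.inl (φ (FreeGroup.of i)))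
      (fun j => FreeGroup.of (Sum.inr j))) : FreeGroup (κ ⊕ J) →* FreeGroup (α ⊕ J)) := by
  let G' := TwoFam (FreeGroup κ) (FreeGroup J)
  let G := TwoFam (FreeGroup α) (FreeGroup J)
  let b' : ∀ i, PUnit.{u+1} →* G' i := fun i => 1
  let b : ∀ i, PUnit.{u+1} →* G i := fun i => 1
  let f : ∀ i, G' i →* G i := fun i => match i with
    | true => φ
    | false => MonoidHom.id _
  have hf : ∀ i, Function.Injective (f i) := by
    rintro (_ | _)
    · exact Function.injective_id
    · exact hφ
  let Φ : PushoutI b' →* PushoutI b := PushoutI.lift (fun i => (PushoutI.of i).comp (f i)) 1 (by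
    intro i
    ext
    simp [b'])
  have hΦ : ∀ i x, Φ (PushoutI.of i x) = PushoutI.of i (f i x) := by
    intro i x
    exact PushoutI.lift_of _ _ _ _
  have hinj : Function.Injective Φ := by
    refine pushout_map_eq_one (fun i => Function.injective_of_subsingleton _)
      (fun i => Function.injective_of_subsingleton _) f (MonoidHom.id _) hf Function.injective_id ?_ Φ
      hΦ ?_
    · rintro i x ⟨z, hz⟩
      refine ⟨1, ?_⟩
      rw [map_one]
      apply hf i
      rw [map_one, ← hz]
      simp [b]
    · intro x
      rw [Subsingleton.elim x 1, map_one, map_one, map_one]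
  let θ' : FreeGroup (κ ⊕ J) →* PushoutI b' := FreeGroup.lift (Sum.elim
    (fun i => PushoutI.of (φ := b') true (FreeGroup.of i : FreeGroup κ))
    (fun i => PushoutI.of (φ := b') false (FreeGroup.of i : FreeGroup J)))
  let θ : FreeGroup (α ⊕ J) →* PushoutI b := FreeGroup.lift (Sum.elim
    (fun i => PushoutI.of (φ := b) true (FreeGroup.of i : FreeGroup α))
    (fun i => PushoutI.of (φ := b) false (FreeGroup.of i : FreeGroup J)))
  let fam : ∀ i, G' i →* FreeGroup (κ ⊕ J) := fun i => match i with
    | true => FreeGroup.map Sum.inl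
    | false => FreeGroup.map Sum.inr
  let ψ : PushoutI b' →* FreeGroup (κ ⊕ J) := PushoutI.lift fam 1 (by
    intro i
    ext
    simp [b'])
  have hψ : ∀ i x, ψ (PushoutI.of i x) = fam i x := by
    intro i x
    exact PushoutI.lift_of _ _ _ _
  have hθ' : Function.Injective θ' := by
    have h1 : ψ.comp θ' = MonoidHom.id _ := by
      apply FreeGroup.ext_hom
      rintro (i | i)
      · simp only [θ', MonoidHom.comp_apply, FreeGroup.lift_apply_of, Sum.elim_inl]
        exact (hψ true (FreeGroup.of i : FreeGroup κ)).trans (FreeGroup.map.of)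
      · simp only [θ', MonoidHom.comp_apply, FreeGroup.lift_apply_of, Sum.elim_inr]
        exact (hψ false (FreeGroup.of i : FreeGroup J)).trans (FreeGroup.map.of)
    intro x y hxy
    have := congrArg ψ hxy
    rw [← MonoidHom.comp_apply, ← MonoidHom.comp_apply, h1] at this
    exact this
  have hθin : θ.comp (FreeGroup.map Sum.inl) = PushoutI.of (φ := b) true := by
    apply FreeGroup.ext_hom
    intro a
    simp only [θ, MonoidHom.comp_apply, FreeGroup.map.of, FreeGroup.lift_apply_of, Sum.elim_inl]
    rfl
  have hcomm : Φ.comp θ' = θ.comp (FreeGroup.lift (Sum.elim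
      (fun i => FreeGroup.map Sum.inl (φ (FreeGroup.of i))) (fun j => FreeGroup.of (Sum.inr j)))) := by
    apply FreeGroup.ext_hom
    rintro (i | i)
    · simp only [MonoidHom.comp_apply, FreeGroup.lift_apply_of, Sum.elim_inl]
      rw [← MonoidHom.comp_apply θ, hθin]
      simp only [θ', FreeGroup.lift_apply_of, Sum.elim_inl]
      exact hΦ true (FreeGroup.of i : FreeGroup κ)
    · simp only [MonoidHom.comp_apply, FreeGroup.lift_apply_of, Sum.elim_inr, θ', θ]
      exact hΦ false (FreeGroup.of i : FreeGroup J)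
  have h3 : Function.Injective (Φ.comp θ') := hinj.comp hθ'
  rw [hcomm] at h3
  exact Function.Injective.of_comp h3

theorem HomK.finrank_congr {p : ℕ} [Fact p.Prime] {V W : Type*} [Group V] [Group W] (e : V ≃* W) :
    Module.finrank (ZMod p) (HomK p V) = Module.finrank (ZMod p) (HomK p W) := by
  apply LinearEquiv.finrank_eq
  refine LinearEquiv.ofLinearMap (HomK.res e.symm.toMonoidHom) (HomK.res e.toMonoidHom) ?_ ?_
  · apply LinearMap.ext
    intro f
    apply HomK.ext'
    intro v
    simp [HomK.res_ev]
  · apply LinearMap.ext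
    intro f
    apply HomK.ext'
    intro v
    simp [HomK.res_ev]




theorem mk_flatten_prod {S κ : Type*} (L : List κ) (f : κ → List (S × Bool)) :
    FreeGroup.mk (L.map f).flatten = (L.map fun i => FreeGroup.mk (f i)).prod := by
  induction L with
  | nil => simp [FreeGroup.one_eq_mk]
  | cons a L ih => rw [List.map_cons, List.flatten_cons, mk_append, ih, List.map_cons, List.prod_cons]

theorem mk_mem_range_val {S : Type*} (t0 : S) (w : List (S × Bool)) (h : ∀ l ∈ w, l.1 ≠ t0) :
    ∃ u : FreeGroup {s : S // s ≠ t0}, FreeGroup.map Subtype.val u = FreeGroup.mk w := by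
  induction w with
  | nil => exact ⟨1, by simp [FreeGroup.one_eq_mk]⟩
  | cons l w ih =>
    obtain ⟨u, hu⟩ := ih fun l hl => h l (List.mem_cons_of_mem _ hl)
    refine ⟨FreeGroup.mk [(⟨l.1, h l List.mem_cons_self⟩, l.2)] * u, ?_⟩
    rw [map_mul, hu, FreeGroup.map.mk, FreeGroup.mul_mk]
    rfl

theorem mk_not_mem_range_inl {ι β : Type*} (w : List ((ι ⊕ β) × Bool)) (hw : FreeGroup.IsReduced w)
    (b : β) (x : Bool) (hb : (Sum.inr b, x) ∈ w) :
    FreeGroup.mk w ∉ (FreeGroup.map (Sum.inl : ι → ι ⊕ β)).range := by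
  rintro ⟨g, hg⟩
  obtain ⟨L, rfl⟩ := Quot.exists_rep g
  change FreeGroup.map Sum.inl (FreeGroup.mk L) = _ at hg
  rw [FreeGroup.map.mk] at hg
  obtain ⟨c, h1, h2⟩ := FreeGroup.Red.exact.1 hg
  rw [hw.red_iff_eq] at h2
  subst h2
  have h3 := h1.sublist.subset hb
  rw [List.mem_map] at h3
  obtain ⟨q, -, hq⟩ := h3
  cases congrArg Prod.fst hq

/-- Blocks of the new relator. -/
def blk {ι β : Type*} {k : ℕ} (e : Fin k → ι) (B : Fin k → List (β × Bool)) (i : Fin k) :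
    List ((ι ⊕ β) × Bool) := (Sum.inl (e i), true) :: embedWord Sum.inr (B i)

theorem embed_isReduced {ι β : Type*} (w : List (β × Bool)) (hw : WordReduced w) :
    FreeGroup.IsReduced (embedWord (Sum.inr : β → ι ⊕ β) w) := by
  unfold embedWord FreeGroup.IsReduced
  rw [List.isChain_map]
  refine List.IsChain.imp ?_ (show List.IsChain _ w from hw)
  intro a b h h2
  by_contra h3
  apply h
  refine ⟨Sum.inr_injective h2, ?_⟩
  revert h3
  cases a.2 <;> cases b.2 <;> simp

theorem blk_flatten_isReduced {ι β : Type*} {k : ℕ} (e : Fin k → ι) (B : Fin k → List (β × Bool))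
    (hB : ∀ i, B i ≠ []) (hBred : ∀ i, WordReduced (B i)) (L : List (Fin k)) :
    FreeGroup.IsReduced (L.map (blk e B)).flatten := by
  have hhead : ∀ L : List (Fin k), ∀ x ∈ (L.map (blk e B)).flatten.head?, ∃ a, x.1 = Sum.inl a := by
    intro L x hx
    cases L with
    | nil => simp at hx
    | cons i L =>
      simp only [blk, List.map_cons, List.flatten_cons, List.cons_append, List.head?_cons,
        Option.mem_def, Option.some.injEq] at hx
      exact ⟨e i, by rw [← hx]⟩
  induction L with
  | nil => simp
  | cons i L ih =>
    rw [List.map_cons, List.flatten_cons]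
    have h1 : FreeGroup.IsReduced (blk e B i) := by
      unfold blk FreeGroup.IsReduced
      rw [List.isChain_cons]
      refine ⟨?_, embed_isReduced _ (hBred i)⟩
      intro y hy h
      exfalso
      have hy2 := List.mem_of_mem_head? hy
      unfold embedWord at hy2
      obtain ⟨q, -, rfl⟩ := List.mem_map.1 hy2
      cases h
    unfold FreeGroup.IsReduced
    rw [List.isChain_append]
    refine ⟨h1, ih, ?_⟩
    intro x hx z hz h
    exfalso
    obtain ⟨a, ha⟩ := hhead L z hz
    have hne : embedWord (Sum.inr : β → ι ⊕ β) (B i) ≠ [] := by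
      unfold embedWord
      simpa using hB i
    unfold blk at hx
    rw [List.getLast?_cons, Option.mem_def, List.getLast?_eq_some_getLast hne] at hx
    simp only [Option.getD_some, Option.some.injEq] at hx
    have h4 := List.getLast_mem hne
    rw [hx] at h4
    unfold embedWord at h4
    obtain ⟨q, -, hq⟩ := List.mem_map.1 h4
    rw [ha, ← hq] at h
    cases h

theorem qside {ι β : Type u} [Finite ι] (k n : ℕ) (hk : 1 ≤ k) (hn : 2 ≤ n) (e : Fin k → ι)
    (he : Function.Injective e) (B : Fin k → List (β × Bool)) (hB : ∀ i, B i ≠ [])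
    (hBred : ∀ i, WordReduced (B i)) (p : ℕ) [Fact p.Prime] (hp : p ∣ n) :
    ∃ (Q : Type u) (_ : Group Q) (γ : ι ⊕ β → Q),
      Function.Injective (FreeGroup.lift (γ ∘ Sum.inl)) ∧ HowsonGroup Q ∧
      (∀ V : Subgroup Q, V.FG → Group.IsFinitelyPresented V) ∧
      (∀ V : Subgroup Q, V.FG → Module.finrank (ZMod p)
        (HomK p ↥(V ⊓ (FreeGroup.lift (γ ∘ Sum.inl)).range)) ≤ Module.finrank (ZMod p) (HomK p V)) ∧
      (FreeGroup.lift γ ((List.finRange k).map fun i => FreeGroup.of (Sum.inl (e i)) *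
        FreeGroup.mk (embedWord Sum.inr (B i))).prod) ^ n = 1 ∧
      (∀ (K : Type u) [Group K] (f : ι ⊕ β → K),
        (FreeGroup.lift f ((List.finRange k).map fun i => FreeGroup.of (Sum.inl (e i)) *
        FreeGroup.mk (embedWord Sum.inr (B i))).prod) ^ n = 1 → ∃ h : Q →* K, ∀ s, h (γ s) = f s) := by
  let i0 : Fin k := ⟨0, hk⟩
  let t0 : ι ⊕ β := Sum.inl (e i0)
  let L := List.finRange k
  have hL : L = i0 :: L.drop 1 := by
    have := List.drop_eq_getElem_cons (l := L) (i := 0) (by simp [L]; omega)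
    simpa [L] using this
  let rest : List ((ι ⊕ β) × Bool) :=
    embedWord Sum.inr (B i0) ++ ((L.drop 1).map (blk e B)).flatten
  have hfull : (L.map (blk e B)).flatten = (t0, true) :: rest := by
    rw [hL]
    rfl
  have hrestred : FreeGroup.IsReduced rest := by
    have := blk_flatten_isReduced e B hB hBred L
    rw [hfull] at this
    exact List.IsChain.right_of_append (l₁ := [(t0, true)]) this
  have hrest0 : ∀ l ∈ rest, l.1 ≠ t0 := by
    intro l hl
    rcases List.mem_append.1 hl with h | h
    · unfold embedWord at h
      obtain ⟨q, -, rfl⟩ := List.mem_map.1 h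
      exact Sum.inr_ne_inl
    · obtain ⟨w, hw, hlw⟩ := List.mem_flatten.1 h
      obtain ⟨i, hi, rfl⟩ := List.mem_map.1 hw
      have hnd : L.Nodup := List.nodup_finRange k
      rw [hL] at hnd
      have hne : i ≠ i0 := by
        rintro rfl
        exact (List.nodup_cons.1 hnd).1 hi
      unfold blk at hlw
      rcases List.mem_cons.1 hlw with rfl | h2
      · intro h3
        exact hne (he (Sum.inl_injective h3))
      · unfold embedWord at h2
        obtain ⟨q, -, rfl⟩ := List.mem_map.1 h2
        exact Sum.inr_ne_inl
  obtain ⟨uu, huu⟩ := mk_mem_range_val t0 rest hrest0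
  let r : ℕ → FreeGroup (ι ⊕ β) := fun i => FreeGroup.mk ((L.drop i).map (blk e B)).flatten
  have hr0 : r 0 = orW t0 uu := by
    simp only [r, List.drop_zero]
    rw [hfull, orW, huu]
    exact (FreeGroup.mul_mk (L₁ := [(t0, true)])).symm
  have hmkblk : ∀ i, FreeGroup.mk (blk e B i) = FreeGroup.of (Sum.inl (e i)) *
      FreeGroup.mk (embedWord Sum.inr (B i)) := by
    intro i
    exact (FreeGroup.mul_mk (L₁ := [(Sum.inl (e i), true)])).symm
  have hr0' : (L.map fun i => FreeGroup.of (Sum.inl (e i)) *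
      FreeGroup.mk (embedWord Sum.inr (B i))).prod = r 0 := by
    simp only [r, List.drop_zero]
    rw [mk_flatten_prod]
    simp only [hmkblk]
  have hrk : r k = 1 := by
    simp only [r]
    rw [List.drop_eq_nil_of_le (by simp [L])]
    simp [FreeGroup.one_eq_mk]
  have hr : ∀ i : Fin k, r i = FreeGroup.of (Sum.inl (e i)) *
      FreeGroup.mk (embedWord Sum.inr (B i)) * r (i + 1) := by
    intro i
    simp only [r]
    rw [List.drop_eq_getElem_cons (by simp [L]), List.map_cons, List.flatten_cons, mk_append, hmkblk]
    simp [L]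
  have : NeZero n := ⟨by omega⟩
  let γ : ι ⊕ β → orQ t0 n uu := PresentedGroup.of
  have hlift : FreeGroup.lift γ = PresentedGroup.mk _ := by
    apply FreeGroup.ext_hom
    intro s
    rw [FreeGroup.lift_apply_of]
    rfl
  have hone : FreeGroup.lift γ (r 0 ^ n) = 1 := by
    rw [hlift, hr0]
    exact PresentedGroup.one_of_mem (Set.mem_singleton _)
  refine ⟨orQ t0 n uu, inferInstance, γ, ?_, or_howson t0 n uu, or_fp t0 n uu, ?_, ?_, ?_⟩
  · refine or_free_inj' t0 n uu hn Sum.inl Sum.inl_injective (e i0) rfl ?_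
    rw [huu]
    have hne : embedWord (Sum.inr : β → ι ⊕ β) (B i0) ≠ [] := by
      unfold embedWord
      simpa using hB i0
    have hm := List.head_mem hne
    have hm2 := hm
    unfold embedWord at hm2
    obtain ⟨q, -, hq⟩ := List.mem_map.1 hm2
    apply mk_not_mem_range_inl rest hrestred q.1 q.2
    rw [hq]
    exact List.mem_append_left _ hm
  · intro V hV
    have hE : (V ⊓ (FreeGroup.lift (γ ∘ Sum.inl)).range).FG := by
      apply or_howson t0 n uu V _ hV
      rw [← Group.fg_iff_subgroup_fg]
      infer_instance
    refine claim_main γ ?_ k n hk (by omega) hp r ?_ hone e he (fun i => embedWord Sum.inr (B i))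
      ?_ ?_ ?_ hrk hr V hV hE
    · rw [hlift]
      exact PresentedGroup.mk_surjective _
    · rw [hlift, hr0]
      exact (QuotientGroup.ker_mk' _).le
    · intro i
      unfold embedWord
      simpa using hB i
    · intro i l hl
      unfold embedWord at hl
      obtain ⟨q, -, rfl⟩ := List.mem_map.1 hl
      exact ⟨_, rfl⟩
    · intro i a l1 l2 w h h2
      have h3 := embed_isReduced (ι := ι) _ (hBred i)
      rw [h] at h3
      have h4 : FreeGroup.IsReduced (l1 :: l2 :: w) := List.IsChain.right_of_append (l₁ := a) h3
      have h5 := (FreeGroup.isReduced_cons_cons.1 h4).1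
      rw [h2] at h5
      have := h5 rfl
      simp [linv] at this
  · change FreeGroup.lift γ (L.map _).prod ^ n = 1
    rw [hr0', ← map_pow, hone]
  · intro K _ f hf
    change FreeGroup.lift f (L.map _).prod ^ n = 1 at hf
    rw [hr0', hr0] at hf
    refine ⟨PresentedGroup.toGroup (f := f) ?_, fun s => PresentedGroup.toGroup.of _⟩
    intro z hz
    rw [Set.mem_singleton_iff.1 hz, map_pow, hf]




theorem cocycle_fin {S : Type*} {G D : Type u} [Group G] [MulAction G D] (π : FreeGroup S →* G)
    (w : FreeGroup S) (d : D) :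
    ∃ F : Finset (S × D), ∀ (Γ : Type u) [Group Γ] (c : G → D → Γ),
      (∀ g h d, c (g * h) d = c g (h • d) * c h d) →
      c (π w) d ∈ Subgroup.closure ((fun x : S × D => c (π (FreeGroup.of x.1)) x.2) '' (F : Set (S × D))) := by
  classical
  have hc1 : ∀ (Γ : Type u) [Group Γ] (c : G → D → Γ),
      (∀ g h d, c (g * h) d = c g (h • d) * c h d) → ∀ d, c 1 d = 1 := by
    intro Γ _ c hc d
    have := hc 1 1 d
    rw [one_smul, one_mul] at this
    exact left_eq_mul.1 this
  induction w using FreeGroup.induction_on generalizing d with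
  | C1 =>
    refine ⟨∅, ?_⟩
    intro Γ _ c hc
    rw [map_one, hc1 Γ c hc]
    exact one_mem _
  | of s =>
    refine ⟨{(s, d)}, ?_⟩
    intro Γ _ c hc
    apply Subgroup.subset_closure
    exact ⟨(s, d), by simp, rfl⟩
  | inv_of s _ =>
    refine ⟨{(s, (π (FreeGroup.of s))⁻¹ • d)}, ?_⟩
    intro Γ _ c hc
    have h1 := hc (π (FreeGroup.of s)) (π (FreeGroup.of s))⁻¹ d
    rw [mul_inv_cancel, hc1 Γ c hc] at h1
    rw [map_inv, eq_inv_of_mul_eq_one_right h1.symm]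
    apply inv_mem
    apply Subgroup.subset_closure
    exact ⟨_, Finset.mem_coe.2 (Finset.mem_singleton_self _), rfl⟩
  | mul x y hx hy =>
    obtain ⟨F2, h2⟩ := hy d
    obtain ⟨F1, h1⟩ := hx (π y • d)
    refine ⟨F1 ∪ F2, ?_⟩
    intro Γ _ c hc
    rw [map_mul, hc]
    refine mul_mem (Subgroup.closure_mono ?_ (h1 Γ c hc)) (Subgroup.closure_mono ?_ (h2 Γ c hc))
    · apply Set.image_mono
      simp
    · apply Set.image_mono
      simp

theorem fp_map_of_injective {G H : Type*} [Group G] [Group H] (f : G →* H)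
    (hf : Function.Injective f) (V : Subgroup H) (hV : V ≤ f.range)
    (h : Group.IsFinitelyPresented (V.comap f)) : Group.IsFinitelyPresented V := by
  have e : (V.comap f).map f = V := Subgroup.map_comap_eq_self hV
  let q : V.comap f ≃* (V.comap f).map f := (V.comap f).equivMapOfInjective f hf
  rw [← e]
  exact fp_of_retract q.toMonoidHom q.symm.toMonoidHom (fun h => q.apply_symm_apply h)

theorem mk_embed {S S' : Type*} (f : S → S') (w : List (S × Bool)) :
    FreeGroup.mk (embedWord f w) = FreeGroup.map f (FreeGroup.mk w) := by
  rw [FreeGroup.map.mk]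
  rfl

theorem map_list_prod_congr {κ M N : Type*} [Monoid M] [Monoid N] (φ : M →* N) (L : List κ)
    (f : κ → M) (g : κ → N) (h : ∀ i, φ (f i) = g i) : φ (L.map f).prod = (L.map g).prod := by
  rw [map_list_prod, List.map_map]
  congr 2
  funext i
  exact h i

theorem main_fp {α β : Type u} (k n : ℕ) (hk : 1 ≤ k) (hn : 2 ≤ n)
    (Ai : Fin k → List (α × Bool)) (Bi : Fin k → List (β × Bool))
    (hBne : ∀ i, Bi i ≠ []) (hBred : ∀ i, WordReduced (Bi i))
    (hfree : Function.Injective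
      (FreeGroup.lift (fun i : Fin k => FreeGroup.mk (Ai i)) :
        FreeGroup (Fin k) →* FreeGroup α))
    (H : Subgroup (PresentedGroup
      ({FreeGroup.mk (abWord k Ai Bi) ^ n} : Set (FreeGroup (α ⊕ β))))) (hH : H.FG) :
    Group.IsFinitelyPresented H := by
  classical
  let rels : Set (FreeGroup (α ⊕ β)) := {FreeGroup.mk (abWord k Ai Bi) ^ n}
  let G := PresentedGroup rels
  let D := G ⧸ H
  let π : FreeGroup (α ⊕ β) →* G := PresentedGroup.mk rels
  have hπ : Function.Surjective π := PresentedGroup.mk_surjective rels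
  have hrel : π (FreeGroup.mk (abWord k Ai Bi)) ^ n = 1 := by
    rw [← map_pow]
    exact PresentedGroup.one_of_mem (Set.mem_singleton _)
  let d0 : D := ((1 : G) : G ⧸ H)
  obtain ⟨S, hS⟩ := hH
  have hF0 : ∀ g : G, ∃ F : Finset ((α ⊕ β) × D), ∀ (Γ : Type u) [Group Γ] (c : G → D → Γ),
      (∀ g h d, c (g * h) d = c g (h • d) * c h d) →
      c g d0 ∈ Subgroup.closure ((fun x : (α ⊕ β) × D => c (π (FreeGroup.of x.1)) x.2) ''
        (F : Set ((α ⊕ β) × D))) := by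
    intro g
    obtain ⟨w, rfl⟩ := hπ g
    exact cocycle_fin π w d0
  choose F0 hF0 using hF0
  let F : Finset ((α ⊕ β) × D) := S.biUnion F0
  let Js : Finset D := insert d0 (F.image Prod.snd ∪ F.image fun x => π (FreeGroup.of x.1) • x.2)
  let J : Type u := ↥Js
  let κ : Type u := ULift.{u} (Fin k)
  have hn1 : n ≠ 1 := by omega
  have hpf : Fact n.minFac.Prime := ⟨Nat.minFac_prime hn1⟩
  have hpn : n.minFac ∣ n := Nat.minFac_dvd n
  generalize n.minFac = p at hpf hpn
  let e : Fin k → κ ⊕ J := fun i => Sum.inl (ULift.up i)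
  have he : Function.Injective e := fun a b h => congrArg ULift.down (Sum.inl_injective h)
  obtain ⟨Q, hQ, γ, hb, howQ, fpQ, claimQ, relQ, univQ⟩ :=
    qside (ι := κ ⊕ J) (β := β) k n hk hn e he Bi hBne hBred p hpn
  let φ : FreeGroup κ →* FreeGroup α := FreeGroup.lift fun i => FreeGroup.mk (Ai i.down)
  have hφ : Function.Injective φ := by
    have h1 : φ = (FreeGroup.lift (fun i : Fin k => FreeGroup.mk (Ai i))).comp
        (FreeGroup.freeGroupCongr Equiv.ulift).toMonoidHom := by
      apply FreeGroup.ext_hom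
      intro i
      simp [φ]
    rw [h1]
    exact hfree.comp (FreeGroup.freeGroupCongr Equiv.ulift).injective
  let a : FreeGroup (κ ⊕ J) →* FreeGroup (α ⊕ J) :=
    FreeGroup.lift (Sum.elim (fun i => FreeGroup.map Sum.inl (φ (FreeGroup.of i)))
      (fun j => FreeGroup.of (Sum.inr j)))
  have ha : Function.Injective a := free_extend_inj φ hφ
  let b : FreeGroup (κ ⊕ J) →* Q := FreeGroup.lift (γ ∘ Sum.inl)
  obtain ⟨Γ, hΓ, i, j, hi, hj, hij, huniv, hfp⟩ := exists_amalgam a b ha hb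
  have hA : ∀ s : Fin k, i (FreeGroup.map Sum.inl (FreeGroup.mk (Ai s))) = j (γ (Sum.inl (e s))) := by
    intro s
    have := hij (FreeGroup.of (e s))
    simpa [a, b, e, φ] using this
  -- the inclusion of G
  let f0 : α ⊕ β → Γ := Sum.elim (fun x => i (FreeGroup.of (Sum.inl x))) (fun x => j (γ (Sum.inr x)))
  have hf0l : ∀ g, FreeGroup.lift f0 (FreeGroup.map Sum.inl g) = i (FreeGroup.map Sum.inl g) := by
    intro g
    have : (FreeGroup.lift f0).comp (FreeGroup.map Sum.inl) = i.comp (FreeGroup.map Sum.inl) := by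
      apply FreeGroup.ext_hom
      intro s
      simp [f0]
    exact DFunLike.congr_fun this g
  have hf0r : ∀ g, FreeGroup.lift f0 (FreeGroup.map Sum.inr g) =
      j (FreeGroup.lift γ (FreeGroup.map Sum.inr g)) := by
    intro g
    have : (FreeGroup.lift f0).comp (FreeGroup.map Sum.inr) =
        (j.comp (FreeGroup.lift γ)).comp (FreeGroup.map Sum.inr) := by
      apply FreeGroup.ext_hom
      intro s
      simp [f0]
    exact DFunLike.congr_fun this g
  have habW : FreeGroup.mk (abWord k Ai Bi) = ((List.finRange k).map fun s =>
      FreeGroup.map Sum.inl (FreeGroup.mk (Ai s)) * FreeGroup.map Sum.inr (FreeGroup.mk (Bi s))).prod := by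
    unfold abWord
    rw [mk_flatten_prod]
    simp only [mk_append, mk_embed]
  have hf0W : FreeGroup.lift f0 (FreeGroup.mk (abWord k Ai Bi)) ^ n = 1 := by
    have h1 : FreeGroup.lift f0 (FreeGroup.mk (abWord k Ai Bi)) =
        j (FreeGroup.lift γ ((List.finRange k).map fun i => FreeGroup.of (Sum.inl (e i)) *
          FreeGroup.mk (embedWord Sum.inr (Bi i))).prod) := by
      rw [habW, map_list_prod_congr (FreeGroup.lift f0) _ _ _ (fun s => rfl), ← MonoidHom.comp_apply,
        map_list_prod_congr (j.comp (FreeGroup.lift γ)) _ _ _ (fun s => rfl)]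
      congr 2
      funext s
      rw [map_mul, hf0l, hf0r, hA, mk_embed]
      simp
    rw [h1, ← map_pow, relQ, map_one]
  let jG : G →* Γ := PresentedGroup.toGroup (f := f0) (by
    intro z hz
    rw [Set.mem_singleton_iff.1 hz, map_pow, hf0W])
  have hjG : ∀ s, jG (π (FreeGroup.of s)) = f0 s := fun s => PresentedGroup.toGroup.of _
  -- the retraction
  let t : D → G := fun d => if d = d0 then 1 else d.out
  have ht0 : t d0 = 1 := by simp [t]
  have ht : ∀ d, ((t d : G) : G ⧸ H) = d := by
    intro d
    simp only [t]
    split_ifs with h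
    · exact h.symm
    · exact QuotientGroup.out_eq' d
  let fX : FreeGroup (α ⊕ J) →* G :=
    FreeGroup.lift (Sum.elim (fun x => π (FreeGroup.of (Sum.inl x))) (fun d => t d.1))
  have hfX : ∀ g, fX (FreeGroup.map Sum.inl g) = π (FreeGroup.map Sum.inl g) := by
    intro g
    have : fX.comp (FreeGroup.map Sum.inl) = π.comp (FreeGroup.map Sum.inl) := by
      apply FreeGroup.ext_hom
      intro s
      simp [fX]
    exact DFunLike.congr_fun this g
  let fQ : (κ ⊕ J) ⊕ β → G := Sum.elim (Sum.elim
    (fun s => π (FreeGroup.map Sum.inl (FreeGroup.mk (Ai s.down)))) (fun d => t d.1))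
    (fun x => π (FreeGroup.of (Sum.inr x)))
  have hfQr : ∀ g, FreeGroup.lift fQ (FreeGroup.map Sum.inr g) = π (FreeGroup.map Sum.inr g) := by
    intro g
    have : (FreeGroup.lift fQ).comp (FreeGroup.map Sum.inr) = π.comp (FreeGroup.map Sum.inr) := by
      apply FreeGroup.ext_hom
      intro s
      simp [fQ]
    exact DFunLike.congr_fun this g
  obtain ⟨gQ, hgQ⟩ := univQ G fQ (by
    have h1 : FreeGroup.lift fQ ((List.finRange k).map fun i => FreeGroup.of (Sum.inl (e i)) *
          FreeGroup.mk (embedWord Sum.inr (Bi i))).prod = π (FreeGroup.mk (abWord k Ai Bi)) := by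
      rw [habW, map_list_prod_congr (FreeGroup.lift fQ) _ _ _ (fun s => rfl),
        map_list_prod_congr π _ _ _ (fun s => rfl)]
      congr 2
      funext s
      rw [map_mul, mk_embed, hfQr, map_mul, FreeGroup.lift_apply_of]
      rfl
    rw [h1, hrel])
  obtain ⟨ρ, hρi, hρj⟩ := huniv G fX gQ (by
    intro x
    have : fX.comp a = gQ.comp b := by
      apply FreeGroup.ext_hom
      rintro (s | s)
      · simp only [MonoidHom.comp_apply, a, b, FreeGroup.lift_apply_of, Sum.elim_inl,
          Function.comp_apply, hgQ, hfX]
        simp [fQ, φ]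
      · simp only [MonoidHom.comp_apply, a, b, FreeGroup.lift_apply_of, Sum.elim_inr,
          Function.comp_apply, hgQ]
        simp [fQ, fX]
    exact DFunLike.congr_fun this x)
  have hρG : ∀ g, ρ (jG g) = g := by
    have : ρ.comp jG = MonoidHom.id G := by
      apply PresentedGroup.ext
      rintro (s | s)
      · refine (congrArg ρ (hjG (Sum.inl s))).trans ((hρi _).trans ?_)
        simp only [fX, FreeGroup.lift_apply_of, Sum.elim_inl]
        rfl
      · refine (congrArg ρ (hjG (Sum.inr s))).trans ((hρj _).trans ?_)
        rw [hgQ]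
        rfl
    exact fun g => DFunLike.congr_fun this g
  let ε : D → Γ := fun d => if h : d ∈ Js then i (FreeGroup.of (Sum.inr (⟨d, h⟩ : J))) else 1
  have hρε : ∀ d ∈ Js, ρ (ε d) = t d := by
    intro d hd
    simp only [ε, dif_pos hd, hρi, fX, FreeGroup.lift_apply_of, Sum.elim_inr]
  let P : Subgroup Γ := (i.comp a).range
  have hPj : P = (j.comp b).range := by
    have : i.comp a = j.comp b := MonoidHom.ext hij
    simp only [P, this]
  have hPX : P ≤ i.range := by
    rintro _ ⟨x, rfl⟩
    exact ⟨a x, rfl⟩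
  have hPQ : P ≤ j.range := by
    rw [hPj]
    rintro _ ⟨x, rfl⟩
    exact ⟨b x, rfl⟩
  have hεP : ∀ d, ε d ∈ P := by
    intro d
    simp only [ε]
    split_ifs with h
    · refine ⟨FreeGroup.of (Sum.inr ⟨d, h⟩), ?_⟩
      simp [a]
    · exact one_mem _
  let c : G → D → Γ := fun g d => (ε (g • d))⁻¹ * jG g * ε d
  have hc : ∀ g h d, c (g * h) d = c g (h • d) * c h d := by
    intro g h d
    simp only [c, map_mul, mul_smul]
    group
  let cg : (α ⊕ β) × D → Γ := fun x => c (π (FreeGroup.of x.1)) x.2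
  let VA : Subgroup Γ := Subgroup.closure (cg '' (F.filter fun x => x.1.isLeft : Finset _))
  let VQ : Subgroup Γ := Subgroup.closure (cg '' (F.filter fun x => ¬ x.1.isLeft : Finset _))
  have hVA : VA ≤ i.range := by
    rw [Subgroup.closure_le]
    rintro _ ⟨⟨s, d⟩, hx, rfl⟩
    have hs := (Finset.mem_filter.1 (Finset.mem_coe.1 hx)).2
    cases s with
    | inr s => simp at hs
    | inl s =>
      refine mul_mem (mul_mem (inv_mem (hPX (hεP _))) ?_) (hPX (hεP _))
      rw [hjG]
      exact ⟨_, rfl⟩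
  have hVQ : VQ ≤ j.range := by
    rw [Subgroup.closure_le]
    rintro _ ⟨⟨s, d⟩, hx, rfl⟩
    have hs := (Finset.mem_filter.1 (Finset.mem_coe.1 hx)).2
    cases s with
    | inl s => simp at hs
    | inr s =>
      refine mul_mem (mul_mem (inv_mem (hPQ (hεP _))) ?_) (hPQ (hεP _))
      rw [hjG]
      exact ⟨_, rfl⟩
  have fVA : VA.FG := by
    rw [Subgroup.fg_iff]
    exact ⟨_, rfl, (Finset.finite_toSet _).image _⟩
  have fVQ : VQ.FG := by
    rw [Subgroup.fg_iff]
    exact ⟨_, rfl, (Finset.finite_toSet _).image _⟩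
  have hsup : Subgroup.closure (cg '' (F : Set _)) ≤ VA ⊔ VQ := by
    rw [Subgroup.closure_le]
    rintro _ ⟨x, hx, rfl⟩
    by_cases h : x.1.isLeft
    · exact (le_sup_left : VA ≤ VA ⊔ VQ) (Subgroup.subset_closure
        ⟨x, Finset.mem_coe.2 (Finset.mem_filter.2 ⟨hx, h⟩), rfl⟩)
    · exact (le_sup_right : VQ ≤ VA ⊔ VQ) (Subgroup.subset_closure
        ⟨x, Finset.mem_coe.2 (Finset.mem_filter.2 ⟨hx, h⟩), rfl⟩)
  have hPfg : P.FG := by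
    rw [← Group.fg_iff_subgroup_fg]
    infer_instance
  have howX' : ∀ V ≤ i.range, V.FG → (V ⊓ P).FG := fun V hV hVf =>
    HowsonGroup.inf_of_le_range i (howson_freeGroup _) hi hV hPX hVf hPfg
  have hfreeX : IsFreeGroup i.range := IsFreeGroup.ofMulEquiv (MonoidHom.ofInjective hi)
  have hfpHat : Group.IsFinitelyPresented ↥(VA ⊔ VQ) := by
    obtain ⟨VA', VQ', h1, h2, h3, h4, h5, h6⟩ := process (p := p) i.range j.range P hPX hPQ howX'
      (fun V hV hVf => HowsonGroup.inf_of_le_range j howQ hj hV hPQ hVf hPfg)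
      (by
        intro V hV hVf
        have e1 : (V.comap j).map j = V := Subgroup.map_comap_eq_self hV
        have e2 : (V.comap j ⊓ b.range).map j = V ⊓ P := by
          rw [Subgroup.map_inf _ _ _ hj, e1, hPj, MonoidHom.map_range]
        have hf1 : (V.comap j).FG := subgroup_fg_of_map j hj (by rw [e1]; exact hVf)
        have h1 := claimQ (V.comap j) hf1
        rw [HomK.finrank_congr ((V.comap j).equivMapOfInjective j hj),
          HomK.finrank_congr ((V.comap j ⊓ b.range).equivMapOfInjective j hj)] at h1
        rw [e1, e2] at h1
        exact h1) VA VQ hVA hVQ fVA fVQ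
    rw [← h6]
    apply hfp VA' VQ' h1 h2 h5
    · apply fp_map_of_injective i hi VA' h1
      have : Group.FG (VA'.comap i) := by
        rw [Group.fg_iff_subgroup_fg]
        apply subgroup_fg_of_map i hi
        rw [Subgroup.map_comap_eq_self h1]
        exact h3
      exact fp_of_isFreeGroup_fg
    · apply fp_map_of_injective j hj VQ' h2
      apply fpQ
      apply subgroup_fg_of_map j hj
      rw [Subgroup.map_comap_eq_self h2]
      exact h4
    · exact howX' VA' h1 h3
  -- H is a retract
  have hle : VA ⊔ VQ ≤ H.comap ρ := by
    have key : ∀ x ∈ F, cg x ∈ H.comap ρ := by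
      intro x hx
      have hx1 : x.2 ∈ Js := by
        simp only [Js, Finset.mem_insert, Finset.mem_union, Finset.mem_image]
        exact Or.inr (Or.inl ⟨x, hx, rfl⟩)
      have hx2 : π (FreeGroup.of x.1) • x.2 ∈ Js := by
        simp only [Js, Finset.mem_insert, Finset.mem_union, Finset.mem_image]
        exact Or.inr (Or.inr ⟨x, hx, rfl⟩)
      rw [Subgroup.mem_comap]
      simp only [cg, c, map_mul, map_inv, hρG]
      rw [hρε _ hx1, hρε _ hx2, mul_assoc, ← QuotientGroup.eq, ht]
      change _ = π (FreeGroup.of x.1) • ((t x.2 : G) : G ⧸ H)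
      rw [ht]
    apply sup_le
    · rw [Subgroup.closure_le]
      rintro _ ⟨x, hx, rfl⟩
      exact key x (Finset.mem_filter.1 (Finset.mem_coe.1 hx)).1
    · rw [Subgroup.closure_le]
      rintro _ ⟨x, hx, rfl⟩
      exact key x (Finset.mem_filter.1 (Finset.mem_coe.1 hx)).1
  let sG : G →* Γ := (MulAut.conj (ε d0)⁻¹).toMonoidHom.comp jG
  have hsG : ∀ g, sG g = (ε d0)⁻¹ * jG g * ε d0 := by
    intro g
    simp [sG]
  have hHs : H ≤ (VA ⊔ VQ).comap sG := by
    rw [← hS, Subgroup.closure_le]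
    intro h hh
    have hhH : h ∈ H := by
      rw [← hS]
      exact Subgroup.subset_closure hh
    have hd : h • d0 = d0 := (quot_smul_one_eq_iff H h).2 hhH
    have h1 : sG h = c h d0 := by
      rw [hsG]
      simp only [c, hd]
    change sG h ∈ VA ⊔ VQ
    rw [h1]
    apply hsup
    refine Subgroup.closure_mono ?_ (hF0 h Γ c hc)
    apply Set.image_mono
    exact Finset.coe_subset.2 (Finset.subset_biUnion_of_mem F0 hh)
  let r : ↥(VA ⊔ VQ) →* H := (ρ.comp (VA ⊔ VQ).subtype).codRestrict H fun x => hle x.2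
  let s : H →* ↥(VA ⊔ VQ) := (sG.comp H.subtype).codRestrict (VA ⊔ VQ) fun x => hHs x.2
  refine fp_of_retract r s ?_
  intro h
  apply Subtype.ext
  change ρ (sG h.1) = h.1
  rw [hsG, map_mul, map_mul, map_inv, hρG, hρε d0 (by simp [Js]), ht0]
  simp



universe v w

theorem wordReduced_embed {S : Type*} {S' : Type*} (f : S → S') (hf : Function.Injective f)
    (L : List (S × Bool)) (h : WordReduced L) : WordReduced (embedWord f L) := by
  unfold WordReduced embedWord at *
  refine List.isChain_map_of_isChain _ ?_ h
  rintro a b hab ⟨h1, h2⟩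
  exact hab ⟨hf h1, h2⟩

theorem main_fp_univ {α : Type v} {β : Type w} (k n : ℕ) (hk : 1 ≤ k) (hn : 2 ≤ n)
    (Ai : Fin k → List (α × Bool)) (Bi : Fin k → List (β × Bool))
    (hBne : ∀ i, Bi i ≠ []) (hBred : ∀ i, WordReduced (Bi i))
    (hfree : Function.Injective
      (FreeGroup.lift (fun i : Fin k => FreeGroup.mk (Ai i)) :
        FreeGroup (Fin k) →* FreeGroup α))
    (H : Subgroup (PresentedGroup
      ({FreeGroup.mk (abWord k Ai Bi) ^ n} : Set (FreeGroup (α ⊕ β))))) (hH : H.FG) :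
    Group.IsFinitelyPresented H := by
  let eA : α ≃ ULift.{w} α := Equiv.ulift.symm
  let eB : β ≃ ULift.{v} β := Equiv.ulift.symm
  let Ai' : Fin k → List (ULift.{w} α × Bool) := fun i => embedWord eA (Ai i)
  let Bi' : Fin k → List (ULift.{v} β × Bool) := fun i => embedWord eB (Bi i)
  have hfree' : Function.Injective
      (FreeGroup.lift (fun i : Fin k => FreeGroup.mk (Ai' i)) :
        FreeGroup (Fin k) →* FreeGroup (ULift.{w} α)) := by
    have h1 : (FreeGroup.lift (fun i : Fin k => FreeGroup.mk (Ai' i)) :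
        FreeGroup (Fin k) →* FreeGroup (ULift.{w} α)) =
        (FreeGroup.map eA).comp (FreeGroup.lift (fun i : Fin k => FreeGroup.mk (Ai i))) := by
      ext i
      rw [MonoidHom.comp_apply, FreeGroup.lift_apply_of, FreeGroup.lift_apply_of, ← mk_embed]
    rw [h1, MonoidHom.coe_comp]
    exact Function.Injective.comp (FreeGroup.freeGroupCongr eA).injective hfree
  let e : α ⊕ β ≃ ULift.{w} α ⊕ ULift.{v} β := Equiv.sumCongr eA eB
  have hw : embedWord e (abWord k Ai Bi) = abWord k Ai' Bi' := by
    simp only [embedWord, abWord, List.map_flatten, List.map_map, Ai', Bi']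
    congr 1
    apply List.map_congr_left
    intro i _
    simp [e, embedWord, Function.comp_def]
  have himg : FreeGroup.freeGroupCongr e '' {FreeGroup.mk (abWord k Ai Bi) ^ n} =
      {FreeGroup.mk (abWord k Ai' Bi') ^ n} := by
    rw [Set.image_singleton, map_pow, ← hw, mk_embed]
    rfl
  have key : ∀ R, FreeGroup.freeGroupCongr e '' {FreeGroup.mk (abWord k Ai Bi) ^ n} = R →
      Nonempty (PresentedGroup ({FreeGroup.mk (abWord k Ai Bi) ^ n} : Set (FreeGroup (α ⊕ β))) ≃*
        PresentedGroup R) := by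
    rintro R rfl
    exact ⟨PresentedGroup.equivPresentedGroup _ e⟩
  obtain ⟨E⟩ := key _ himg
  have hfp := main_fp k n hk hn Ai' Bi'
    (fun i => by simpa [Bi', embedWord] using hBne i)
    (fun i => wordReduced_embed _ eB.injective _ (hBred i)) hfree' (H.map E.toMonoidHom)
    (subgroup_fg_map _ hH)
  let q : H ≃* H.map E.toMonoidHom := H.equivMapOfInjective E.toMonoidHom E.injective
  exact fp_of_retract q.symm.toMonoidHom q.toMonoidHom (fun h => q.symm_apply_apply h)

theorem finitelyPresentedGroup_of_isFinitelyPresented {G : Type*} [Group G]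
    (h : Group.IsFinitelyPresented G) : FinitelyPresentedGroup G := by
  obtain ⟨m, s, hs, ⟨E⟩⟩ := h.exists_mulEquiv_presentedGroup
  refine ⟨Fin m, inferInstance, hs.toFinset, ?_⟩
  rw [hs.coe_toFinset]
  exact ⟨E.symm⟩


/-- **Corollary `cor:AB-case`.**  Let `G = ⟨A ∪ B ∣ W^n⟩` be a one-relator group with
torsion (`n ≥ 2`), where `W = A₁ B₁ A₂ B₂ ⋯ A_k B_k` with the `Aᵢ` nonempty reduced
words over `A` and the `Bᵢ` nonempty reduced words over the disjoint alphabet `B`.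
If the `Aᵢ` freely generate a subgroup of the free group on `A`, and for each `i`
the perimeter of `Aᵢ` — the sum, over the distinct letters `a` occurring in `Aᵢ`, of
the number of occurrences of `a^{±1}` in `W` (equivalently, in `A₁, …, A_k`, since no
letter of `A` occurs in the `Bⱼ`) — is at most `|A₁| + ⋯ + |A_k|`, then
`G` is coherent. -/
theorem ab_one_relator_coherent {α β : Type*} [DecidableEq α]
    (k n : ℕ) (hk : 1 ≤ k) (hn : 2 ≤ n)
    (Ai : Fin k → List (α × Bool)) (Bi : Fin k → List (β × Bool))
    (hAne : ∀ i, Ai i ≠ []) (hAred : ∀ i, WordReduced (Ai i))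
    (hBne : ∀ i, Bi i ≠ []) (hBred : ∀ i, WordReduced (Bi i))
    (hfree : Function.Injective
      (FreeGroup.lift (fun i : Fin k => FreeGroup.mk (Ai i)) :
        FreeGroup (Fin k) →* FreeGroup α))
    (hperimeter : ∀ i : Fin k,
      ((((Ai i).map Prod.fst).dedup).map fun a =>
          (((List.finRange k).map fun j =>
            (Ai j).countP fun q => decide (q.1 = a)).sum)).sum ≤
        (((List.finRange k).map fun j => (Ai j).length).sum)) :
    CoherentGroup (PresentedGroup
      ({FreeGroup.mk (abWord k Ai Bi) ^ n} : Set (FreeGroup (α ⊕ β)))) := by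
  intro H hH
  exact finitelyPresentedGroup_of_isFinitelyPresented
    (main_fp_univ k n hk hn Ai Bi hBne hBred hfree H hH)
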